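/- arXiv:2403.10757 — 13 statements merged into one kernel-verified Lean document; each statement's English description precedes it below -/
import Mathlib

section
/- Let n ≥ 1 be a natural number and let H be a subgroup of the free group F_n = FreeGroup (Fin n) of finite index k = [F_n : H] (k ≠ 0). Then H is a free group of rank k·(n−1)+1; in particular rank(H) − 1 = k·(n−1) (Schreier index formula). -/
/-- The rank of a subgroup: the minimal cardinality of a (finite) generating set. -/
noncomputable def rkSubgroup {G : Type*} [Group G] (H : Subgroup G) : ℕ :=
  sInf {n : ℕ | ∃ S : Finset G, S.card = n ∧ Subgroup.closure (S : Set G) = H}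

/-!
The action groupoid of `G` on `G ⧸ H` is connected, its vertex group at the coset `1` is `H`, and
it is free on the Schreier graph, which has one vertex per coset and one edge per pair of a coset
and a basis element of `G`. In a connected groupoid with a chosen arrow from a root to every other
vertex, a functor to a group is determined by its restriction to the vertex group of the root
together with arbitrary values on the chosen arrows. So when the vertex group is free, the groupoid
is freely generated both by the edges of the graph and by a basis of the vertex group together with
one arrow for each vertex other than the root. Two free generating families yield bases of the same
free group, hence they have the same cardinality.
-/

open CategoryTheory Cardinal

universe u v w

section Groupoid

variable {C : Type u} [Groupoid.{v} C]

/-- The family `x` of arrows freely generates the groupoid `C`: functors from `C` to a group, seen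
as a groupoid with one object, correspond to arbitrary labellings of the family. As in
`IsFreeGroupoid`, only groups in the universe of the arrows are considered as targets. -/
def IsFreeArrowFamily {J : Type*} (x : J → Quiver.Total C) : Prop :=
  ∀ ⦃K : Type v⦄ [Group K] (f : J → K), ∃! F : C ⥤ SingleObj K, ∀ j, F.map (x j).hom = f j

namespace IsFreeArrowFamily

variable {J J' : Type v} {x : J → Quiver.Total C} {x' : J' → Quiver.Total C}

/-- The functor to the free group on the indices of a free family that labels each arrow of the
family by its index; every functor from `C` to a group factors uniquely through it. -/
noncomputable def universalFunctor (hx : IsFreeArrowFamily x) : C ⥤ SingleObj (FreeGroup J) :=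
  (hx FreeGroup.of).choose

theorem universalFunctor_map (hx : IsFreeArrowFamily x) (j : J) :
    hx.universalFunctor.map (x j).hom = FreeGroup.of j :=
  (hx FreeGroup.of).choose_spec.1 j

theorem universalFunctor_comp_map (hx : IsFreeArrowFamily x) {K : Type*} [Group K]
    (φ : FreeGroup J →* K) (j : J) :
    (hx.universalFunctor ⋙ φ.toFunctor).map (x j).hom = φ (FreeGroup.of j) :=
  congrArg φ (hx.universalFunctor_map j)

theorem existsUnique_universalFunctor_comp_eq (hx : IsFreeArrowFamily x) {K : Type v} [Group K]
    (F : C ⥤ SingleObj K) :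
    ∃! φ : FreeGroup J →* K, hx.universalFunctor ⋙ φ.toFunctor = F := by
  refine ⟨FreeGroup.lift fun j => (F.map (x j).hom : K), ?_, fun φ hφ => ?_⟩
  · refine (hx fun j => (F.map (x j).hom : K)).unique (fun j => ?_) fun _ => rfl
    rw [universalFunctor_comp_map, FreeGroup.lift_apply_of]
  · ext j
    rw [← hx.universalFunctor_comp_map, hφ, FreeGroup.lift_apply_of]

/-- A second free family `x'` yields a basis of the free group on the index type of the first one,
namely the images of its arrows under the universal functor. -/
noncomputable def freeGroupBasis (hx : IsFreeArrowFamily x) (hx' : IsFreeArrowFamily x') :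
    FreeGroupBasis J' (FreeGroup J) :=
  .ofUniqueLift J' (fun j => hx.universalFunctor.map (x' j).hom) fun f => by
    obtain ⟨F, hF, hF_unique⟩ := hx' f
    obtain ⟨φ, rfl, hφ_unique⟩ := hx.existsUnique_universalFunctor_comp_eq F
    exact ⟨φ, hF, fun φ' hφ' => hφ_unique φ' (hF_unique _ hφ')⟩

theorem mk_eq_mk (hx : IsFreeArrowFamily x) (hx' : IsFreeArrowFamily x') : #J = #J' :=
  mk_congr (Equiv.ofFreeGroupEquiv (hx.freeGroupBasis hx').repr)

end IsFreeArrowFamily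

/-- The arrow of a free groupoid `C` given by an edge of its generating quiver. -/
def generatingArrow [IsFreeGroupoid C] (e : Quiver.Total (IsFreeGroupoid.Generators C)) :
    Quiver.Total C :=
  ⟨e.left, e.right, IsFreeGroupoid.of e.hom⟩

theorem isFreeArrowFamily_generatingArrow [IsFreeGroupoid C] :
    IsFreeArrowFamily (generatingArrow (C := C)) := fun K _ f => by
  obtain ⟨F, hF, hF_unique⟩ := IsFreeGroupoid.unique_lift (G := C) fun a b e => f ⟨a, b, e⟩
  exact ⟨F, fun e => hF _ _ e.hom, fun F' hF' => hF_unique F' fun a b e => hF' ⟨a, b, e⟩⟩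

theorem exists_hom_from_root_eq_id [IsPreconnected C] (r : C) :
    ∃ p : ∀ a, r ⟶ a, p r = 𝟙 r := by
  classical
  let q (a : C) : r ⟶ a := Classical.arbitrary _
  exact ⟨Function.update q r (𝟙 r), Function.update_self ..⟩

section Star

variable {r : C} (p : ∀ a, r ⟶ a)

/-- The loop at the root `r` obtained from an arrow by joining both of its endpoints to `r` along
the chosen arrows `p`. -/
noncomputable def loopAtRoot {a b : C} (g : a ⟶ b) : End r :=
  p a ≫ g ≫ inv (p b)

theorem loopAtRoot_id (a : C) : loopAtRoot p (𝟙 a) = 1 := by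
  simp [loopAtRoot, End.one_def]

theorem loopAtRoot_comp {a b c : C} (g : a ⟶ b) (h : b ⟶ c) :
    loopAtRoot p (g ≫ h) = loopAtRoot p h * loopAtRoot p g := by
  simp [loopAtRoot, End.mul_def]

variable {p} in
theorem loopAtRoot_end (hp : p r = 𝟙 r) (g : End r) : loopAtRoot p g = g := by
  simp [loopAtRoot, hp]

variable {p} in
theorem loopAtRoot_apply (hp : p r = 𝟙 r) (a : C) : loopAtRoot p (p a) = 1 := by
  simp [loopAtRoot, hp, End.one_def]

variable {K : Type w} [Group K]

/-- The functor to a group `K` that restricts to `ψ` on the vertex group of the root and takes the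
value `t a` on the chosen arrow `p a`, provided that `p r = 𝟙 r` and `t r = 1`. -/
noncomputable def functorOfLoops (ψ : End r →* K) (t : C → K) : C ⥤ SingleObj K where
  obj _ := SingleObj.star K
  map {a b} g := t b * ψ (loopAtRoot p g) * (t a)⁻¹
  map_id a := by
    rw [loopAtRoot_id, map_one, mul_one, mul_inv_cancel, SingleObj.id_as_one]
  map_comp {a b c} g h := by
    rw [loopAtRoot_comp, map_mul, SingleObj.comp_as_mul]
    group

theorem map_eq_mul_map_loopAtRoot_mul_inv (F : C ⥤ SingleObj K) {a b : C} (g : a ⟶ b) :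
    (F.map g : K) = F.map (p b) * F.map (loopAtRoot p g) * (F.map (p a) : K)⁻¹ := by
  rw [eq_mul_inv_iff_mul_eq, ← SingleObj.comp_as_mul, ← SingleObj.comp_as_mul, ← F.map_comp,
    ← F.map_comp]
  simp [loopAtRoot]

theorem functor_ext_of_end_of_hom_from_root {F F' : C ⥤ SingleObj K}
    (h_end : ∀ g : End r, (F.map g : K) = F'.map g)
    (h_hom : ∀ a, (F.map (p a) : K) = F'.map (p a)) : F = F' := by
  refine Functor.hext (fun _ => rfl) fun a b g => heq_of_eq ?_
  rw [map_eq_mul_map_loopAtRoot_mul_inv p F g, h_hom, h_hom, h_end]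
  exact (map_eq_mul_map_loopAtRoot_mul_inv p F' g).symm

variable {p} in
theorem existsUnique_functor_map_end_map_hom (hp : p r = 𝟙 r) (ψ : End r →* K)
    (t : {a // a ≠ r} → K) :
    ∃! F : C ⥤ SingleObj K, (∀ g : End r, F.map g = ψ g) ∧ ∀ a, F.map (p a.1) = t a := by
  classical
  let t' (a : C) : K := if h : a = r then 1 else t ⟨a, h⟩
  have t'_root : t' r = 1 := dif_pos rfl
  have t'_of_ne (a : {a // a ≠ r}) : t' a = t a := dif_neg a.2
  have map_end (g : End r) : ((functorOfLoops p ψ t').map g : K) = ψ g := by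
    simp only [functorOfLoops, loopAtRoot_end hp, t'_root, one_mul, inv_one, mul_one]
  have map_hom (a : {a // a ≠ r}) : ((functorOfLoops p ψ t').map (p a) : K) = t a := by
    simp only [functorOfLoops, loopAtRoot_apply hp, t'_root, t'_of_ne, map_one, inv_one, mul_one]
  refine ⟨functorOfLoops p ψ t', ⟨map_end, map_hom⟩, fun F ⟨hF_end, hF_hom⟩ => ?_⟩
  refine functor_ext_of_end_of_hom_from_root p (fun g => ?_) fun a => ?_
  · rw [hF_end, map_end]
  · obtain rfl | ha := eq_or_ne a r
    · exact (hF_end (p a)).trans (map_end (p a)).symm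
    · rw [hF_hom ⟨a, ha⟩, map_hom ⟨a, ha⟩]

/-- A basis of the vertex group of the root `r`, together with the chosen arrows from `r` to the
other vertices. -/
def loopsAndSpokes {ι : Type*} (b : FreeGroupBasis ι (End r)) :
    ι ⊕ {a // a ≠ r} → Quiver.Total C :=
  Sum.elim (fun i => ⟨r, r, b i⟩) fun a => ⟨r, a, p a⟩

variable {p} in
theorem isFreeArrowFamily_loopsAndSpokes (hp : p r = 𝟙 r) {ι : Type*}
    (b : FreeGroupBasis ι (End r)) : IsFreeArrowFamily (loopsAndSpokes p b) := fun K _ f => by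
  have lift_basis (i : ι) : b.lift (f ∘ .inl) (b i) = f (.inl i) :=
    congrFun (b.lift.symm_apply_apply (f ∘ .inl)) i
  obtain ⟨F, ⟨hF_end, hF_hom⟩, hF_unique⟩ :=
    existsUnique_functor_map_end_map_hom hp (b.lift (f ∘ .inl)) (f ∘ .inr)
  refine ⟨F, ?_, fun F' hF' => hF_unique F' ⟨fun g => ?_, fun a => hF' (.inr a)⟩⟩
  · rintro (i | a)
    · exact (hF_end (b i)).trans (lift_basis i)
    · exact hF_hom a
  · have mapEnd_eq : (F'.mapEnd r : End r →* K) = b.lift (f ∘ .inl) :=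
      b.ext_hom _ _ fun i => (hF' (.inl i)).trans (lift_basis i).symm
    exact DFunLike.congr_fun mapEnd_eq g

end Star

end Groupoid

theorem mk_freeGroupBasis_end_add_mk {C : Type u} [Groupoid.{u} C] [IsPreconnected C]
    [IsFreeGroupoid C] {r : C} {ι : Type u} (b : FreeGroupBasis ι (End r)) :
    #ι + #C = #(Quiver.Total (IsFreeGroupoid.Generators C)) + 1 := by
  obtain ⟨p, hp⟩ := exists_hom_from_root_eq_id r
  have mk_sum_eq : #(ι ⊕ {a // a ≠ r}) = #(Quiver.Total (IsFreeGroupoid.Generators C)) :=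
    (isFreeArrowFamily_loopsAndSpokes hp b).mk_eq_mk isFreeArrowFamily_generatingArrow
  have mk_vertices : #{a // a ≠ r} + 1 = #C := by
    rw [← mk_sum_compl {r}, mk_singleton, add_comm]
    rfl
  rw [← mk_sum_eq, mk_sum, lift_id, lift_id, add_assoc, mk_vertices]

/-- The generating edges of the action groupoid of a free group `G` on `A`, each identified with
its source and the generator of `G` that labels it. -/
noncomputable def totalGeneratorsEquiv (G A : Type u) [Group G] [IsFreeGroup G] [MulAction G A] :
    Quiver.Total (IsFreeGroupoid.Generators (ActionCategory G A)) ≃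
      A × IsFreeGroup.Generators G where
  toFun e := (e.left.back, e.hom.1)
  invFun x :=
    ⟨(x.1 : ActionCategory G A), ((IsFreeGroup.of x.2 • x.1 : A) : ActionCategory G A), ⟨x.2, rfl⟩⟩
  left_inv := by
    rintro ⟨⟨⟨⟩, a⟩, ⟨⟨⟩, b⟩, ⟨e, he⟩⟩
    obtain rfl : _ = b := he
    rfl
  right_inv _ := rfl

theorem schreier_index_formula_general {G ι : Type u} [Group G] (b : FreeGroupBasis ι G)
    (H : Subgroup G) :
    ∃ κ : Type u, Nonempty (FreeGroupBasis κ H) ∧ #κ + #(G ⧸ H) = #(G ⧸ H) * #ι + 1 := by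
  have := b.isFreeGroup
  -- Instance search does not unfold the groupoid structure to the category it is built on.
  have : @IsPreconnected (ActionCategory G (G ⧸ H)) Groupoid.toCategory :=
    inferInstanceAs (IsPreconnected (ActionCategory G (G ⧸ H)))
  have euler := mk_freeGroupBasis_end_add_mk
    ((IsFreeGroup.basis H).map (ActionCategory.endMulEquivSubgroup H).symm)
  have mk_generators : #(IsFreeGroup.Generators G) = #ι :=
    mk_congr (Equiv.ofFreeGroupEquiv ((IsFreeGroup.basis G).repr.symm.trans b.repr))
  rw [← mk_congr (ActionCategory.objEquiv G (G ⧸ H)), mk_congr (totalGeneratorsEquiv G (G ⧸ H)),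
    mk_prod, lift_id, lift_id, mk_generators] at euler
  exact ⟨_, ⟨IsFreeGroup.basis H⟩, euler⟩

theorem nonempty_freeGroupBasis_fin_of_finiteIndex {G ι : Type u} [Group G] [Finite ι] [Nonempty ι]
    (b : FreeGroupBasis ι G) (H : Subgroup G) [H.FiniteIndex] :
    Nonempty (FreeGroupBasis (Fin (H.index * (Nat.card ι - 1) + 1)) H) := by
  obtain ⟨κ, ⟨bH⟩, hκ⟩ := schreier_index_formula_general b H
  have mk_basis : #κ = (H.index * (Nat.card ι - 1) + 1 : ℕ) := by
    obtain ⟨m, hm⟩ := Nat.exists_eq_add_of_le' (Nat.card_pos (α := ι))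
    rw [← Nat.cast_card (α := G ⧸ H), ← Nat.cast_card (α := ι), ← Subgroup.index, hm] at hκ
    rw [← add_nat_inj H.index, hκ, hm, Nat.add_sub_cancel]
    norm_cast
    ring
  obtain ⟨e⟩ := mk_eq_nat_iff.1 mk_basis
  exact ⟨bH.reindex e⟩

section Rank

variable {G : Type*} [Group G]

theorem rkSubgroup_eq_rank (H : Subgroup G) [Group.FG H] : rkSubgroup H = Group.rank H := by
  classical
  obtain ⟨S, hS_card, hS⟩ := Group.rank_spec H
  have card_image : (S.image Subtype.val).card = Group.rank H := by
    rw [Finset.card_image_of_injective _ Subtype.val_injective, hS_card]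
  have closure_image : Subgroup.closure (S.image Subtype.val : Set G) = H := by
    rw [Finset.coe_image, ← H.coe_subtype, ← MonoidHom.map_closure, hS, ← MonoidHom.range_eq_map,
      H.range_subtype]
  refine le_antisymm (Nat.sInf_le ⟨_, card_image, closure_image⟩)
    (le_csInf ⟨_, _, card_image, closure_image⟩ ?_)
  rintro _ ⟨T, rfl, rfl⟩
  exact Subgroup.rank_closure_finset_le_card T

theorem card_monoidHom_le_pow_card {S : Finset G} (hS : Subgroup.closure (S : Set G) = ⊤)
    (K : Type*) [Group K] [Finite K] : Nat.card (G →* K) ≤ Nat.card K ^ S.card := by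
  have restrict_injective : Function.Injective fun (φ : G →* K) (s : S) => φ s := fun φ ψ h =>
    MonoidHom.eq_of_eqOn_dense hS fun s hs => congrFun h ⟨s, hs⟩
  simpa [Nat.card_fun] using Nat.card_le_card_of_injective _ restrict_injective

variable {ι : Type*}

theorem closure_range_freeGroupBasis (b : FreeGroupBasis ι G) :
    Subgroup.closure (Set.range b) = ⊤ := by
  have range_eq : Set.range b = b.repr.symm.toMonoidHom '' Set.range FreeGroup.of :=
    Set.range_comp b.repr.symm FreeGroup.of
  rw [range_eq, ← MonoidHom.map_closure, FreeGroup.closure_range_of,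
    Subgroup.map_top_of_surjective _ b.repr.symm.surjective]

-- Fewer generators than basis elements would leave too few homomorphisms to `ℤ/2`.
theorem rank_eq_card_of_freeGroupBasis [Group.FG G] [Finite ι] (b : FreeGroupBasis ι G) :
    Group.rank G = Nat.card ι := by
  classical
  have := Fintype.ofFinite ι
  apply le_antisymm
  · have closure_image : Subgroup.closure (Finset.univ.image b : Set G) = ⊤ := by
      rw [Finset.coe_image, Finset.coe_univ, Set.image_univ, closure_range_freeGroupBasis]
    calc Group.rank G ≤ (Finset.univ.image b).card := Group.rank_le closure_image
      _ ≤ Nat.card ι := by simpa using Finset.card_image_le (s := .univ) (f := b)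
  · obtain ⟨S, hS_card, hS⟩ := Group.rank_spec G
    have two_pow_le : 2 ^ Nat.card ι ≤ 2 ^ Group.rank G := by
      simpa [← Nat.card_congr b.lift, Nat.card_fun, hS_card] using
        card_monoidHom_le_pow_card hS (Multiplicative (ZMod 2))
    exact (Nat.pow_le_pow_iff_right one_lt_two).1 two_pow_le

theorem rkSubgroup_eq_card_of_freeGroupBasis [Finite ι] {H : Subgroup G}
    (b : FreeGroupBasis ι H) : rkSubgroup H = Nat.card ι := by
  have : Group.FG H := Group.fg_of_surjective (f := b.repr.symm.toMonoidHom) b.repr.symm.surjective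
  rw [rkSubgroup_eq_rank, rank_eq_card_of_freeGroupBasis b]

end Rank

/-- **Schreier index formula**: a subgroup `H` of finite index `k ≠ 0` in the free group
of rank `n ≥ 1` is free of rank `k·(n−1)+1`; in particular `rank(H) − 1 = k·(n−1)`. -/
theorem schreier_index_formula (n k : ℕ) (hn : 1 ≤ n)
    (H : Subgroup (FreeGroup (Fin n))) (hk : H.index = k) (hk0 : k ≠ 0) :
    Nonempty (H ≃* FreeGroup (Fin (k * (n - 1) + 1))) ∧
      rkSubgroup H - 1 = k * (n - 1) := by
  subst hk
  have : H.FiniteIndex := ⟨hk0⟩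
  have : Nonempty (Fin n) := ⟨⟨0, hn⟩⟩
  obtain ⟨b⟩ := nonempty_freeGroupBasis_fin_of_finiteIndex (.ofFreeGroup (Fin n)) H
  rw [Nat.card_fin] at b
  exact ⟨⟨b.repr⟩, by rw [rkSubgroup_eq_card_of_freeGroupBasis b, Nat.card_fin, Nat.add_sub_cancel]⟩
end

section
/- Let A be a countable type with at least two distinct elements and let B be any countable type. Then there exists a subgroup H of FreeGroup A that is isomorphic as a group to FreeGroup B; i.e., a free group of rank κ with 2 ≤ κ ≤ ℵ₀ contains subgroups isomorphic to the free group of every rank μ ≤ ℵ₀. -/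
/-!
Fix a letter `b : A` and let `G` be the free group on the other letters. Sending `b` to the
generator `1` of `FreeGroup G` and every other letter to itself in `G` defines a homomorphism from
`FreeGroup A` to `FreeGroup G ⋊ G`, where `G` permutes the generators of `FreeGroup G` by left
translation. It sends the conjugate `g * b * g⁻¹` by `g : G` to the generator `g`. Conjugates of `b`
by distinct elements of `G` are therefore free generators of the subgroup they generate, and as soon
as `A` has another letter, `G` is infinite, of the same cardinality as `FreeGroup A`.
-/

open Cardinal Function SemidirectProduct

section PermutationAction

variable (G X : Type*) [Group G] [MulAction G X]

/-- The action of `G` by automorphisms on `FreeGroup X` that extends a given action on the set `X`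
of generators, in the form needed to build the semidirect product `FreeGroup X ⋊ G`. -/
def freeGroupAction : G →* MulAut (FreeGroup X) where
  toFun g := FreeGroup.freeGroupCongr (MulAction.toPerm g)
  map_one' := MulEquiv.toMonoidHom_injective <| by ext x; simp
  map_mul' g h := MulEquiv.toMonoidHom_injective <| by ext x; simp [mul_smul]

variable {G X}

theorem freeGroupAction_apply_of (g : G) (x : X) :
    freeGroupAction G X g (FreeGroup.of x) = FreeGroup.of (g • x) := by
  simp [freeGroupAction]

theorem inr_mul_inl_of_mul_inr_inv (g : G) (x : X) :
    (inr g * inl (FreeGroup.of x) * (inr g)⁻¹ : FreeGroup X ⋊[freeGroupAction G X] G) =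
      inl (FreeGroup.of (g • x)) := by
  rw [← map_inv, ← inl_aut, freeGroupAction_apply_of]

end PermutationAction

section Conjugates

variable {A B : Type*} (b : A)

open Classical in
/-- The homomorphism from `FreeGroup A` to `FreeGroup G ⋊ G`, with `G` the free group on the letters
other than `b`, that sends `b` to the generator `1 : G` of `FreeGroup G` and restricts to the
inclusion on `G`. It turns conjugates of `b` by elements of `G` into generators of `FreeGroup G`. -/
noncomputable def splitLetter :
    FreeGroup A →* FreeGroup (FreeGroup {x // x ≠ b}) ⋊[freeGroupAction _ _]
      FreeGroup {x // x ≠ b} :=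
  FreeGroup.lift fun x =>
    if h : x = b then inl (FreeGroup.of 1) else inr (FreeGroup.of ⟨x, h⟩)

theorem splitLetter_of_self : splitLetter b (FreeGroup.of b) = inl (FreeGroup.of 1) := by
  simp [splitLetter]

theorem splitLetter_map_val (g : FreeGroup {x // x ≠ b}) :
    splitLetter b (FreeGroup.map Subtype.val g) = inr g := by
  have h : (splitLetter b).comp (FreeGroup.map Subtype.val) = inr := by
    ext1 x
    simp [splitLetter, x.2]
  exact DFunLike.congr_fun h g

/-- The homomorphism from `FreeGroup B` to `FreeGroup A` that sends the generator `i` to the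
conjugate of the letter `b` by `w i`, where `w` is a family of words in the other letters. -/
def liftConj (w : B → FreeGroup {x // x ≠ b}) : FreeGroup B →* FreeGroup A :=
  FreeGroup.lift fun i =>
    FreeGroup.map Subtype.val (w i) * FreeGroup.of b * (FreeGroup.map Subtype.val (w i))⁻¹

theorem splitLetter_comp_liftConj (w : B → FreeGroup {x // x ≠ b}) :
    (splitLetter b).comp (liftConj b w) = inl.comp (FreeGroup.map w) := by
  ext1 i
  simp only [liftConj, MonoidHom.comp_apply, FreeGroup.lift_apply_of, FreeGroup.map.of, map_mul,
    map_inv, splitLetter_of_self, splitLetter_map_val, inr_mul_inl_of_mul_inr_inv, smul_eq_mul,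
    mul_one]

theorem liftConj_injective {w : B → FreeGroup {x // x ≠ b}} (hw : Injective w) :
    Injective (liftConj b w) := by
  have h : Injective ((splitLetter b).comp (liftConj b w)) := by
    rw [splitLetter_comp_liftConj]
    exact inl_injective.comp (FreeGroup.map_injective hw)
  exact Injective.of_comp (f := splitLetter b) h

end Conjugates

theorem nonempty_freeGroup_equiv_freeGroup_ne {A : Type*} [Nontrivial A] (b : A) :
    Nonempty (FreeGroup A ≃ FreeGroup {x // x ≠ b}) := by
  have : Nonempty {x // x ≠ b} := nonempty_subtype.mpr (exists_ne b)
  cases finite_or_infinite A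
  · exact nonempty_equiv_of_countable
  · have card_ne : #{x // x ≠ b} = #A :=
      mk_compl_of_infinite {b} (by simpa using one_lt_aleph0.trans_le (aleph0_le_mk A))
    rw [← Cardinal.eq, mk_freeGroup, mk_freeGroup, card_ne]

theorem exists_subgroup_iso_freeGroup_general {A B : Type*} [Nontrivial A]
    (f : B ↪ FreeGroup A) :
    ∃ H : Subgroup (FreeGroup A), Nonempty (H ≃* FreeGroup B) := by
  obtain ⟨b⟩ : Nonempty A := inferInstance
  obtain ⟨e⟩ := nonempty_freeGroup_equiv_freeGroup_ne b
  have h : Injective (liftConj b (e ∘ f)) := liftConj_injective b (e.injective.comp f.injective)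
  exact ⟨(liftConj b (e ∘ f)).range, ⟨(MonoidHom.ofInjective h).symm⟩⟩

/-- A free group of countable rank at least 2 contains a subgroup isomorphic to the
free group on any countable type `B`. -/
theorem exists_subgroup_iso_freeGroup {A B : Type*} [Countable A] [Countable B]
    (a b : A) (hab : a ≠ b) :
    ∃ H : Subgroup (FreeGroup A), Nonempty (H ≃* FreeGroup B) := by
  have : Nontrivial A := ⟨a, b, hab⟩
  obtain ⟨f, hf⟩ := exists_injective_nat B
  exact exists_subgroup_iso_freeGroup_general
    (.trans ⟨f, hf⟩ (Infinite.natEmbedding (FreeGroup A)))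
end

section
/- Let A be a countable type with at least two distinct elements. Then the free group FreeGroup A has uncountably many subgroups; i.e., the type Subgroup (FreeGroup A) is not countable. -/
/-!
Let `e` be a permutation fixing a point `z`, and let `x` be a point with infinite `e`-orbit: for
example, let `e` be multiplication by `2` on `ℚ`, with `z = 0` and `x = 1`. The conjugates of the
transposition `(x z)` by the powers of `e` are the transpositions `(eⁿx z)`, and all of them but
the `n`-th fix `eⁿx`. Hence sending `a` to `e` and `b` to `(x z)` shows that no `aⁿba⁻ⁿ` lies in
the subgroup of the free group generated by the others, so distinct sets of exponents `n` generate
distinct subgroups.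
-/

open Cardinal Equiv

universe u v

/-- A family of group elements none of which lies in the subgroup generated by the others. For
nontrivial elements this is weaker than `iSupIndep` of the cyclic subgroups they generate, and
unlike the latter it is inherited from the image of the family under a homomorphism. -/
def Irredundant {ι G : Type*} [Group G] (g : ι → G) : Prop :=
  ∀ i, g i ∉ Subgroup.closure (g '' {i}ᶜ)

namespace Irredundant

section

variable {ι G H : Type*} [Group G] [Group H] {g : ι → G}

theorem mem_closure_image_iff (hg : Irredundant g) {S : Set ι} {i : ι} :
    g i ∈ Subgroup.closure (g '' S) ↔ i ∈ S := by
  refine ⟨fun hmem ↦ ?_, fun hi ↦ Subgroup.subset_closure (Set.mem_image_of_mem g hi)⟩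
  by_contra hi
  have hS : S ⊆ {i}ᶜ := Set.subset_compl_singleton_iff.mpr hi
  exact hg i (Subgroup.closure_mono (Set.image_mono hS) hmem)

theorem closure_image_injective (hg : Irredundant g) :
    Function.Injective fun S : Set ι ↦ Subgroup.closure (g '' S) := by
  intro S T hST
  ext i
  rw [← hg.mem_closure_image_iff, ← hg.mem_closure_image_iff (S := T)]
  exact iff_of_eq (congrArg (g i ∈ ·) hST)

theorem of_map (f : G →* H) (hfg : Irredundant fun i ↦ f (g i)) : Irredundant g := by
  intro i hi
  apply hfg i
  rw [← Set.image_image f g, ← MonoidHom.map_closure]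
  exact Subgroup.mem_map_of_mem f hi

theorem of_smul {X : Type*} [MulAction G X] (x : ι → X) (hmove : ∀ i, g i • x i ≠ x i)
    (hfix : ∀ i j, j ≠ i → g j • x i = x i) : Irredundant g := by
  intro i hi
  have hle : Subgroup.closure (g '' {i}ᶜ) ≤ MulAction.stabilizer G (x i) := by
    rw [Subgroup.closure_le, Set.image_subset_iff]
    exact hfix i
  exact hmove i (hle hi)

end

theorem two_power_mk_le_mk_subgroup {ι : Type u} {G : Type v} [Group G] {g : ι → G}
    (hg : Irredundant g) : lift.{v} (2 ^ #ι) ≤ lift.{u} #(Subgroup G) := by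
  rw [← mk_set]
  exact lift_mk_le_lift_mk_of_injective hg.closure_image_injective

end Irredundant

section Perm

variable {ι α : Type*} [DecidableEq α]

theorem irredundant_swap {p : ι → α} (hp : Function.Injective p) {z : α} (hz : ∀ i, p i ≠ z) :
    Irredundant fun i ↦ swap (p i) z := by
  refine .of_smul p (fun i ↦ ?_) fun i j hji ↦ ?_
  · rw [Perm.smul_def, swap_apply_left]
    exact (hz i).symm
  · exact swap_apply_of_ne_of_ne (hp.ne hji.symm) (hz i)

theorem irredundant_zpow_conj_swap {e : Perm α} {x z : α}
    (hx : Function.Injective fun n : ℤ ↦ (e ^ n) x) (hz : e z = z) :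
    Irredundant fun n : ℤ ↦ e ^ n * swap x z * (e ^ n)⁻¹ := by
  have hfix (n : ℤ) : (e ^ n) z = z := Perm.zpow_apply_eq_self_of_apply_eq_self hz n
  have hne (n : ℤ) : (e ^ n) x ≠ z := by
    intro hn
    have hxz : x = z := (e ^ n).injective (hn.trans (hfix n).symm)
    subst hxz
    exact zero_ne_one (hx ((hfix 0).trans (hfix 1).symm))
  simpa only [← swap_apply_apply, hfix] using irredundant_swap hx hne

end Perm

theorem exists_perm_rat_zero_fixed_zpow_apply_one_injective :
    ∃ e : Perm ℚ, e 0 = 0 ∧ Function.Injective fun n : ℤ ↦ (e ^ n) 1 := by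
  let two : ℚˣ := Units.mk0 2 two_ne_zero
  have hpow (n : ℤ) : (MulAction.toPermHom ℚˣ ℚ two ^ n) 1 = 2 ^ n := by
    rw [← map_zpow]
    simp [Units.smul_def, two]
  refine ⟨MulAction.toPermHom ℚˣ ℚ two, smul_zero two, ?_⟩
  simpa only [hpow] using zpow_right_injective₀ (two_pos (α := ℚ)) (OfNat.ofNat_ne_one 2)

theorem exists_freeGroup_hom_apply_of_eq {A G : Type*} [Group G] {a b : A} (hab : a ≠ b)
    (x y : G) : ∃ f : FreeGroup A →* G, f (.of a) = x ∧ f (.of b) = y := by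
  classical
  exact ⟨FreeGroup.lift (Function.update (fun _ ↦ y) a x), by simp, by simp [hab.symm]⟩

theorem irredundant_zpow_conj_freeGroup_of {A : Type*} {a b : A} (hab : a ≠ b) :
    Irredundant fun n : ℤ ↦ FreeGroup.of a ^ n * FreeGroup.of b * (FreeGroup.of a ^ n)⁻¹ := by
  obtain ⟨e, hzero, hinj⟩ := exists_perm_rat_zero_fixed_zpow_apply_one_injective
  obtain ⟨f, hfa, hfb⟩ := exists_freeGroup_hom_apply_of_eq hab e (swap 1 0)
  apply Irredundant.of_map f
  simpa only [map_mul, map_inv, map_zpow, hfa, hfb] using irredundant_zpow_conj_swap hinj hzero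

theorem uncountably_many_subgroups_general (A : Type*) [Nontrivial A] :
    𝔠 ≤ #(Subgroup (FreeGroup A)) := by
  obtain ⟨a, b, hab⟩ := exists_pair_ne A
  simpa using (irredundant_zpow_conj_freeGroup_of hab).two_power_mk_le_mk_subgroup

/-- A free group of countable rank at least 2 has uncountably many subgroups. -/
theorem uncountably_many_subgroups {A : Type*} [Countable A] (a b : A) (hab : a ≠ b) :
    ¬ Countable (Subgroup (FreeGroup A)) := by
  have : Nontrivial A := ⟨a, b, hab⟩
  exact fun _ ↦ (aleph0_lt_continuum.trans_le (uncountably_many_subgroups_general A)).not_ge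
    mk_le_aleph0
end

section
/- Let A be a finite type. Then every surjective group endomorphism φ : FreeGroup A →* FreeGroup A is injective (hence an automorphism); i.e., finitely generated free groups are Hopfian. -/
/-!
A finitely generated monoid has only finitely many homomorphisms to a given finite monoid, so
precomposition with a surjective endomorphism `φ` permutes them; hence every such homomorphism
factors through `φ` and kills `ker φ`. In a residually finite group this forces `ker φ = 1`.

Free groups are residually finite: given a word `w`, let `S` be the finite set of its suffixes.
Left multiplication by a generator is a partial injection of `S`, and extending each of these to a
permutation gives a homomorphism to `Equiv.Perm S`. The image of `w` carries `1` to `w` one letter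
at a time, so it is nontrivial whenever `w ≠ 1`.
-/

theorem finite_monoidHom_of_fg (M N : Type*) [Monoid M] [Monoid.FG M] [Monoid N] [Finite N] :
    Finite (M →* N) := by
  obtain ⟨S, hS, hSfin⟩ := Monoid.fg_iff.mp ‹Monoid.FG M›
  have := hSfin.to_subtype
  refine Finite.of_injective (fun (f : M →* N) (s : S) ↦ f s) fun f g hfg ↦ ?_
  exact MonoidHom.eq_of_eqOn_denseM hS fun s hs ↦ congrFun hfg ⟨s, hs⟩

theorem exists_comp_eq_of_surjective_of_finite {M N : Type*} [Monoid M] [Monoid.FG M] [Monoid N]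
    [Finite N] {φ : M →* M} (hφ : Function.Surjective φ) (f : M →* N) :
    ∃ g : M →* N, g.comp φ = f := by
  have := finite_monoidHom_of_fg M N
  have comp_injective : Function.Injective fun g : M →* N ↦ g.comp φ :=
    fun _ _ ↦ (MonoidHom.cancel_right hφ).mp
  exact Finite.surjective_of_injective comp_injective f

theorem ker_le_ker_of_surjective_of_finite {G H : Type*} [Group G] [Group.FG G] [Group H] [Finite H]
    {φ : G →* G} (hφ : Function.Surjective φ) (f : G →* H) : φ.ker ≤ f.ker := by
  obtain ⟨g, rfl⟩ := exists_comp_eq_of_surjective_of_finite hφ f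
  rw [← MonoidHom.comap_ker]
  exact φ.ker_le_comap g.ker

theorem injective_of_surjective_of_residuallyFinite {G : Type*} [Group G] [Group.FG G]
    [Group.ResiduallyFinite G] {φ : G →* G} (hφ : Function.Surjective φ) :
    Function.Injective φ := by
  refine (injective_iff_map_eq_one φ).mpr fun g hg ↦ ?_
  refine Group.eq_one_iff_forall_finiteIndexNormalSubroup g fun H ↦ ?_
  have mem_ker_mk : g ∈ (QuotientGroup.mk' H.toSubgroup).ker :=
    ker_le_ker_of_surjective_of_finite hφ _ hg
  rwa [QuotientGroup.ker_mk'] at mem_ker_mk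

theorem exists_perm_extending_injOn {X : Type*} (S : Set X) [Finite S] {f : X → X}
    (hf : Set.InjOn f S) :
    ∃ σ : Equiv.Perm S, ∀ s : S, f s ∈ S → (σ s : X) = f s := by
  have := Fintype.ofFinite S
  obtain ⟨σ, hσ⟩ := Set.MapsTo.exists_equiv_extend_of_card_eq (t := S.toFinset)
    (s := {s : S | f s ∈ S}) (f := fun s ↦ f s) (by simp) (fun s hs ↦ by simpa using hs)
    fun s _ t _ hst ↦ Subtype.ext (hf s.2 t.2 hst)
  exact ⟨σ.trans (Equiv.subtypeEquivRight fun _ ↦ Set.mem_toFinset), hσ⟩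

section FreeGroupAction

variable {A X : Type*} [MulAction (FreeGroup A) X]

/-- The action of the free group on `S` given by `f` agrees with its action on `X ⊇ S` as far as
single letters (generators and their inverses) are concerned: a letter that moves `s ∈ S` to a point
of `S` in `X` does the same under `f`. Nothing is required of a letter that moves `s` out of `S`,
so longer words need not agree. -/
def ExtendsLetterAction {S : Set X} (f : FreeGroup A →* Equiv.Perm S) : Prop :=
  ∀ (x : A × Bool) (s : S), FreeGroup.mk [x] • (s : X) ∈ S →
    (f (FreeGroup.mk [x]) s : X) = FreeGroup.mk [x] • (s : X)

variable (A) in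
theorem exists_extendsLetterAction (S : Set X) [Finite S] :
    ∃ f : FreeGroup A →* Equiv.Perm S, ExtendsLetterAction f := by
  choose σ hσ using fun a : A ↦
    exists_perm_extending_injOn S (MulAction.injective (FreeGroup.of a)).injOn
  refine ⟨FreeGroup.lift σ, ?_⟩
  rintro ⟨a, _ | _⟩ s hs
  · have mk_eq_inv : FreeGroup.mk [(a, false)] = (FreeGroup.of a)⁻¹ := rfl
    rw [mk_eq_inv] at hs ⊢
    have apply_inv_smul : σ a ⟨_, hs⟩ = s :=
      Subtype.ext <| (hσ a ⟨_, hs⟩ (by simp)).trans (smul_inv_smul _ _)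
    rw [map_inv, FreeGroup.lift_apply_of, Equiv.Perm.inv_eq_iff_eq.mpr apply_inv_smul.symm]
  · have mk_eq_of : FreeGroup.mk [(a, true)] = FreeGroup.of a := rfl
    rw [mk_eq_of] at hs ⊢
    rw [FreeGroup.lift_apply_of, hσ a s hs]

theorem ExtendsLetterAction.apply_mk_eq_smul {S : Set X} {f : FreeGroup A →* Equiv.Perm S}
    (hf : ExtendsLetterAction f) (s : S) (L : List (A × Bool))
    (hL : ∀ l, l <:+ L → FreeGroup.mk l • (s : X) ∈ S) :
    (f (FreeGroup.mk L) s : X) = FreeGroup.mk L • (s : X) := by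
  induction L with
  | nil => simp [← FreeGroup.one_eq_mk]
  | cons x L ih =>
    have mk_cons : FreeGroup.mk (x :: L) = FreeGroup.mk [x] * FreeGroup.mk L :=
      FreeGroup.mul_mk (L₁ := [x]).symm
    have apply_tail := ih fun l hl ↦ hL l (hl.trans (List.suffix_cons x L))
    have smul_mem := hL _ List.suffix_rfl
    rw [mk_cons, mul_smul, ← apply_tail] at smul_mem
    rw [mk_cons, map_mul, Equiv.Perm.mul_apply, hf x _ smul_mem, apply_tail, mul_smul]

theorem exists_finite_hom_perm_apply_eq_smul (w : FreeGroup A) (x : X) :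
    ∃ (S : Set X) (_ : Finite S) (f : FreeGroup A →* Equiv.Perm S) (hx : x ∈ S),
      (f w ⟨x, hx⟩ : X) = w • x := by
  obtain ⟨L, rfl⟩ : ∃ L, FreeGroup.mk L = w := Quot.exists_rep w
  let S : Set X := (fun l ↦ FreeGroup.mk l • x) '' {l | l <:+ L}
  have suffixes_finite : {l | l <:+ L}.Finite := by
    simpa using List.finite_toSet L.tails
  have S_finite : Finite S := (suffixes_finite.image _).to_subtype
  have hx : x ∈ S := ⟨[], List.nil_suffix, one_smul _ x⟩
  obtain ⟨f, hf⟩ := exists_extendsLetterAction A S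
  exact ⟨S, S_finite, f, hx, hf.apply_mk_eq_smul ⟨x, hx⟩ L fun l hl ↦ ⟨l, hl, rfl⟩⟩

end FreeGroupAction

instance residuallyFinite_freeGroup (A : Type*) : Group.ResiduallyFinite (FreeGroup A) := by
  refine Group.residuallyFinite_of_forall_exists_finite_monoidHom fun w hw ↦ ?_
  obtain ⟨S, _, f, one_mem, apply_one⟩ :=
    exists_finite_hom_perm_apply_eq_smul w (1 : FreeGroup A)
  refine ⟨Equiv.Perm S, inferInstance, inferInstance, f, fun hfw ↦ hw ?_⟩
  simpa [hfw] using apply_one.symm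

/-- Finitely generated free groups are Hopfian: every surjective endomorphism of
`FreeGroup A`, for `A` finite, is injective. -/
theorem freeGroup_hopfian {A : Type*} [Finite A]
    (φ : FreeGroup A →* FreeGroup A) (hφ : Function.Surjective φ) :
    Function.Injective φ :=
  injective_of_surjective_of_residuallyFinite hφ
end

section
/- For n ≥ 1 and k ≥ 1, let N_n(k) denote the (finite) number of subgroups of index k of the free group FreeGroup (Fin n) of rank n, i.e., N_n(k) = Nat.card {H : Subgroup (FreeGroup (Fin n)) | H.index = k}. Then N_n(1) = 1 and, for every k ≥ 1, N_n(k) = k·(k!)^{n−1} − ∑_{i=1}^{k−1} ((k−i)!)^{n−1}·N_n(i); equivalently, k·(k!)^{n−1} = ∑_{i=1}^{k} ((k−i)!)^{n−1}·N_n(i) (M. Hall's recursion formula). -/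
/-- The number of subgroups of index `k` in the free group of rank `n`. -/
noncomputable def numSubgroupsOfIndex (n k : ℕ) : ℕ :=
  Nat.card {H : Subgroup (FreeGroup (Fin n)) | H.index = k}

/-!
Let `F` be free of rank `n` and count the `(k!)^n` homomorphisms `ρ : F → Perm X`, `|X| = k`, by
the index `i` of the stabilizer `H` of a base point `x₀`. A homomorphism with stabilizer `H` is the
same as an embedding `F ⧸ H ↪ X` sending the trivial coset to `x₀` together with, for each
generator, a permutation of `X` extending the one that the generator induces on the image of
`F ⧸ H`. There are `(k-1)! / (k-i)!` embeddings and `(k-i)!` extensions per generator, hence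
`(k-1)! * ((k-i)!)^(n-1)` homomorphisms with stabilizer `H`. Summing over `H` and dividing by
`(k-1)!` gives the recursion.
-/

open Equiv (Perm)
open scoped Nat

section Fibers

theorem card_sigma_eq_mul_card {B : Type*} {C : B → Type*} [∀ b, Finite (C b)] {c : ℕ}
    (hC : ∀ b, Nat.card (C b) = c) : Nat.card (Σ b, C b) = c * Nat.card B := by
  let e : (Σ b, C b) ≃ B × Fin c :=
    (Equiv.sigmaCongrRight fun b ↦ Finite.equivFinOfCardEq (hC b)).trans
      (Equiv.sigmaEquivProd B (Fin c))
  rw [Nat.card_congr e, Nat.card_prod, Nat.card_fin, mul_comm]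

theorem card_fiber_mul_card_of_isPretransitive {K Y Z : Type*} [Group K] [MulAction K Y]
    [MulAction K Z] [MulAction.IsPretransitive K Z] [Finite Y] (f : Y →[K] Z) (z : Z) :
    Nat.card {y // f y = z} * Nat.card Z = Nat.card Y := by
  have card_fiber (w : Z) : Nat.card {y // f y = w} = Nat.card {y // f y = z} := by
    obtain ⟨g, rfl⟩ := MulAction.exists_smul_eq K z w
    refine (Nat.card_congr ((MulAction.toPerm g).subtypeEquiv fun y ↦ ?_)).symm
    rw [MulAction.toPerm_apply, map_smul, smul_left_cancel_iff]
  rw [← card_sigma_eq_mul_card card_fiber, Nat.card_congr (Equiv.sigmaFiberEquiv f)]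

end Fibers

section Embeddings

variable {A X : Type*} [Finite X]

theorem card_embedding_eq_descFactorial [Finite A] :
    Nat.card (A ↪ X) = (Nat.card X).descFactorial (Nat.card A) := by
  classical
  have := Fintype.ofFinite A
  have := Fintype.ofFinite X
  simp only [Nat.card_eq_fintype_card, Fintype.card_embedding_eq]

theorem card_perm_extending_embedding (f g : A ↪ X) :
    Nat.card {σ : Perm X // ∀ a, σ (f a) = g a} = (Nat.card X - Nat.card A)! := by
  have : Finite A := Finite.of_injective f f.injective
  have : MulAction.IsPretransitive (Perm X) (A ↪ X) := ⟨Perm.exists_smul_eq_embedding⟩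
  let restrict : Perm X →[Perm X] (A ↪ X) := ⟨fun σ ↦ σ • f, fun σ τ ↦ mul_smul σ τ f⟩
  have restrict_eq_iff (σ : Perm X) : restrict σ = g ↔ ∀ a, σ (f a) = g a := DFunLike.ext_iff
  have hcard : Nat.card A ≤ Nat.card X := Nat.card_le_card_of_injective f f.injective
  apply Nat.eq_of_mul_eq_mul_right (Nat.descFactorial_pos.2 hcard)
  rw [Nat.factorial_mul_descFactorial hcard, ← card_embedding_eq_descFactorial, ← Nat.card_perm,
    ← card_fiber_mul_card_of_isPretransitive restrict g,
    Nat.card_congr (Equiv.subtypeEquivRight restrict_eq_iff)]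

theorem card_pointed_embedding [Finite A] (a₀ : A) (x₀ : X) :
    Nat.card {f : A ↪ X // f a₀ = x₀} = (Nat.card X - 1).descFactorial (Nat.card A - 1) := by
  have : Nonempty A := ⟨a₀⟩
  have : Nonempty X := ⟨x₀⟩
  let eval : (A ↪ X) →[Perm X] X := ⟨fun f ↦ f a₀, fun _ _ ↦ rfl⟩
  apply Nat.eq_of_mul_eq_mul_right (Nat.card_pos (α := X))
  calc Nat.card {f : A ↪ X // f a₀ = x₀} * Nat.card X
      = (Nat.card X).descFactorial (Nat.card A) := by
        rw [← card_embedding_eq_descFactorial]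
        exact card_fiber_mul_card_of_isPretransitive eval x₀
    _ = (Nat.card X - 1).descFactorial (Nat.card A - 1) * Nat.card X := by
        obtain ⟨k, hk⟩ := Nat.exists_eq_add_one.2 (Nat.card_pos (α := X))
        obtain ⟨i, hi⟩ := Nat.exists_eq_add_one.2 (Nat.card_pos (α := A))
        rw [hk, hi, Nat.succ_descFactorial_succ, mul_comm, Nat.add_sub_cancel, Nat.add_sub_cancel]

end Embeddings

section PermutationRepresentations

variable {G X : Type*} [Group G]

/-- The stabilizer of the point `x` under the action of `G` on `X` given by the permutation
representation `ρ`. Since `ρ` varies in the counting argument, it is kept explicit instead of being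
turned into a `MulAction` instance. -/
def pointStabilizer (ρ : G →* Perm X) (x : X) : Subgroup G :=
  (MulAction.stabilizer (Perm X) x).comap ρ

/-- The map `f` from the left cosets of `H` to `X` intertwines left translation by `G` with the
permutation representation `ρ`. An injective such `f` identifies `G ⧸ H` with the orbit of the
image of the trivial coset. -/
def Intertwines {H : Subgroup G} (f : G ⧸ H → X) (ρ : G →* Perm X) : Prop :=
  ∀ (g : G) (q : G ⧸ H), ρ g (f q) = f (g • q)

variable {H : Subgroup G} {ρ : G →* Perm X} {x : X}

theorem mem_pointStabilizer {g : G} : g ∈ pointStabilizer ρ x ↔ ρ g x = x :=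
  Iff.rfl

theorem exists_pointed_embedding_intertwines (ρ : G →* Perm X) (x : X) :
    ∃ f : G ⧸ pointStabilizer ρ x ↪ X, f (1 : G) = x ∧ Intertwines f ρ := by
  let _ : MulAction G X := MulAction.compHom X ρ
  exact ⟨⟨MulAction.ofQuotientStabilizer G x, MulAction.injective_ofQuotientStabilizer G x⟩,
    one_smul G x, fun g q ↦ (MulAction.ofQuotientStabilizer_smul G x g q).symm⟩

namespace Intertwines

theorem apply_mk {f : G ⧸ H → X} (hf : Intertwines f ρ) (g : G) : f g = ρ g (f (1 : G)) := by
  rw [hf, MulAction.Quotient.smul_coe, smul_eq_mul, mul_one]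

theorem pointStabilizer_eq {f : G ⧸ H ↪ X} (hf : Intertwines f ρ) (hx : f (1 : G) = x) :
    pointStabilizer ρ x = H := by
  subst hx
  ext g
  rw [mem_pointStabilizer, ← hf.apply_mk, f.injective.eq_iff, eq_comm, QuotientGroup.eq, inv_one,
    one_mul]

theorem embedding_ext {f f' : G ⧸ H ↪ X} (hf : Intertwines f ρ) (hf' : Intertwines f' ρ)
    (h : f (1 : G) = f' (1 : G)) : f = f' := by
  ext q
  induction q using QuotientGroup.induction_on with
  | H g => rw [hf.apply_mk, hf'.apply_mk, h]

end Intertwines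

theorem card_pointStabilizer_eq_card_sigma (H : Subgroup G) (x : X) :
    Nat.card {ρ : G →* Perm X // pointStabilizer ρ x = H} =
      Nat.card (Σ f : {f : G ⧸ H ↪ X // f (1 : G) = x},
        {ρ : G →* Perm X // Intertwines f.1 ρ}) := by
  let forget (p : Σ f : {f : G ⧸ H ↪ X // f (1 : G) = x}, {ρ : G →* Perm X // Intertwines f.1 ρ}) :
      {ρ : G →* Perm X // pointStabilizer ρ x = H} :=
    ⟨p.2.1, p.2.2.pointStabilizer_eq p.1.2⟩
  refine (Nat.card_eq_of_bijective forget ⟨?injective, ?surjective⟩).symm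
  case injective =>
    rintro ⟨⟨f, hf⟩, ⟨ρ, hρ⟩⟩ ⟨⟨f', hf'⟩, ⟨ρ', hρ'⟩⟩ h
    obtain rfl : ρ = ρ' := congrArg Subtype.val h
    obtain rfl : f = f' := hρ.embedding_ext hρ' (hf.trans hf'.symm)
    rfl
  case surjective =>
    rintro ⟨ρ, rfl⟩
    obtain ⟨f, hf, hρ⟩ := exists_pointed_embedding_intertwines ρ x
    exact ⟨⟨⟨f, hf⟩, ⟨ρ, hρ⟩⟩, rfl⟩

theorem index_pointStabilizer_mem_Icc [Finite X] (ρ : G →* Perm X) (x : X) :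
    (pointStabilizer ρ x).index ∈ Finset.Icc 1 (Nat.card X) := by
  obtain ⟨f, -⟩ := exists_pointed_embedding_intertwines ρ x
  have : Finite (G ⧸ pointStabilizer ρ x) := Finite.of_injective f f.injective
  exact Finset.mem_Icc.2 ⟨Nat.card_pos, Nat.card_le_card_of_injective f f.injective⟩

end PermutationRepresentations

section FreeGroup

variable {α X : Type*}

theorem intertwines_lift_iff {H : Subgroup (FreeGroup α)} {f : FreeGroup α ⧸ H → X}
    {σ : α → Perm X} :
    Intertwines f (FreeGroup.lift σ) ↔ ∀ a q, σ a (f q) = f (FreeGroup.of a • q) := by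
  refine ⟨fun h a q ↦ by simpa only [FreeGroup.lift_apply_of] using h (FreeGroup.of a) q,
    fun h g ↦ ?_⟩
  induction g using FreeGroup.induction_on with
  | C1 => simp only [map_one, Perm.one_apply, one_smul, implies_true]
  | of a => simpa only [FreeGroup.lift_apply_of] using h a
  | inv_of a ih =>
    intro q
    rw [map_inv, Perm.inv_eq_iff_eq, ih, smul_inv_smul]
  | mul g₁ g₂ ih₁ ih₂ =>
    intro q
    rw [map_mul, Perm.mul_apply, ih₂, ih₁, mul_smul]

variable [Finite α] [Finite X]

instance finite_freeGroup_hom_perm : Finite (FreeGroup α →* Perm X) :=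
  Finite.of_equiv _ FreeGroup.lift

theorem card_freeGroup_hom_perm :
    Nat.card (FreeGroup α →* Perm X) = (Nat.card X)! ^ Nat.card α := by
  rw [← Nat.card_congr FreeGroup.lift, Nat.card_fun, Nat.card_perm]

theorem card_intertwines {H : Subgroup (FreeGroup α)} (f : FreeGroup α ⧸ H ↪ X) :
    Nat.card {ρ : FreeGroup α →* Perm X // Intertwines f ρ} =
      (Nat.card X - H.index)! ^ Nat.card α := by
  have := Fintype.ofFinite α
  have card_extension (a : α) :
      Nat.card {σ : Perm X // ∀ q, σ (f q) = f (FreeGroup.of a • q)} = (Nat.card X - H.index)! :=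
    card_perm_extending_embedding f ((MulAction.toPerm (FreeGroup.of a)).toEmbedding.trans f)
  calc Nat.card {ρ : FreeGroup α →* Perm X // Intertwines f ρ}
      = Nat.card {σ : α → Perm X // ∀ a q, σ a (f q) = f (FreeGroup.of a • q)} :=
        (Nat.card_congr (FreeGroup.lift.subtypeEquiv fun _ ↦ intertwines_lift_iff.symm)).symm
    _ = ∏ a : α, Nat.card {σ : Perm X // ∀ q, σ (f q) = f (FreeGroup.of a • q)} := by
        rw [← Nat.card_pi]
        exact Nat.card_congr (Equiv.subtypePiEquivPi
          (p := fun a (σ : Perm X) ↦ ∀ q, σ (f q) = f (FreeGroup.of a • q)))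
    _ = (Nat.card X - H.index)! ^ Nat.card α := by
        simp_rw [card_extension, Finset.prod_const, Finset.card_univ, Nat.card_eq_fintype_card]

theorem card_freeGroup_hom_pointStabilizer_eq (H : Subgroup (FreeGroup α)) [H.FiniteIndex]
    (x : X) :
    Nat.card {ρ : FreeGroup α →* Perm X // pointStabilizer ρ x = H} =
      (Nat.card X - H.index)! ^ Nat.card α * (Nat.card X - 1).descFactorial (H.index - 1) := by
  have card_fiber (f : {f : FreeGroup α ⧸ H ↪ X // f (1 : FreeGroup α) = x}) :
      Nat.card {ρ : FreeGroup α →* Perm X // Intertwines f.1 ρ} =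
        (Nat.card X - H.index)! ^ Nat.card α :=
    card_intertwines f.1
  rw [card_pointStabilizer_eq_card_sigma, card_sigma_eq_mul_card card_fiber, card_pointed_embedding,
    Subgroup.index]

theorem card_freeGroup_hom_index_pointStabilizer_eq (x : X) {i : ℕ} (hi : i ≠ 0) :
    Nat.card {ρ : FreeGroup α →* Perm X // (pointStabilizer ρ x).index = i} =
      (Nat.card X - i)! ^ Nat.card α * (Nat.card X - 1).descFactorial (i - 1) *
        Nat.card {H : Subgroup (FreeGroup α) // H.index = i} := by
  have card_fiber (H : {H : Subgroup (FreeGroup α) // H.index = i}) :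
      Nat.card {ρ : FreeGroup α →* Perm X // pointStabilizer ρ x = H} =
        (Nat.card X - i)! ^ Nat.card α * (Nat.card X - 1).descFactorial (i - 1) := by
    obtain ⟨H, rfl⟩ := H
    have : H.FiniteIndex := ⟨hi⟩
    exact card_freeGroup_hom_pointStabilizer_eq H x
  rw [← card_sigma_eq_mul_card card_fiber, Nat.card_congr (Equiv.sigmaSubtypeFiberEquivSubtype
    (fun ρ : FreeGroup α →* Perm X ↦ pointStabilizer ρ x) fun _ ↦ Iff.rfl)]

theorem factorial_pow_eq_sum_card_subgroup [Nonempty X] :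
    (Nat.card X)! ^ Nat.card α =
      ∑ i ∈ Finset.Icc 1 (Nat.card X),
        (Nat.card X - i)! ^ Nat.card α * (Nat.card X - 1).descFactorial (i - 1) *
          Nat.card {H : Subgroup (FreeGroup α) // H.index = i} := by
  classical
  have := Fintype.ofFinite (FreeGroup α →* Perm X)
  obtain ⟨x⟩ := ‹Nonempty X›
  rw [← card_freeGroup_hom_perm, Nat.card_eq_fintype_card, ← Finset.card_univ,
    Finset.card_eq_sum_card_fiberwise fun ρ _ ↦ index_pointStabilizer_mem_Icc ρ x]
  refine Finset.sum_congr rfl fun i hi ↦ ?_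
  rw [← card_freeGroup_hom_index_pointStabilizer_eq x
      (Nat.one_le_iff_ne_zero.1 (Finset.mem_Icc.1 hi).1),
    Nat.card_eq_fintype_card, Fintype.card_subtype]

end FreeGroup

theorem mul_factorial_pow_eq_sum_numSubgroupsOfIndex {n : ℕ} (hn : 1 ≤ n) (k : ℕ) :
    k * k ! ^ (n - 1) = ∑ i ∈ Finset.Icc 1 k, (k - i)! ^ (n - 1) * numSubgroupsOfIndex n i := by
  obtain ⟨m, rfl⟩ := Nat.exists_eq_add_of_le' hn
  obtain _ | l := k
  · simp
  have hsum := factorial_pow_eq_sum_card_subgroup (α := Fin (m + 1)) (X := Fin (l + 1))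
  simp only [Nat.card_fin, Nat.add_sub_cancel] at hsum ⊢
  apply Nat.eq_of_mul_eq_mul_left (Nat.factorial_pos l)
  calc l ! * ((l + 1) * (l + 1)! ^ m)
      = (l + 1)! ^ (m + 1) := by rw [pow_succ', Nat.factorial_succ]; ring
    _ = ∑ i ∈ Finset.Icc 1 (l + 1), (l + 1 - i)! ^ (m + 1) * l.descFactorial (i - 1) *
          numSubgroupsOfIndex (m + 1) i := hsum
    _ = l ! * ∑ i ∈ Finset.Icc 1 (l + 1), (l + 1 - i)! ^ m * numSubgroupsOfIndex (m + 1) i := by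
      rw [Finset.mul_sum]
      refine Finset.sum_congr rfl fun i hi ↦ ?_
      obtain ⟨hi₁, hil⟩ := Finset.mem_Icc.1 hi
      have hfactorial : (l + 1 - i)! * l.descFactorial (i - 1) = l ! := by
        rw [← Nat.factorial_mul_descFactorial (n := l) (k := i - 1) (by lia)]
        congr 2
        lia
      rw [← hfactorial, pow_succ]
      ring

/-- **M. Hall's recursion formula** for the number `N_n(k)` of subgroups of index `k`
in the free group of rank `n ≥ 1`: `N_n(1) = 1` and, for every `k ≥ 1`,
`N_n(k) = k·(k!)^(n−1) − ∑_{i=1}^{k−1} ((k−i)!)^(n−1)·N_n(i)`; equivalently,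
`k·(k!)^(n−1) = ∑_{i=1}^{k} ((k−i)!)^(n−1)·N_n(i)`. -/
theorem hall_recursion_formula (n : ℕ) (hn : 1 ≤ n) :
    numSubgroupsOfIndex n 1 = 1 ∧
    ∀ k : ℕ, 1 ≤ k →
      (numSubgroupsOfIndex n k =
          k * (Nat.factorial k) ^ (n - 1) -
            ∑ i ∈ Finset.Icc 1 (k - 1),
              (Nat.factorial (k - i)) ^ (n - 1) * numSubgroupsOfIndex n i) ∧
      k * (Nat.factorial k) ^ (n - 1) =
        ∑ i ∈ Finset.Icc 1 k,
          (Nat.factorial (k - i)) ^ (n - 1) * numSubgroupsOfIndex n i := by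
  have hsum := mul_factorial_pow_eq_sum_numSubgroupsOfIndex hn
  refine ⟨?_, fun k hk ↦ ⟨?_, hsum k⟩⟩
  · simpa using (hsum 1).symm
  · obtain ⟨l, rfl⟩ := Nat.exists_eq_add_of_le' hk
    rw [hsum, Finset.sum_Icc_succ_top hk]
    simp
end

section
/- Let A be a finite type and let N be a nontrivial normal subgroup of FreeGroup A (N ≠ ⊥, N normal). Then N is finitely generated if and only if N has finite index in FreeGroup A. -/
/-!
Words are read as paths starting at `1` in the Cayley tree of the free group. If `H` is generated by
a finite set `S`, the geodesics from `1` to the elements of `H` stay in `H * T`, where `T` is the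
finite set of vertices on the geodesics from `1` to the elements of `S`. If moreover `H` contains a
nontrivial normal subgroup, then every vertex `g` lies in `H * T`: some conjugate `n = g u g⁻¹` in
that subgroup has no cancellation in `g u = n g`, so `g` lies on the path through `n` to `n g`.
Hence either `g` lies on the geodesic to `n ∈ H`, or `n⁻¹ g` is an earlier vertex of the geodesic
to `g`, and one inducts on the length. So finitely many cosets of `H` cover the group.
-/

open FreeGroup
open scoped Pointwise

theorem finiteIndex_of_coe_mul_eq_univ {G : Type*} [Group G] {H : Subgroup G} {T : Set G}
    (hT : T.Finite) (hHT : (H : Set G) * T = Set.univ) : H.FiniteIndex := by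
  have : Finite T := hT
  suffices Function.Surjective fun t : T => ((t⁻¹ : G) : G ⧸ H) by
    have := Finite.of_surjective _ this
    exact H.finiteIndex_of_finite_quotient
  intro q
  obtain ⟨g, rfl⟩ := QuotientGroup.mk_surjective q
  obtain ⟨h, hh, t, ht, hht⟩ : g⁻¹ ∈ (H : Set G) * T := hHT ▸ Set.mem_univ _
  refine ⟨⟨t, ht⟩, QuotientGroup.eq.2 ?_⟩
  have : t * g = h⁻¹ := by rw [eq_inv_iff_mul_eq_one, ← inv_inv g, ← hht]; group
  simpa [this] using hh

theorem smul_coe_mul_eq {G : Type*} [Group G] {H : Subgroup G} {h : G} (hh : h ∈ H) (T : Set G) :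
    h • ((H : Set G) * T) = H * T := by
  rw [← smul_mul_assoc, smul_coe_set hh]

section PathVertices

variable {A : Type*}

/-- The vertices visited by the path in the Cayley graph of `FreeGroup A` that starts at `1` and
follows the letters of the (not necessarily reduced) word `L`. When `L` is reduced this is the
geodesic from `1` to `mk L`. -/
def pathVertices (L : List (A × Bool)) : Set (FreeGroup A) :=
  {g | ∃ p, p <+: L ∧ FreeGroup.mk p = g}

theorem finite_pathVertices (L : List (A × Bool)) : (pathVertices L).Finite := by
  refine (L.inits.finite_toSet.image FreeGroup.mk).subset ?_
  rintro _ ⟨p, hp, rfl⟩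
  exact ⟨p, (List.mem_inits p L).2 hp, rfl⟩

@[simp]
theorem pathVertices_nil : pathVertices ([] : List (A × Bool)) = {1} := by
  simp [pathVertices, one_eq_mk, eq_comm]

theorem pathVertices_append (L M : List (A × Bool)) :
    pathVertices (L ++ M) = pathVertices L ∪ FreeGroup.mk L • pathVertices M := by
  apply Set.Subset.antisymm
  · rintro _ ⟨p, ⟨r, hr⟩, rfl⟩
    rcases List.append_eq_append_iff.1 hr with ⟨s, rfl, -⟩ | ⟨t, rfl, rfl⟩
    · exact Or.inl ⟨p, List.prefix_append _ _, rfl⟩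
    · exact Or.inr ⟨_, ⟨t, List.prefix_append _ _, rfl⟩, mul_mk⟩
  · rintro _ (⟨p, hp, rfl⟩ | ⟨_, ⟨t, ht, rfl⟩, rfl⟩)
    · exact ⟨p, hp.trans (List.prefix_append _ _), rfl⟩
    · exact ⟨L ++ t, (List.prefix_append_right_inj L).2 ht, mul_mk.symm⟩

theorem pathVertices_invRev_subset (L : List (A × Bool)) :
    pathVertices (invRev L) ⊆ (FreeGroup.mk L)⁻¹ • pathVertices L := by
  rintro _ ⟨p, ⟨t, ht⟩, rfl⟩
  have hL : L = invRev t ++ invRev p := by rw [← invRev_append, ht, invRev_invRev]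
  rw [Set.mem_inv_smul_set_iff]
  refine ⟨invRev t, hL ▸ List.prefix_append _ _, ?_⟩
  rw [hL, ← mul_mk, ← inv_mk (L := p), smul_eq_mul, inv_mul_cancel_right]

theorem pathVertices_subset_of_step {L M : List (A × Bool)} (h : Red.Step L M) :
    pathVertices M ⊆ pathVertices L := by
  obtain @⟨L₁, L₂, a, b⟩ := h
  have hcancel : FreeGroup.mk [(a, b), (a, !b)] = 1 := Quot.sound Red.Step.cons_not
  have hsplit : L₁ ++ (a, b) :: (a, !b) :: L₂ = L₁ ++ ([(a, b), (a, !b)] ++ L₂) := rfl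
  rw [hsplit, pathVertices_append, pathVertices_append, pathVertices_append, hcancel, one_smul]
  gcongr
  exact Set.subset_union_right

theorem pathVertices_subset_of_red {L M : List (A × Bool)} (h : Red L M) :
    pathVertices M ⊆ pathVertices L := by
  induction h with
  | refl => rfl
  | tail _ hstep ih => exact (pathVertices_subset_of_step hstep).trans ih

variable [DecidableEq A]

theorem pathVertices_toWord_mul_subset (x y : FreeGroup A) :
    pathVertices (x * y).toWord ⊆ pathVertices x.toWord ∪ x • pathVertices y.toWord := by
  have := pathVertices_subset_of_red (reduce.red (L := x.toWord ++ y.toWord))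
  rwa [← toWord_mul, pathVertices_append, mk_toWord] at this

theorem pathVertices_toWord_inv_subset (x : FreeGroup A) :
    pathVertices x⁻¹.toWord ⊆ x⁻¹ • pathVertices x.toWord := by
  simpa only [toWord_inv, mk_toWord] using pathVertices_invRev_subset x.toWord

theorem norm_lt_of_mem_pathVertices_toWord {x g : FreeGroup A}
    (hx : x ∈ pathVertices g.toWord) (hne : x ≠ g) : x.norm < g.norm := by
  obtain ⟨p, hp, rfl⟩ := hx
  refine norm_mk_le.trans_lt (hp.length_le.lt_of_ne fun hlen => hne ?_)
  rw [hp.eq_of_length hlen, mk_toWord]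

theorem mem_pathVertices_toWord_mul_of_isReduced {g : FreeGroup A} {L : List (A × Bool)}
    (h : IsReduced (g.toWord ++ L)) : g ∈ pathVertices (g * FreeGroup.mk L).toWord := by
  have hword : (g * FreeGroup.mk L).toWord = g.toWord ++ L := by
    rw [← h.reduce_eq, ← toWord_mk, ← mul_mk, mk_toWord]
  exact ⟨g.toWord, hword ▸ List.prefix_append _ _, mk_toWord⟩

theorem pathVertices_toWord_subset_closure_mul {S T : Set (FreeGroup A)} (h1T : 1 ∈ T)
    (hST : ∀ s ∈ S, pathVertices s.toWord ⊆ T) {h : FreeGroup A} (hh : h ∈ Subgroup.closure S) :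
    pathVertices h.toWord ⊆ Subgroup.closure S * T := by
  induction hh using Subgroup.closure_induction with
  | mem s hs => exact (hST s hs).trans (Set.subset_mul_right T (one_mem _))
  | one => simpa using Set.mul_mem_mul (one_mem (Subgroup.closure S)) h1T
  | mul x y hx _ ihx ihy =>
    refine (pathVertices_toWord_mul_subset x y).trans (Set.union_subset ihx ?_)
    rw [← smul_coe_mul_eq hx T]
    exact Set.smul_set_mono ihy
  | inv x hx ih =>
    refine (pathVertices_toWord_inv_subset x).trans ?_
    rw [← smul_coe_mul_eq (inv_mem hx) T]
    exact Set.smul_set_mono ih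

end PathVertices

section NormalSubgroup

variable {A : Type*}

theorem isReduced_invRev {L : List (A × Bool)} (h : IsReduced L) : IsReduced (invRev L) := by
  classical
  rw [isReduced_iff_reduce_eq, reduce_invRev, h.reduce_eq]

theorem isReduced_append_or_isReduced_append_invRev {W L : List (A × Bool)} (hW : IsReduced W)
    (hL : IsCyclicallyReduced L) : IsReduced (W ++ L) ∨ IsReduced (W ++ invRev L) := by
  -- If both products had a cancellation, the last letter of `W` would be inverse to the first
  -- letter of `L` and equal to the last letter of `L`, contrary to cyclic reducedness.
  rw [or_iff_not_imp_left]
  intro hWL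
  obtain ⟨x, hx, y, hy, hxy, hne⟩ :
      ∃ x ∈ W.getLast?, ∃ y ∈ L.head?, x.1 = y.1 ∧ x.2 ≠ y.2 := by
    by_contra! hjoin
    exact hWL (List.isChain_append.2 ⟨hW, hL.isReduced, hjoin⟩)
  refine List.isChain_append.2 ⟨hW, isReduced_invRev hL.isReduced, fun x' hx' z hz hxz => ?_⟩
  obtain rfl : x = x' := Option.mem_unique hx hx'
  obtain ⟨z, hzL, rfl⟩ : ∃ w ∈ L.getLast?, (w.1, !w.2) = z := by simpa [invRev] using hz
  have hzy : z.2 = y.2 := hL.2 z hzL y hy (hxz.symm.trans hxy)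
  rw [hzy]
  exact Bool.eq_not_of_ne hne

variable {N : Subgroup (FreeGroup A)} [N.Normal]

theorem exists_isCyclicallyReduced_mk_mem (hN : N ≠ ⊥) :
    ∃ L, IsCyclicallyReduced L ∧ FreeGroup.mk L ∈ N ∧ FreeGroup.mk L ≠ 1 := by
  classical
  obtain ⟨v, hv, hv1⟩ := N.bot_or_exists_ne_one.resolve_left hN
  set L := reduceCyclically v.toWord
  set c := FreeGroup.mk (reduceCyclically.conjugator v.toWord) with hc
  have hconj : v = c * FreeGroup.mk L * c⁻¹ := by
    rw [hc, inv_mk, mul_mk, mul_mk, reduceCyclically.conj_conjugator_reduceCyclically, mk_toWord]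
  refine ⟨L, reduceCyclically.isCyclicallyReduced isReduced_toWord, ?_, ?_⟩
  · rw [hconj] at hv
    simpa [mul_assoc] using Subgroup.Normal.conj_mem' ‹_› _ hv c
  · intro h
    exact hv1 (by simp [hconj, h])

theorem exists_mem_ne_one_mem_pathVertices_toWord_mul [DecidableEq A] (hN : N ≠ ⊥)
    (g : FreeGroup A) : ∃ u ∈ N, u ≠ 1 ∧ g ∈ pathVertices (g * u).toWord := by
  obtain ⟨L, hL, hLN, hL1⟩ := exists_isCyclicallyReduced_mk_mem hN
  rcases isReduced_append_or_isReduced_append_invRev (isReduced_toWord (x := g)) hL with h | h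
  · exact ⟨_, hLN, hL1, mem_pathVertices_toWord_mul_of_isReduced h⟩
  · refine ⟨_, inv_mem hLN, inv_ne_one.2 hL1, ?_⟩
    rw [inv_mk]
    exact mem_pathVertices_toWord_mul_of_isReduced h

end NormalSubgroup

section FiniteIndex

variable {A : Type*} {H : Subgroup (FreeGroup A)}

theorem coe_mul_eq_univ_of_pathVertices_subset [DecidableEq A] {T : Set (FreeGroup A)}
    (hcore : H.normalCore ≠ ⊥) (hT : ∀ h ∈ H, pathVertices h.toWord ⊆ H * T) :
    (H : Set (FreeGroup A)) * T = Set.univ := by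
  refine Set.eq_univ_of_forall fun g => ?_
  induction hk : g.norm using Nat.strong_induction_on generalizing g with
  | _ k ih =>
  obtain ⟨u, hu, hu1, hgu⟩ := exists_mem_ne_one_mem_pathVertices_toWord_mul hcore g
  set n := g * u * g⁻¹ with hn
  have hnH : n ∈ H := H.normalCore_le (H.normalCore_normal.conj_mem u hu g)
  have hn1 : n ≠ 1 := by simpa [hn] using hu1
  have hng : g * u = n * g := by simp [hn]
  rw [hng] at hgu
  rcases pathVertices_toWord_mul_subset n g hgu with hgn | hgn
  · exact hT n hnH hgn
  · rw [Set.mem_smul_set_iff_inv_smul_mem] at hgn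
    have hlt : (n⁻¹ • g).norm < k :=
      hk ▸ norm_lt_of_mem_pathVertices_toWord hgn (by simpa using hn1)
    rw [← smul_coe_mul_eq hnH T, Set.mem_smul_set_iff_inv_smul_mem]
    exact ih _ hlt _ rfl

theorem finiteIndex_of_fg_of_normalCore_ne_bot (hfg : H.FG) (hcore : H.normalCore ≠ ⊥) :
    H.FiniteIndex := by
  classical
  obtain ⟨S, rfl⟩ := hfg
  let T : Set (FreeGroup A) := insert 1 (⋃ s ∈ S, pathVertices s.toWord)
  have hT : T.Finite := (S.finite_toSet.biUnion fun s _ => finite_pathVertices s.toWord).insert 1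
  have hST : ∀ s ∈ (S : Set (FreeGroup A)), pathVertices s.toWord ⊆ T := fun s hs =>
    (Set.subset_biUnion_of_mem (u := fun s => pathVertices s.toWord) hs).trans
      (Set.subset_insert _ _)
  exact finiteIndex_of_coe_mul_eq_univ hT <| coe_mul_eq_univ_of_pathVertices_subset hcore
    fun _ hh => pathVertices_toWord_subset_closure_mul (Set.mem_insert _ _) hST hh

end FiniteIndex

theorem normal_fg_iff_finite_index_general {A : Type*} [Finite A]
    (H : Subgroup (FreeGroup A)) (hcore : H.normalCore ≠ ⊥) : H.FG ↔ H.index ≠ 0 := by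
  rw [← Subgroup.finiteIndex_iff]
  refine ⟨fun hfg => finiteIndex_of_fg_of_normalCore_ne_bot hfg hcore, fun _ => ?_⟩
  exact (Group.fg_iff_subgroup_fg H).1 inferInstance

/-- A nontrivial normal subgroup of a finitely generated free group is finitely
generated if and only if it has finite index. -/
theorem normal_fg_iff_finite_index {A : Type*} [Finite A]
    (N : Subgroup (FreeGroup A)) (hNormal : N.Normal) (hN : N ≠ ⊥) :
    N.FG ↔ N.index ≠ 0 := by
  rw [← N.normalCore_eq_self] at hN
  exact normal_fg_iff_finite_index_general N hN
end

section
/- Every nontrivial normal subgroup N of the free group FreeGroup ℕ of countably infinite rank is not finitely generated (equivalently, N has infinite rank). -/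
/-!
A finitely generated subgroup `N` of a free group of infinite rank involves only finitely many
letters, so some generator `a` does not occur in it. If `N` is normal and `x ∈ N`, then `a` does
not occur in `a * x * a⁻¹` either, so the image of `a * x * a⁻¹` under a homomorphism does not
depend on the image of `a`. Let the other generators act on the free group by left translation
and let `a` act by an arbitrary permutation `σ`: then the conjugate by `σ` of translation by `x`
does not depend on `σ`. Hence this translation is central in the symmetric group, which has
trivial center, and `x = 1`.
-/

open Subgroup

theorem exists_finset_le_closure_image_of_fg {G ι : Type*} [Group G] {f : ι → G}
    {H : Subgroup G} (hfg : H.FG) (hH : H ≤ closure (Set.range f)) :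
    ∃ s : Finset ι, H ≤ closure (f '' s) := by
  obtain ⟨T, rfl⟩ := hfg
  have directed : Directed (· ≤ ·) fun s : Finset ι ↦ closure (f '' s) :=
    Monotone.directed_le fun s t hst ↦ closure_mono (Set.image_mono (Finset.coe_subset.2 hst))
  have range_le : closure (Set.range f) ≤ ⨆ s : Finset ι, closure (f '' s) := by
    rw [closure_le]
    rintro _ ⟨i, rfl⟩
    exact mem_iSup_of_mem {i} (subset_closure ⟨i, by simp, rfl⟩)
  have subset_iUnion : (T : Set G) ⊆ ⋃ s : Finset ι, (closure (f '' s) : Set G) := by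
    rw [← coe_iSup_of_directed directed]
    exact (closure_le _).1 (hH.trans range_le)
  obtain ⟨s, hs⟩ := Directed.exists_mem_subset_of_finset_subset_biUnion
    (f := fun s : Finset ι ↦ (closure (f '' s) : Set G)) directed subset_iUnion
  exact ⟨s, (closure_le _).2 hs⟩

theorem center_perm_eq_bot {X : Type*} (hX : 3 ≤ ENat.card X) :
    center (Equiv.Perm X) = ⊥ := by
  classical
  refine (eq_bot_iff_forall _).2 fun σ hσ ↦ Equiv.ext fun x ↦ ?_
  by_contra hx : σ x ≠ x
  obtain ⟨z, hzx, hzσ⟩ := ENat.exists_ne_ne_of_three_le hX x (σ x)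
  have hcomm : Equiv.swap (σ x) z (σ x) = σ (Equiv.swap (σ x) z x) :=
    Equiv.congr_fun (mem_center_iff.1 hσ (Equiv.swap (σ x) z)) x
  rw [Equiv.swap_apply_left, Equiv.swap_apply_of_ne_of_ne hx.symm hzx.symm] at hcomm
  exact hzσ hcomm

section FreeGroupLetters

variable {α : Type*} {s : Set α} {a : α} {x : FreeGroup α}

theorem map_mem_center_of_conj_mem_closure_image_of {G : Type*} [Group G]
    (φ : FreeGroup α →* G) (ha : a ∉ s) (hx : x ∈ closure (FreeGroup.of '' s))
    (hconj : FreeGroup.of a * x * (FreeGroup.of a)⁻¹ ∈ closure (FreeGroup.of '' s)) :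
    φ x ∈ center G := by
  classical
  let ψ (g : G) : FreeGroup α →* G := FreeGroup.lift (Function.update (φ ∘ FreeGroup.of) a g)
  have ψ_of_self (g : G) : ψ g (FreeGroup.of a) = g := by simp [ψ]
  have ψ_eqOn (g : G) : Set.EqOn (ψ g) φ (closure (FreeGroup.of '' s)) := by
    refine MonoidHom.eqOn_closure ?_
    rintro _ ⟨b, hb, rfl⟩
    simp [ψ, ne_of_mem_of_not_mem hb ha]
  have map_conj (g : G) : g * φ x * g⁻¹ = φ (FreeGroup.of a * x * (FreeGroup.of a)⁻¹) := by
    rw [← ψ_eqOn g hconj, map_mul, map_mul, map_inv, ψ_of_self, ψ_eqOn g hx]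
  refine mem_center_iff.2 fun g ↦ mul_inv_eq_iff_eq_mul.1 ?_
  calc g * φ x * g⁻¹ = 1 * φ x * 1⁻¹ := (map_conj g).trans (map_conj 1).symm
    _ = φ x := by simp

theorem eq_one_of_conj_mem_closure_image_of (ha : a ∉ s)
    (hx : x ∈ closure (FreeGroup.of '' s))
    (hconj : FreeGroup.of a * x * (FreeGroup.of a)⁻¹ ∈ closure (FreeGroup.of '' s)) :
    x = 1 := by
  have : Nonempty α := ⟨a⟩
  have hcenter : MulAction.toPermHom (FreeGroup α) (FreeGroup α) x ∈ center _ :=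
    map_mem_center_of_conj_mem_closure_image_of _ ha hx hconj
  rw [center_perm_eq_bot (by simp), mem_bot] at hcenter
  exact (injective_iff_map_eq_one (MulAction.toPermHom _ _)).1 MulAction.toPerm_injective x hcenter

end FreeGroupLetters

theorem normal_subgroup_of_freeGroupNat_not_fg_general {α : Type*} [Infinite α]
    (N : Subgroup (FreeGroup α)) (hNormal : N.Normal) (hN : N ≠ ⊥) : ¬ N.FG := by
  intro hfg
  obtain ⟨s, hs⟩ : ∃ s : Finset α, N ≤ closure (FreeGroup.of '' s) :=
    exists_finset_le_closure_image_of_fg hfg (by simp)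
  obtain ⟨a, ha⟩ : ∃ a, a ∉ s := Infinite.exists_notMem_finset s
  refine hN ((eq_bot_iff_forall N).2 fun x hx ↦ ?_)
  exact eq_one_of_conj_mem_closure_image_of ha (hs hx) (hs (hNormal.conj_mem x hx _))

/-- Every nontrivial normal subgroup of the free group of countably infinite rank
is not finitely generated. -/
theorem normal_subgroup_of_freeGroupNat_not_fg (N : Subgroup (FreeGroup ℕ))
    (hNormal : N.Normal) (hN : N ≠ ⊥) :
    ¬ N.FG :=
  normal_subgroup_of_freeGroupNat_not_fg_general N hNormal hN
end

section
/- For every nontrivial element w ≠ 1 of a free group FreeGroup A, there exists a subgroup H of FreeGroup A of index exactly |w| + 1 such that w ∉ H, where |w| denotes the length of the reduced word representing w (the length of FreeGroup.toWord w). -/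
/-!
Read the reduced word of `w` as a path with `|w| + 1` vertices. Reducedness says precisely that
each generator labels a partial injection of the vertices, and on a finite set a partial injection
extends to a permutation. The resulting action of the free group is transitive, because suffixes of
the word carry the last vertex to every other one, and `w` itself carries the last vertex to the
first. The stabilizer of the last vertex is therefore the required subgroup.
-/

theorem exists_perm_of_biUnique {X : Type*} [Finite X] {R : X → X → Prop}
    (hR : Relator.BiUnique R) : ∃ σ : Equiv.Perm X, ∀ p q, R p q → σ p = q := by
  classical
  choose f hf using fun p : {p // ∃ q, R p q} => p.2
  choose g hg using fun q : {q // ∃ p, R p q} => q.2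
  let e : {p // ∃ q, R p q} ≃ {q // ∃ p, R p q} :=
    { toFun := fun p => ⟨f p, p, hf p⟩
      invFun := fun q => ⟨g q, q, hg q⟩
      left_inv := fun p => Subtype.ext (hR.1 (hg _) (hf p))
      right_inv := fun q => Subtype.ext (hR.2 (hf _) (hg q)) }
  refine ⟨e.extendSubtype, fun p q hpq => ?_⟩
  rw [e.extendSubtype_apply_of_mem p ⟨q, hpq⟩]
  exact hR.2 (hf _) hpq

section

variable {A : Type*} {L : List (A × Bool)}

theorem getElem?_succ_ne_inv_of_isReduced (hL : FreeGroup.IsReduced L) {k : ℕ} {a : A} {b : Bool}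
    (hk : L[k]? = some (a, b)) : L[k + 1]? ≠ some (a, !b) := by
  intro hk'
  obtain ⟨_, hLk⟩ := List.getElem?_eq_some_iff.1 hk
  obtain ⟨hlt, hLk'⟩ := List.getElem?_eq_some_iff.1 hk'
  have hsign := List.isChain_iff_getElem.1 hL k hlt
  rw [hLk, hLk'] at hsign
  simpa using hsign rfl

/-- The edges of the path spelled by `L`, whose vertices `0, …, L.length` are the positions between
letters: `WordEdge L x p q` says that the letter `x` must carry `p` to `q`. The path is traversed
from right to left, since a product in a group acting on the left applies its last factor first. A
letter `L[k]` thus carries `k + 1` to `k`, and its inverse carries `k` to `k + 1`. -/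
def WordEdge (L : List (A × Bool)) (x : A × Bool) (p q : Fin (L.length + 1)) : Prop :=
  (L[q.val]? = some x ∧ p.val = q.val + 1) ∨ (L[p.val]? = some (x.1, !x.2) ∧ q.val = p.val + 1)

namespace WordEdge

theorem getElem_succ_castSucc (i : Fin L.length) : WordEdge L L[i] i.succ i.castSucc :=
  Or.inl ⟨by simp, by simp⟩

theorem inv {a : A} {b : Bool} {p q : Fin (L.length + 1)} (h : WordEdge L (a, b) p q) :
    WordEdge L (a, !b) q p := by
  simpa [WordEdge, or_comm] using h

theorem rightUnique (hL : FreeGroup.IsReduced L) (x : A × Bool) :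
    Relator.RightUnique (WordEdge L x) := by
  rintro p q q' (⟨hq, hpq⟩ | ⟨hp, hpq⟩) (⟨hq', hpq'⟩ | ⟨hp', hpq'⟩)
  · ext; omega
  · exact absurd (hpq ▸ hp') (getElem?_succ_ne_inv_of_isReduced hL hq)
  · exact absurd (hpq' ▸ hp) (getElem?_succ_ne_inv_of_isReduced hL hq')
  · ext; omega

theorem biUnique (hL : FreeGroup.IsReduced L) (x : A × Bool) : Relator.BiUnique (WordEdge L x) :=
  ⟨fun _ _ _ h h' => rightUnique hL _ h.inv h'.inv, rightUnique hL x⟩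

theorem lift_mk_singleton_apply {σ : A → Equiv.Perm (Fin (L.length + 1))}
    (hσ : ∀ a p q, WordEdge L (a, true) p q → σ a p = q) {x : A × Bool}
    {p q : Fin (L.length + 1)} (h : WordEdge L x p q) :
    FreeGroup.lift σ (FreeGroup.mk [x]) p = q := by
  obtain ⟨a, _ | _⟩ := x
  · have hqp : σ a q = p := hσ a q p h.inv
    simp [← hqp]
  · simpa using hσ a p q h

end WordEdge

theorem exists_mulAction_fin_of_isReduced (hL : FreeGroup.IsReduced L) :
    ∃ _ : MulAction (FreeGroup A) (Fin (L.length + 1)),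
      ∀ i : Fin L.length, FreeGroup.mk [L[i]] • i.succ = i.castSucc := by
  choose σ hσ using fun a => exists_perm_of_biUnique (WordEdge.biUnique hL (a, true))
  exact ⟨MulAction.compHom _ (FreeGroup.lift σ),
    fun i => WordEdge.lift_mk_singleton_apply hσ (WordEdge.getElem_succ_castSucc i)⟩

theorem mk_drop_smul_last {X : Type*} [MulAction (FreeGroup A) X] {v : Fin (L.length + 1) → X}
    (hv : ∀ i : Fin L.length, FreeGroup.mk [L[i]] • v i.succ = v i.castSucc)
    (k : Fin (L.length + 1)) : FreeGroup.mk (L.drop k) • v (Fin.last L.length) = v k := by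
  induction k using Fin.reverseInduction with
  | last => simp [← FreeGroup.one_eq_mk]
  | cast i ih =>
    have hdrop : L.drop i.castSucc = [L[i]] ++ L.drop i.succ := List.drop_eq_getElem_cons i.isLt
    rw [hdrop, ← FreeGroup.mul_mk, mul_smul, ih, hv]

end

/-- For every nontrivial element `w` of a free group there is a subgroup of index
`|w| + 1` not containing `w`, where `|w|` is the length of the reduced word of `w`. -/
theorem exists_subgroup_of_index_length_add_one_avoiding {A : Type*} [DecidableEq A]
    (w : FreeGroup A) (hw : w ≠ 1) :
    ∃ H : Subgroup (FreeGroup A),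
      H.index = (FreeGroup.toWord w).length + 1 ∧ w ∉ H := by
  obtain ⟨_, hact⟩ := exists_mulAction_fin_of_isReduced (FreeGroup.isReduced_toWord (x := w))
  have hsuffix := mk_drop_smul_last (v := id) hact
  have : MulAction.IsPretransitive (FreeGroup A) (Fin (w.toWord.length + 1)) :=
    (MulAction.isPretransitive_iff_base (Fin.last _)).2 fun k => ⟨_, hsuffix k⟩
  refine ⟨MulAction.stabilizer (FreeGroup A) (Fin.last w.toWord.length), ?_, fun hmem => hw ?_⟩
  · rw [MulAction.index_stabilizer_of_transitive, Nat.card_fin]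
  · have hmove : w • Fin.last w.toWord.length = 0 := by
      simpa [FreeGroup.mk_toWord] using hsuffix 0
    have hlast : Fin.last w.toWord.length = 0 :=
      (MulAction.mem_stabilizer_iff.1 hmem).symm.trans hmove
    simpa [Fin.ext_iff] using hlast
end

section
/- Free groups are residually finite: for every element w ≠ 1 of FreeGroup A there exists a normal subgroup N of FreeGroup A of finite index with w ∉ N (equivalently, there is a homomorphism from FreeGroup A to a finite group whose image of w is nontrivial). -/
/-!
To compute the action of a word `w` on a point `x`, one only looks at the finitely many points
visited while the letters of `w` are applied one after the other. On a finite set `S` containing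
these points each generator acts as a partial injection, which can be completed to a permutation
of `S`; since the group is free, any choice of completions defines an action on `S`, and `w` still
sends `x` to `w • x`. For the left regular action and `x = 1` this says that `w ≠ 1` acts
nontrivially on a finite set.
-/

section PartialPermutations

variable {X : Type*} {S : Finset X}

/-- `σ` completes the partial injection that `f` induces on the finite set `S`, i.e. the one defined
at those points of `S` that `f` keeps in `S`. -/
def CompletesOn (f : Equiv.Perm X) (σ : Equiv.Perm S) : Prop :=
  ∀ x : S, f x ∈ S → (σ x : X) = f x

theorem exists_completesOn (f : Equiv.Perm X) (S : Finset X) :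
    ∃ σ : Equiv.Perm S, CompletesOn f σ :=
  Set.MapsTo.exists_equiv_extend_of_card_eq (s := {x : S | f x ∈ S}) (f := fun x : S ↦ f x)
    (Fintype.card_coe S) (fun _ hx ↦ hx) (f.injective.comp Subtype.val_injective).injOn

theorem CompletesOn.inv {f : Equiv.Perm X} {σ : Equiv.Perm S} (h : CompletesOn f σ) :
    CompletesOn f⁻¹ σ⁻¹ := by
  intro x hx
  have apply_preimage : σ ⟨f⁻¹ x, hx⟩ = x := by
    ext
    simpa using h ⟨f⁻¹ x, hx⟩ (by simp)
  rw [Equiv.Perm.inv_eq_iff_eq.mpr apply_preimage.symm]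

end PartialPermutations

section FreeGroupActions

variable {A X : Type*}

theorem exists_finset_forall_completesOn_apply_eq (φ : FreeGroup A →* Equiv.Perm X)
    (w : FreeGroup A) (x : X) :
    ∃ T : Finset X, ∀ S, T ⊆ S → ∀ ψ : FreeGroup A →* Equiv.Perm S,
      (∀ a, CompletesOn (φ (.of a)) (ψ (.of a))) → ∀ hx : x ∈ S, (ψ w ⟨x, hx⟩ : X) = φ w x := by
  classical
  induction w using FreeGroup.induction_on generalizing x with
  | C1 => exact ⟨∅, by simp⟩
  | of a =>
    refine ⟨{φ (.of a) x}, fun S hS ψ hψ hx ↦ ?_⟩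
    exact hψ a ⟨x, hx⟩ (Finset.singleton_subset_iff.mp hS)
  | inv_of a _ =>
    refine ⟨{(φ (.of a))⁻¹ x}, fun S hS ψ hψ hx ↦ ?_⟩
    rw [map_inv, map_inv]
    exact (hψ a).inv ⟨x, hx⟩ (Finset.singleton_subset_iff.mp hS)
  | mul u v ihu ihv =>
    obtain ⟨Tv, hTv⟩ := ihv x
    obtain ⟨Tu, hTu⟩ := ihu (φ v x)
    refine ⟨Tu ∪ Tv, fun S hS ψ hψ hx ↦ ?_⟩
    obtain ⟨hTuS, hTvS⟩ := Finset.union_subset_iff.mp hS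
    have apply_v : (ψ v ⟨x, hx⟩ : X) = φ v x := hTv S hTvS ψ hψ hx
    have mem_S : φ v x ∈ S := apply_v ▸ (ψ v ⟨x, hx⟩).2
    calc (ψ (u * v) ⟨x, hx⟩ : X)
        = ψ u (ψ v ⟨x, hx⟩) := by rw [map_mul, Equiv.Perm.mul_apply]
      _ = ψ u ⟨φ v x, mem_S⟩ := by rw [Subtype.ext (a2 := ⟨φ v x, mem_S⟩) apply_v]
      _ = φ u (φ v x) := hTu S hTuS ψ hψ mem_S
      _ = φ (u * v) x := by rw [map_mul, Equiv.Perm.mul_apply]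

theorem exists_hom_perm_finset_apply_eq (φ : FreeGroup A →* Equiv.Perm X)
    (w : FreeGroup A) (x : X) :
    ∃ (S : Finset X) (hx : x ∈ S) (ψ : FreeGroup A →* Equiv.Perm S),
      (ψ w ⟨x, hx⟩ : X) = φ w x := by
  classical
  obtain ⟨T, hT⟩ := exists_finset_forall_completesOn_apply_eq φ w x
  choose σ hσ using fun a ↦ exists_completesOn (φ (.of a)) (insert x T)
  have hx : x ∈ insert x T := Finset.mem_insert_self x T
  refine ⟨insert x T, hx, FreeGroup.lift σ, ?_⟩
  refine hT _ (Finset.subset_insert x T) _ (fun a ↦ ?_) hx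
  rw [FreeGroup.lift_apply_of]
  exact hσ a

end FreeGroupActions

/-- Free groups are residually finite: every nontrivial element is avoided by some
normal subgroup of finite index. -/
theorem freeGroup_residually_finite {A : Type*} (w : FreeGroup A) (hw : w ≠ 1) :
    ∃ N : Subgroup (FreeGroup A), N.Normal ∧ N.index ≠ 0 ∧ w ∉ N := by
  obtain ⟨S, one_mem, ψ, hψ⟩ :=
    exists_hom_perm_finset_apply_eq (MulAction.toPermHom (FreeGroup A) (FreeGroup A)) w 1
  have apply_one : (ψ w ⟨1, one_mem⟩ : FreeGroup A) = w := by simpa using hψ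
  refine ⟨ψ.ker, inferInstance, Subgroup.FiniteIndex.index_ne_zero, fun mem_ker ↦ hw ?_⟩
  rw [← apply_one, MonoidHom.mem_ker.mp mem_ker, Equiv.Perm.one_apply]
end

section
/- Let H be a finitely generated subgroup of a free group FreeGroup A. Then there exists a subgroup K of FreeGroup A of finite index such that H is a free factor of K (Marshall Hall's theorem). -/
/-- `H` is a free factor of `K`: `H ≤ K` and `K` is the internal free product of `H`
and some subgroup `L ≤ K`, i.e. the canonical homomorphism `H ∗ L →* K` induced by
the inclusions is bijective. -/
def IsFreeFactor {G : Type*} [Group G] (H K : Subgroup G) : Prop :=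
  ∃ (hHK : H ≤ K) (L : Subgroup G) (hLK : L ≤ K),
    Function.Bijective
      ⇑(Monoid.Coprod.lift (Subgroup.inclusion hHK) (Subgroup.inclusion hLK))

/-!
In the coset graph of `H`, the loops spelling a finite generating set visit a finite set `S` of
cosets. On `S` each generator of the free group is a partial injection, hence extends to a
permutation, and `K` is the stabilizer of the base coset in the resulting action on `S`.

To see that `H` is a free factor of `K`, choose paths `t s` inside `S` from the base coset to each
`s ∈ S`. Each edge then has a Schreier generator, which lies in `H` exactly for the edges of the
coset graph; let `L` be generated by the others. Label every edge by its Schreier generator, taken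
in the abstract free product `H ∗ L`. Multiplying labels along loops is a homomorphism `K →* H ∗ L`
with `H ∗ L →* K` as left inverse, by telescoping. It maps `H` to the first factor, because `H` is
generated by loops inside the coset graph, and `L` to the second, because the paths `t s` have
trivial label; so it is the two-sided inverse of `H ∗ L →* K`.
-/

namespace MarshallHall

open Equiv (Perm)
open Monoid (Coprod)

section FreeFactorCriterion

variable {G : Type*} [Group G] {H L K : Subgroup G}

theorem eq_inl_of_mem_range {x : Coprod H L} (hx : x ∈ (Coprod.inl : H →* Coprod H L).range)
    {h : H} (hxh : Coprod.lift H.subtype L.subtype x = h) : x = Coprod.inl h := by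
  obtain ⟨y, rfl⟩ := hx
  rw [Coprod.lift_apply_inl] at hxh
  exact congrArg _ (Subtype.ext hxh)

theorem eq_inr_of_mem_range {x : Coprod H L} (hx : x ∈ (Coprod.inr : L →* Coprod H L).range)
    {l : L} (hxl : Coprod.lift H.subtype L.subtype x = l) : x = Coprod.inr l := by
  obtain ⟨y, rfl⟩ := hx
  rw [Coprod.lift_apply_inr] at hxl
  exact congrArg _ (Subtype.ext hxl)

theorem isFreeFactor_of_section (hHK : H ≤ K) (hLK : L ≤ K) (φ : K →* Coprod H L)
    (hφ : ∀ k, Coprod.lift H.subtype L.subtype (φ k) = k)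
    (hφH : ∀ h : H, φ (Subgroup.inclusion hHK h) ∈ (Coprod.inl : H →* Coprod H L).range)
    (hφL : ∀ l : L, φ (Subgroup.inclusion hLK l) ∈ (Coprod.inr : L →* Coprod H L).range) :
    IsFreeFactor H K := by
  refine ⟨hHK, L, hLK, ?_⟩
  set ι := Coprod.lift (Subgroup.inclusion hHK) (Subgroup.inclusion hLK) with hι
  have subtype_comp_ι : K.subtype.comp ι = Coprod.lift H.subtype L.subtype := by
    ext <;> simp [hι]
  have φ_comp_ι : φ.comp ι = MonoidHom.id _ := by
    ext x
    · simpa [hι] using eq_inl_of_mem_range (hφH x) (hφ _)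
    · simpa [hι] using eq_inr_of_mem_range (hφL x) (hφ _)
  refine Function.bijective_iff_has_inverse.2 ⟨φ, DFunLike.congr_fun φ_comp_ι, fun k => ?_⟩
  exact Subtype.ext ((DFunLike.congr_fun subtype_comp_ι (φ k)).trans (hφ k))

end FreeFactorCriterion

section Holonomy

variable {A S X : Type*} [Group X] (σ : A → Perm S) (c : A → S → X)

/-- Let `FreeGroup A` act on `S` through `σ`, and regard `c a s` as the label of the edge
`(σ a)⁻¹ s ⟶ s` of the Schreier graph. Then `holonomy σ c g s` is the product of the labels along
the path spelled by `g` and *ending* at `s`. It is encoded as the base coordinate of a homomorphism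
to the unrestricted wreath product of `X` by `Perm S`. -/
def holonomy (g : FreeGroup A) : S → X :=
  (FreeGroup.lift (fun a => (⟨c a, σ a⟩ : (S → X) ⋊[mulAutArrow] Perm S)) g).left

theorem holonomy_one (s : S) : holonomy σ c 1 s = 1 := by
  simp [holonomy]

theorem holonomy_of (a : A) (s : S) : holonomy σ c (FreeGroup.of a) s = c a s := by
  simp [holonomy]

theorem holonomy_mul (g h : FreeGroup A) (s : S) :
    holonomy σ c (g * h) s = holonomy σ c g s * holonomy σ c h ((FreeGroup.lift σ g)⁻¹ s) := by
  have right_eq : SemidirectProduct.rightHom.comp (FreeGroup.lift fun a =>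
      (⟨c a, σ a⟩ : (S → X) ⋊[mulAutArrow] Perm S)) = FreeGroup.lift σ := by
    ext1 a; simp
  simp only [holonomy, map_mul, SemidirectProduct.mul_left, Pi.mul_apply, ← right_eq]
  rfl

theorem holonomy_inv (g : FreeGroup A) (s : S) :
    holonomy σ c g⁻¹ s = (holonomy σ c g (FreeGroup.lift σ g s))⁻¹ := by
  have h := holonomy_mul σ c g g⁻¹ (FreeGroup.lift σ g s)
  rw [mul_inv_cancel, holonomy_one, Perm.inv_def, Equiv.symm_apply_apply] at h
  exact eq_inv_of_mul_eq_one_right h.symm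

theorem map_holonomy (f : X →* FreeGroup A) (t : S → FreeGroup A)
    (hc : ∀ a s, f (c a s) = (t s)⁻¹ * FreeGroup.of a * t ((σ a)⁻¹ s)) (g : FreeGroup A) (s : S) :
    f (holonomy σ c g s) = (t s)⁻¹ * g * t ((FreeGroup.lift σ g)⁻¹ s) := by
  induction g using FreeGroup.induction_on generalizing s with
  | C1 => simp [holonomy_one]
  | of a => simp [holonomy_of, hc]
  | inv_of a _ => simp [holonomy_inv, holonomy_of, hc, mul_assoc]
  | mul g h ihg ihh => simp [holonomy_mul, ihg, ihh, mul_assoc]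

/-- The point stabilizer of `b` in the action of `FreeGroup A` on `S` through `σ`. -/
def pointStabilizer (b : S) : Subgroup (FreeGroup A) :=
  (MulAction.stabilizer (Perm S) b).comap (FreeGroup.lift σ)

variable {σ} in
theorem mem_pointStabilizer {b : S} {g : FreeGroup A} :
    g ∈ pointStabilizer σ b ↔ FreeGroup.lift σ g b = b :=
  Iff.rfl

theorem index_pointStabilizer_ne_zero [Finite S] (b : S) : (pointStabilizer σ b).index ≠ 0 := by
  rw [pointStabilizer, Subgroup.index_comap]
  exact Subgroup.FiniteIndex.index_ne_zero

/-- Holonomy along loops at `b`, as a homomorphism. -/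
def loopHolonomy (b : S) : pointStabilizer σ b →* X where
  toFun g := holonomy σ c g b
  map_one' := holonomy_one σ c b
  map_mul' g h := by
    rw [Subgroup.coe_mul, holonomy_mul, Perm.inv_eq_iff_eq.2 (mem_pointStabilizer.1 g.2).symm]

/-- `g` spells a path from `s` to `s'` whose holonomy lies in the subgroup `N`. -/
def IsPath (N : Subgroup X) (g : FreeGroup A) (s s' : S) : Prop :=
  FreeGroup.lift σ g s = s' ∧ holonomy σ c g s' ∈ N

namespace IsPath

variable {σ c} {N N' : Subgroup X} {g h : FreeGroup A} {s s' s'' : S}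

theorem mono (hN : N ≤ N') (hg : IsPath σ c N g s s') : IsPath σ c N' g s s' :=
  ⟨hg.1, hN hg.2⟩

theorem one : IsPath σ c N 1 s s :=
  ⟨by simp, by simp [holonomy_one, N.one_mem]⟩

theorem of {a : A} (hs : σ a s = s') (hc : c a s' ∈ N) : IsPath σ c N (FreeGroup.of a) s s' :=
  ⟨by simpa using hs, by rwa [holonomy_of]⟩

theorem mul (hg : IsPath σ c N g s' s'') (hh : IsPath σ c N h s s') :
    IsPath σ c N (g * h) s s'' := by
  obtain ⟨rfl, hh⟩ := hh
  obtain ⟨rfl, hg⟩ := hg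
  refine ⟨by simp, ?_⟩
  rw [holonomy_mul, Perm.inv_def, Equiv.symm_apply_apply]
  exact N.mul_mem hg hh

theorem inv (hg : IsPath σ c N g s s') : IsPath σ c N g⁻¹ s' s := by
  obtain ⟨rfl, hg⟩ := hg
  refine ⟨by simp, ?_⟩
  rw [holonomy_inv]
  exact N.inv_mem hg

end IsPath

/-- The loops at `b` whose holonomy lies in `N`. -/
def loopSubgroup (N : Subgroup X) (b : S) : Subgroup (FreeGroup A) where
  carrier := {g | IsPath σ c N g b b}
  one_mem' := .one
  mul_mem' := .mul
  inv_mem' := .inv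

end Holonomy

section SchreierLabel

variable {A S : Type*} (H : Subgroup (FreeGroup A)) (σ : A → Perm S) (t : S → FreeGroup A)

/-- The Schreier generator of the edge `(σ a)⁻¹ s ⟶ s`, where `t s` is thought of as a path from the
base point to `s`. -/
def schreierGenerator (a : A) (s : S) : FreeGroup A :=
  (t s)⁻¹ * FreeGroup.of a * t ((σ a)⁻¹ s)

/-- The candidate for a free complement of `H`: the subgroup generated by the Schreier generators
lying outside `H`. -/
def schreierComplement : Subgroup (FreeGroup A) :=
  Subgroup.closure {g | g ∉ H ∧ ∃ a s, schreierGenerator σ t a s = g}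

open Classical in
/-- The Schreier generators, seen as elements of the free product of `H` and its candidate
complement. -/
noncomputable def schreierLabel (a : A) (s : S) : Coprod H (schreierComplement H σ t) :=
  if h : schreierGenerator σ t a s ∈ H then Coprod.inl ⟨_, h⟩
  else Coprod.inr ⟨_, Subgroup.subset_closure ⟨h, a, s, rfl⟩⟩

variable {H σ t}

theorem schreierLabel_mem_range_inl {a : A} {s : S} (h : schreierGenerator σ t a s ∈ H) :
    schreierLabel H σ t a s ∈ (Coprod.inl : H →* Coprod H (schreierComplement H σ t)).range := by
  rw [schreierLabel, dif_pos h]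
  exact ⟨_, rfl⟩

theorem schreierLabel_mem_range_inr {a : A} {s : S} (h : schreierGenerator σ t a s ∉ H) :
    schreierLabel H σ t a s ∈
      (Coprod.inr : schreierComplement H σ t →* Coprod H (schreierComplement H σ t)).range := by
  rw [schreierLabel, dif_neg h]
  exact ⟨_, rfl⟩

theorem lift_subtype_schreierLabel (a : A) (s : S) :
    Coprod.lift H.subtype (schreierComplement H σ t).subtype (schreierLabel H σ t a s) =
      schreierGenerator σ t a s := by
  by_cases h : schreierGenerator σ t a s ∈ H <;> simp [schreierLabel, h]

theorem lift_subtype_holonomy_schreierLabel (g : FreeGroup A) (s : S) :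
    Coprod.lift H.subtype (schreierComplement H σ t).subtype
        (holonomy σ (schreierLabel H σ t) g s) =
      (t s)⁻¹ * g * t ((FreeGroup.lift σ g)⁻¹ s) :=
  map_holonomy σ _ _ t lift_subtype_schreierLabel g s

variable {b : S}

theorem isPath_bot_of_isPath_range_inl (hb : t b = 1) {s : S}
    (ht : IsPath σ (schreierLabel H σ t) Coprod.inl.range (t s) b s) :
    IsPath σ (schreierLabel H σ t) ⊥ (t s) b s := by
  refine ⟨ht.1, Subgroup.mem_bot.2 ?_⟩
  rw [eq_inl_of_mem_range (h := 1) ht.2, map_one]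
  rw [lift_subtype_holonomy_schreierLabel, Perm.inv_eq_iff_eq.2 ht.1.symm, hb]
  simp

theorem schreierComplement_le_loopSubgroup
    (ht : ∀ s, IsPath σ (schreierLabel H σ t) ⊥ (t s) b s) :
    schreierComplement H σ t ≤ loopSubgroup σ (schreierLabel H σ t) Coprod.inr.range b := by
  refine (Subgroup.closure_le _).2 ?_
  rintro _ ⟨hgH, a, s, rfl⟩
  have edge : IsPath σ (schreierLabel H σ t) Coprod.inr.range (FreeGroup.of a) ((σ a)⁻¹ s) s :=
    .of (by simp) (schreierLabel_mem_range_inr hgH)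
  exact (((ht s).mono bot_le).inv.mul edge).mul ((ht _).mono bot_le)

theorem isFreeFactor_pointStabilizer (hb : t b = 1)
    (ht : ∀ s, IsPath σ (schreierLabel H σ t) Coprod.inl.range (t s) b s)
    (hH : H ≤ loopSubgroup σ (schreierLabel H σ t) Coprod.inl.range b) :
    IsFreeFactor H (pointStabilizer σ b) := by
  have hL := schreierComplement_le_loopSubgroup fun s => isPath_bot_of_isPath_range_inl hb (ht s)
  refine isFreeFactor_of_section (fun h hh => (hH hh).1) (fun l hl => (hL hl).1)
    (loopHolonomy σ (schreierLabel H σ t) b) (fun k => ?_) (fun h => (hH h.2).2)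
    (fun l => (hL l.2).2)
  have k_fixes_b : (FreeGroup.lift σ k)⁻¹ b = b :=
    Perm.inv_eq_iff_eq.2 (mem_pointStabilizer.1 k.2).symm
  calc _ = (t b)⁻¹ * k * t ((FreeGroup.lift σ k)⁻¹ b) := lift_subtype_holonomy_schreierLabel _ _
    _ = k := by simp [k_fixes_b, hb]

end SchreierLabel

section CosetGraph

variable {A : Type*} {H : Subgroup (FreeGroup A)} {S : Set (FreeGroup A ⧸ H)}

/-- The path spelled by the word `w` and starting at the coset `H` visits only cosets in `S`.
Letters act from the left, so the vertices on the path correspond to the suffixes of `w`. -/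
def StaysIn (S : Set (FreeGroup A ⧸ H)) (w : List (A × Bool)) : Prop :=
  ∀ u, u <:+ w → (FreeGroup.mk u : FreeGroup A ⧸ H) ∈ S

theorem StaysIn.of_suffix {u w : List (A × Bool)} (hw : StaysIn S w) (hu : u <:+ w) :
    StaysIn S u :=
  fun _ hv => hw _ (hv.trans hu)

theorem exists_perm_extending_smul {G α : Type*} [Group G] [MulAction G α] (g : G) (S : Set α)
    [Finite S] : ∃ σ : Perm S, ∀ s s' : S, g • (s : α) = s' → σ s = s' := by
  have := Fintype.ofFinite S
  obtain ⟨e, he⟩ := Set.MapsTo.exists_equiv_extend_of_card_eq (Set.toFinset_card S).symm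
    (s := {s : S | g • (s : α) ∈ S}) (f := fun s => g • (s : α)) (fun s hs => by simpa using hs)
    ((MulAction.injective g).comp Subtype.val_injective).injOn
  refine ⟨e.trans (Equiv.subtypeEquivRight fun _ => Set.mem_toFinset), fun s s' hs => ?_⟩
  have g_smul_mem : g • (s : α) ∈ S := hs ▸ s'.2
  exact Subtype.ext ((he s g_smul_mem).trans hs)

/-- Each `σ a` extends the partial permutation of the set `S` of cosets given by left translation by
the generator `a`, i.e. `σ` completes the full subgraph of the coset graph on `S`. -/
def ExtendsTranslation (σ : A → Perm S) : Prop :=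
  ∀ a (s s' : S), FreeGroup.of a • s.1 = s'.1 → σ a s = s'

variable {σ : A → Perm S} {t : S → FreeGroup A}

theorem isPath_of_smul_eq (hσ : ExtendsTranslation σ)
    (ht : ∀ s, (t s : FreeGroup A ⧸ H) = s) {a : A} {s s' : S}
    (hs : FreeGroup.of a • s.1 = s'.1) :
    IsPath σ (schreierLabel H σ t) Coprod.inl.range (FreeGroup.of a) s s' := by
  have hσs := hσ a s s' hs
  have σ_inv : (σ a)⁻¹ s' = s := Perm.inv_eq_iff_eq.2 hσs.symm
  have same_coset : (t s' : FreeGroup A ⧸ H) = (FreeGroup.of a * t s : FreeGroup A) := by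
    rw [ht, ← hs, ← ht s]
    rfl
  refine .of hσs (schreierLabel_mem_range_inl ?_)
  rw [schreierGenerator, σ_inv, mul_assoc]
  exact QuotientGroup.eq.1 same_coset

theorem isPath_mk_singleton_of_smul_eq (hσ : ExtendsTranslation σ)
    (ht : ∀ s, (t s : FreeGroup A ⧸ H) = s) {x : A × Bool} {s s' : S}
    (hs : FreeGroup.mk [x] • s.1 = s'.1) :
    IsPath σ (schreierLabel H σ t) Coprod.inl.range (FreeGroup.mk [x]) s s' := by
  obtain ⟨a, _ | _⟩ := x
  · have hs' : FreeGroup.of a • s'.1 = s.1 := by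
      rw [← hs]
      exact smul_inv_smul (FreeGroup.of a) s.1
    exact (isPath_of_smul_eq hσ ht hs').inv
  · exact isPath_of_smul_eq hσ ht hs

theorem StaysIn.isPath (hσ : ExtendsTranslation σ)
    (ht : ∀ s, (t s : FreeGroup A ⧸ H) = s) {b s : S} (hb : b.1 = (1 : FreeGroup A))
    {w : List (A × Bool)} (hw : StaysIn S w) (hws : (FreeGroup.mk w : FreeGroup A ⧸ H) = s) :
    IsPath σ (schreierLabel H σ t) Coprod.inl.range (FreeGroup.mk w) b s := by
  induction w generalizing s with
  | nil =>
    obtain rfl : b = s := Subtype.ext (hb.trans hws)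
    exact .one
  | cons x w ih =>
    have hw' : StaysIn S w := hw.of_suffix (List.suffix_cons x w)
    have step : FreeGroup.mk [x] • (FreeGroup.mk w : FreeGroup A ⧸ H) = s := hws
    exact (isPath_mk_singleton_of_smul_eq hσ ht (s := ⟨_, hw' w List.suffix_rfl⟩) step).mul
      (ih hw' rfl)

theorem exists_wordTransversal {b : S} (hb : b.1 = (1 : FreeGroup A))
    (hS : ∀ s : S, ∃ w, StaysIn S w ∧ (FreeGroup.mk w : FreeGroup A ⧸ H) = s) :
    ∃ v : S → List (A × Bool), v b = [] ∧
      ∀ s, StaysIn S (v s) ∧ (FreeGroup.mk (v s) : FreeGroup A ⧸ H) = s := by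
  classical
  choose v hv using hS
  refine ⟨Function.update v b [], Function.update_self .., fun s => ?_⟩
  obtain rfl | hs := eq_or_ne s b
  · rw [Function.update_self]
    exact ⟨(hv s).1.of_suffix List.nil_suffix, hb.symm⟩
  · rw [Function.update_of_ne hs]
    exact hv s

theorem isFreeFactor_pointStabilizer_of_staysIn (hσ : ExtendsTranslation σ)
    {b : S} (hb : b.1 = (1 : FreeGroup A))
    (hS : ∀ s : S, ∃ w, StaysIn S w ∧ (FreeGroup.mk w : FreeGroup A ⧸ H) = s)
    {Q : Set (List (A × Bool))} (hQ : ∀ w ∈ Q, StaysIn S w)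
    (hQH : Subgroup.closure (FreeGroup.mk '' Q) = H) :
    IsFreeFactor H (pointStabilizer σ b) := by
  obtain ⟨v, hvb, hv⟩ := exists_wordTransversal hb hS
  let t (s : S) : FreeGroup A := FreeGroup.mk (v s)
  have ht (s : S) : (t s : FreeGroup A ⧸ H) = s := (hv s).2
  have htb : t b = 1 := congrArg FreeGroup.mk hvb
  refine isFreeFactor_pointStabilizer htb (fun s => (hv s).1.isPath hσ ht hb (hv s).2) ?_
  have generators_are_loops :
      FreeGroup.mk '' Q ⊆ loopSubgroup σ (schreierLabel H σ t) Coprod.inl.range b := by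
    rintro _ ⟨w, hw, rfl⟩
    have hwH : FreeGroup.mk w ∈ H := hQH ▸ Subgroup.subset_closure ⟨w, hw, rfl⟩
    refine (hQ w hw).isPath hσ ht hb ?_
    rw [hb]
    exact (QuotientGroup.eq.2 (by simpa using hwH)).symm
  exact hQH.symm.trans_le ((Subgroup.closure_le _).2 generators_are_loops)

variable (H) in
/-- The vertices visited by the paths that start at the coset `H` and spell words in `Q`. For a
finite set `Q` of words generating `H`, the full subgraph on these vertices plays the role of the
Stallings graph of `H`. -/
def suffixCosets (Q : Set (List (A × Bool))) : Set (FreeGroup A ⧸ H) :=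
  {q | ∃ w ∈ Q, ∃ u, u <:+ w ∧ (FreeGroup.mk u : FreeGroup A ⧸ H) = q}

variable {Q : Set (List (A × Bool))}

theorem finite_suffixCosets (hQ : Q.Finite) : (suffixCosets H Q).Finite := by
  have finite_suffixes (w : List (A × Bool)) : {u | u <:+ w}.Finite := by
    simpa only [List.mem_tails] using List.finite_toSet w.tails
  refine ((hQ.biUnion fun w _ => finite_suffixes w).image
    fun u => (FreeGroup.mk u : FreeGroup A ⧸ H)).subset ?_
  rintro _ ⟨w, hw, u, hu, rfl⟩
  exact ⟨u, Set.mem_biUnion hw hu, rfl⟩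

theorem staysIn_suffixCosets {w : List (A × Bool)} (hw : w ∈ Q) : StaysIn (suffixCosets H Q) w :=
  fun u hu => ⟨w, hw, u, hu, rfl⟩

theorem exists_staysIn_suffixCosets (s : suffixCosets H Q) :
    ∃ u, StaysIn (suffixCosets H Q) u ∧ (FreeGroup.mk u : FreeGroup A ⧸ H) = s := by
  obtain ⟨_, w, hw, u, hu, rfl⟩ := s
  exact ⟨u, (staysIn_suffixCosets hw).of_suffix hu, rfl⟩

theorem exists_finite_words_closure_eq (hH : H.FG) :
    ∃ Q : Set (List (A × Bool)), Q.Finite ∧ [] ∈ Q ∧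
      Subgroup.closure (FreeGroup.mk '' Q) = H := by
  classical
  obtain ⟨T, hT⟩ := hH
  refine ⟨insert [] (FreeGroup.toWord '' T), (T.finite_toSet.image _).insert _,
    Set.mem_insert _ _, ?_⟩
  rw [Set.image_insert_eq, Set.image_image]
  simp only [FreeGroup.mk_toWord, Set.image_id', ← FreeGroup.one_eq_mk]
  rw [Subgroup.closure_insert_one, hT]

end CosetGraph

end MarshallHall

open MarshallHall in
/-- **Marshall Hall's theorem**: every finitely generated subgroup of a free group
is a free factor of some subgroup of finite index. -/
theorem marshall_hall {A : Type*} (H : Subgroup (FreeGroup A)) (hH : H.FG) :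
    ∃ K : Subgroup (FreeGroup A), K.index ≠ 0 ∧ IsFreeFactor H K := by
  obtain ⟨Q, hQ, nil_mem, hQH⟩ := exists_finite_words_closure_eq hH
  have : Finite (suffixCosets H Q) := (finite_suffixCosets hQ).to_subtype
  choose σ hσ using fun a : A => exists_perm_extending_smul (FreeGroup.of a) (suffixCosets H Q)
  let b : suffixCosets H Q := ⟨(1 : FreeGroup A), staysIn_suffixCosets nil_mem [] List.suffix_rfl⟩
  exact ⟨pointStabilizer σ b, index_pointStabilizer_ne_zero σ b,
    isFreeFactor_pointStabilizer_of_staysIn hσ rfl exists_staysIn_suffixCosets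
      (fun _ => staysIn_suffixCosets) hQH⟩
end

section
/- Let A be a finite type, let H be a finitely generated subgroup of FreeGroup A, and let S be a finite subset of FreeGroup A disjoint from H. Then there exists a finite-index subgroup K of FreeGroup A such that H is a free factor of K and K ∩ S = ∅ (finitely generated free groups are fully LERF); in particular, every finitely generated subgroup of FreeGroup A is closed in the profinite topology. -/
/-!
Marshall Hall's theorem by Stallings' method. Take a finite set `V` of cosets of `H` through which
the generators of `H` and the elements of `S` can be traced letter by letter from the base coset.
Each letter acts on `V` as a partial injection; completing these to permutations makes the free
group act on `V`, and `K` is the stabilizer of the base point. An element traced along old edges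
moves the base point as it did among the cosets, so `K` contains the generators of `H` and
avoids `S`.

That `H` is a free factor is the statement that the fundamental group of a connected subgraph is a
free factor. Label each old edge by the loop in `H` that it closes up and each new edge by a free
generator. Reading labels along paths sends `K` to `H ∗ F(new edges)`, inverting the evident map
in the other direction.
-/

open Monoid
open FreeGroup (of)

theorem IsFreeFactor.of_bijective_lift {G M : Type*} [Group G] [Group M] {H K : Subgroup G}
    (hHK : H ≤ K) (f : M →* K)
    (hf : Function.Bijective (Coprod.lift (Subgroup.inclusion hHK) f)) : IsFreeFactor H K := by
  let j : M →* G := K.subtype.comp f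
  have hj : Function.Injective j := by
    refine Subtype.val_injective.comp ?_
    rw [← Coprod.lift_comp_inr (Subgroup.inclusion hHK) f]
    exact hf.injective.comp Coprod.inr_injective
  have hjK : j.range ≤ K := by
    rintro _ ⟨m, rfl⟩
    exact (f m).2
  let e : Coprod H M ≃* Coprod H j.range :=
    (MulEquiv.refl H).coprodCongr (MonoidHom.ofInjective hj)
  have hcomp : (Coprod.lift (Subgroup.inclusion hHK) (Subgroup.inclusion hjK)).comp
      e.toMonoidHom = Coprod.lift (Subgroup.inclusion hHK) f := by
    ext
    · simp [e]
    · simp [e, MonoidHom.ofInjective_apply, j]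
  refine ⟨hHK, j.range, hjK, (Function.Bijective.of_comp_iff _ e.bijective).1 ?_⟩
  rw [← hcomp] at hf
  exact hf

section Cocycle

variable {G V X Y : Type*} [Group G] [MulAction G V] [Group X] [Group Y]

/-- A cocycle of the action of `G` on `V` with values in `X`: `z g v` is the label of the path
`g` from `v` to `g • v`, and labels multiply along concatenation. Paths compose from right to
left, matching the left action. -/
def IsActionCocycle (z : G → V → X) : Prop :=
  ∀ g h v, z (g * h) v = z g (h • v) * z h v

namespace IsActionCocycle

variable {z : G → V → X}

theorem map_one (hz : IsActionCocycle z) (v : V) : z 1 v = 1 := by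
  simpa using hz 1 1 v

theorem map_inv (hz : IsActionCocycle z) (g : G) (v : V) : z g⁻¹ v = (z g (g⁻¹ • v))⁻¹ := by
  rw [eq_comm, inv_eq_iff_mul_eq_one, ← hz, mul_inv_cancel, hz.map_one]

theorem monoidHom_comp (hz : IsActionCocycle z) (f : X →* Y) :
    IsActionCocycle fun g v => f (z g v) :=
  fun g h v => by simp only [hz g h v, map_mul]

/-- The homomorphism to which a cocycle restricts on the stabilizer of a point. -/
def stabilizerHom (hz : IsActionCocycle z) (v : V) : MulAction.stabilizer G v →* X where
  toFun k := z k v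
  map_one' := hz.map_one v
  map_mul' k l := by rw [Subgroup.coe_mul, hz, MulAction.mem_stabilizer_iff.1 l.2]

end IsActionCocycle

theorem isActionCocycle_conj (t : V → G) :
    IsActionCocycle fun g v => (t (g • v))⁻¹ * g * t v := by
  intro g h v
  simp only [mul_smul]
  group

end Cocycle

section Holonomy

variable {A V X : Type*} [MulAction (FreeGroup A) V] [Group X]

theorem IsActionCocycle.eq_of_eq_on_generators {z z' : FreeGroup A → V → X}
    (hz : IsActionCocycle z) (hz' : IsActionCocycle z')
    (h : ∀ a v, z (of a) v = z' (of a) v) (g : FreeGroup A) (v : V) : z g v = z' g v := by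
  induction g using FreeGroup.induction_on generalizing v with
  | C1 => rw [hz.map_one, hz'.map_one]
  | of a => exact h a v
  | inv_of a => rw [hz.map_inv, hz'.map_inv, h]
  | mul g k ihg ihk => rw [hz, hz', ihg, ihk]

/-- The homomorphism to the wreath product `(V → X) ⋊ FreeGroup A` that encodes an edge labelling
`c`. The semidirect product indexes labels by the end of an edge, `c` by its start. -/
def wreathHom (c : A → V → X) : FreeGroup A →* (V → X) ⋊[mulAutArrow] FreeGroup A :=
  FreeGroup.lift fun a => ⟨fun v => c a ((of a)⁻¹ • v), of a⟩

theorem wreathHom_right (c : A → V → X) (g : FreeGroup A) : (wreathHom c g).right = g := by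
  have : SemidirectProduct.rightHom.comp (wreathHom c) = MonoidHom.id (FreeGroup A) := by
    ext a
    simp [wreathHom]
  exact DFunLike.congr_fun this g

/-- The product of the labels `c` along the path `g` from `v`, where `c a v` labels the edge
from `v` to `of a • v`. -/
def holonomy (c : A → V → X) (g : FreeGroup A) (v : V) : X :=
  (wreathHom c g).left (g • v)

theorem holonomy_of (c : A → V → X) (a : A) (v : V) : holonomy c (of a) v = c a v := by
  simp [holonomy, wreathHom]

theorem isActionCocycle_holonomy (c : A → V → X) : IsActionCocycle (holonomy c) := by
  intro g h v
  have hshift : mulAutArrow g (wreathHom c h).left (g • h • v) = (wreathHom c h).left (h • v) :=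
    congrArg _ (inv_smul_smul g (h • v))
  simp only [holonomy, mul_smul, map_mul, SemidirectProduct.mul_left, Pi.mul_apply,
    wreathHom_right, hshift]

end Holonomy

section Subgraph

variable {A V : Type*} [MulAction (FreeGroup A) V]

/-- The Schreier graph of the action on `V` has an edge `(a, v)` from `v` to `of a • v` for every
`a` and `v`. For a set `D` of edges, `Traces D v g` says that some word for `g`, read from right to
left starting at `v`, runs through edges of `D` only. -/
inductive Traces (D : Set (A × V)) (v : V) : FreeGroup A → Prop
  | one : Traces D v 1
  | of_mul {a : A} {g : FreeGroup A} : Traces D v g → (a, g • v) ∈ D → Traces D v (of a * g)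
  | inv_of_mul {a : A} {g : FreeGroup A} :
      Traces D v g → (a, ((of a)⁻¹ * g) • v) ∈ D → Traces D v ((of a)⁻¹ * g)

namespace Traces

variable {D : Set (A × V)} {v : V} {g h : FreeGroup A}

theorem of_edge {a : A} (ha : (a, v) ∈ D) : Traces D v (of a) := by
  simpa using one.of_mul (g := 1) (by rwa [one_smul])

theorem inv_of_edge {a : A} (ha : (a, v) ∈ D) : Traces D (of a • v) (of a)⁻¹ := by
  simpa using one.inv_of_mul (g := 1) (by rwa [mul_one, inv_smul_smul])

theorem mul (hh : Traces D (g • v) h) (hg : Traces D v g) : Traces D v (h * g) := by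
  induction hh with
  | one => rwa [one_mul]
  | of_mul _ ha ih =>
    rw [mul_assoc]
    exact ih.of_mul (by rwa [mul_smul])
  | inv_of_mul _ ha ih =>
    rw [mul_assoc]
    exact ih.inv_of_mul (by rwa [← mul_assoc, mul_smul])

theorem inv (hg : Traces D v g) : Traces D (g • v) g⁻¹ := by
  induction hg with
  | one => simpa using one
  | @of_mul a g _ ha ih =>
    rw [mul_inv_rev, mul_smul]
    exact mul (by rwa [inv_smul_smul]) (inv_of_edge ha)
  | @inv_of_mul a g _ ha ih =>
    rw [mul_inv_rev, inv_inv]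
    exact mul (by rwa [← mul_smul, mul_inv_cancel_left]) (of_edge ha)

end Traces

/-- The fundamental group at `v₀` of the subgraph `D` of the Schreier graph, realised inside the
stabilizer of `v₀`. -/
def loopSubgroup (D : Set (A × V)) (v₀ : V) : Subgroup (FreeGroup A) where
  carrier := {g | Traces D v₀ g ∧ g • v₀ = v₀}
  one_mem' := ⟨.one, one_smul _ _⟩
  mul_mem' {g h} hg hh :=
    ⟨.mul (by rw [hh.2]; exact hg.1) hh.1, by rw [mul_smul, hh.2, hg.2]⟩
  inv_mem' {g} hg := ⟨by simpa only [hg.2] using hg.1.inv, by rw [inv_smul_eq_iff, hg.2]⟩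

theorem loopSubgroup_le_stabilizer (D : Set (A × V)) (v₀ : V) :
    loopSubgroup D v₀ ≤ MulAction.stabilizer (FreeGroup A) v₀ :=
  fun _ hg => hg.2

/-- The free product of the fundamental group of `D` and the free group on the edges
outside `D`, which turns out to be the fundamental group of the whole Schreier graph. -/
abbrev LoopCoprod (D : Set (A × V)) (v₀ : V) : Type _ :=
  Coprod (loopSubgroup D v₀) (FreeGroup (Dᶜ : Set (A × V)))

/-- A choice, for every vertex `v`, of a path in the subgraph `D` from `v₀` to `v`, trivial for
`v = v₀`. It plays the role of a spanning tree, but need not be closed under initial segments. -/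
structure PathSystem (D : Set (A × V)) (v₀ : V) where
  path : V → FreeGroup A
  traces_path : ∀ v, Traces D v₀ (path v)
  path_smul : ∀ v, path v • v₀ = v
  path_base : path v₀ = 1

theorem nonempty_pathSystem {D : Set (A × V)} {v₀ : V}
    (hD : ∀ v, ∃ g, Traces D v₀ g ∧ g • v₀ = v) : Nonempty (PathSystem D v₀) := by
  classical
  choose t ht ht' using hD
  refine ⟨⟨Function.update t v₀ 1, fun v => ?_, fun v => ?_, Function.update_self ..⟩⟩ <;>
    obtain rfl | hv := eq_or_ne v v₀
  · simpa using .one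
  · simpa [hv] using ht v
  · simp
  · simpa [hv] using ht' v

namespace PathSystem

variable {D : Set (A × V)} {v₀ : V} (t : PathSystem D v₀)

/-- The path `g` from `v`, closed up to a loop at `v₀` along the path system. -/
def close (g : FreeGroup A) (v : V) : FreeGroup A :=
  (t.path (g • v))⁻¹ * g * t.path v

theorem isActionCocycle_close : IsActionCocycle t.close :=
  isActionCocycle_conj t.path

theorem inv_path_smul (v : V) : (t.path v)⁻¹ • v = v₀ := by
  rw [inv_smul_eq_iff, t.path_smul]

theorem close_mem_stabilizer (g : FreeGroup A) (v : V) :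
    t.close g v ∈ MulAction.stabilizer (FreeGroup A) v₀ := by
  rw [MulAction.mem_stabilizer_iff, close, mul_smul, t.path_smul, mul_smul, t.inv_path_smul]

theorem close_mem_loopSubgroup {g : FreeGroup A} {v : V} (hg : Traces D v g) :
    t.close g v ∈ loopSubgroup D v₀ := by
  refine ⟨?_, t.close_mem_stabilizer g v⟩
  have hgt : Traces D v₀ (g * t.path v) := .mul (by rwa [t.path_smul]) (t.traces_path v)
  have hback : Traces D (g • v) (t.path (g • v))⁻¹ := by
    simpa only [t.path_smul] using (t.traces_path (g • v)).inv
  rw [close, mul_assoc]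
  exact .mul (by rwa [mul_smul, t.path_smul]) hgt

theorem close_base {g : FreeGroup A} (hg : g • v₀ = v₀) : t.close g v₀ = g := by
  simp [close, hg, t.path_base]

theorem close_path (v : V) : t.close (t.path v) v₀ = 1 := by
  simp [close, t.path_smul, t.path_base]

open Classical in
/-- The labelling of edges under which a loop at `v₀` is sent to its decomposition in
`LoopCoprod D v₀`. -/
noncomputable def edgeLabel (a : A) (v : V) : LoopCoprod D v₀ :=
  if h : (a, v) ∈ D then Coprod.inl ⟨t.close (of a) v, t.close_mem_loopSubgroup (.of_edge h)⟩
  else Coprod.inr (of ⟨(a, v), h⟩)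

theorem holonomy_edgeLabel_of_traces {g : FreeGroup A} {v : V} (hg : Traces D v g) :
    holonomy t.edgeLabel g v = Coprod.inl ⟨t.close g v, t.close_mem_loopSubgroup hg⟩ := by
  have hz := isActionCocycle_holonomy t.edgeLabel
  have hlabel {a : A} {w : V} (ha : (a, w) ∈ D) : holonomy t.edgeLabel (of a) w =
      Coprod.inl ⟨t.close (of a) w, t.close_mem_loopSubgroup (.of_edge ha)⟩ := by
    rw [holonomy_of, edgeLabel, dif_pos ha]
  induction hg with
  | one =>
    rw [hz.map_one, ← map_one Coprod.inl]
    exact congrArg _ (Subtype.ext (t.isActionCocycle_close.map_one v).symm)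
  | @of_mul a g _ ha ih =>
    rw [hz, ih, hlabel ha, ← map_mul]
    exact congrArg _ (Subtype.ext (t.isActionCocycle_close _ _ _).symm)
  | @inv_of_mul a g _ ha ih =>
    rw [hz, hz.map_inv, ih, ← mul_smul, hlabel ha, ← map_inv, ← map_mul]
    refine congrArg _ (Subtype.ext ?_)
    simp only [t.isActionCocycle_close (of a)⁻¹ g, t.isActionCocycle_close.map_inv, mul_smul,
      Subgroup.coe_mul, Subgroup.coe_inv]

theorem holonomy_edgeLabel_path (v : V) : holonomy t.edgeLabel (t.path v) v₀ = 1 := by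
  rw [t.holonomy_edgeLabel_of_traces (t.traces_path v), ← map_one Coprod.inl]
  exact congrArg _ (Subtype.ext (t.close_path v))

theorem holonomy_edgeLabel_close (g : FreeGroup A) (v : V) :
    holonomy t.edgeLabel (t.close g v) v₀ = holonomy t.edgeLabel g v := by
  have hz := isActionCocycle_holonomy t.edgeLabel
  have hback : holonomy t.edgeLabel (t.path (g • v))⁻¹ (g • v) = 1 := by
    rw [hz.map_inv, t.inv_path_smul, t.holonomy_edgeLabel_path, inv_one]
  rw [close, hz, hz, t.path_smul, hback, t.holonomy_edgeLabel_path, one_mul, mul_one]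

/-- The decomposition of a loop at `v₀` read off from the labels of its edges. -/
noncomputable def decompose : MulAction.stabilizer (FreeGroup A) v₀ →* LoopCoprod D v₀ :=
  (isActionCocycle_holonomy t.edgeLabel).stabilizerHom v₀

/-- The homomorphism sending an edge outside `D` to the loop obtained by closing it up. -/
def newLoop : FreeGroup (Dᶜ : Set (A × V)) →* MulAction.stabilizer (FreeGroup A) v₀ :=
  FreeGroup.lift fun e => ⟨t.close (of e.1.1) e.1.2, t.close_mem_stabilizer _ _⟩

/-- The map from the free product to the stabilizer of `v₀` shown to be an isomorphism. -/
def compose : LoopCoprod D v₀ →* MulAction.stabilizer (FreeGroup A) v₀ :=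
  Coprod.lift (Subgroup.inclusion (loopSubgroup_le_stabilizer D v₀)) t.newLoop

theorem decompose_comp_compose : t.decompose.comp t.compose = MonoidHom.id (LoopCoprod D v₀) := by
  refine Coprod.hom_ext (MonoidHom.ext fun h => ?_) (FreeGroup.ext_hom _ _ fun e => ?_)
  · have hh : t.close (h : FreeGroup A) v₀ = h := t.close_base h.2.2
    change holonomy t.edgeLabel h v₀ = Coprod.inl h
    rw [t.holonomy_edgeLabel_of_traces h.2.1]
    exact congrArg _ (Subtype.ext hh)
  · have he : t.newLoop (of e) = ⟨t.close (of e.1.1) e.1.2, t.close_mem_stabilizer _ _⟩ :=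
      FreeGroup.lift_apply_of
    change holonomy t.edgeLabel (t.newLoop (of e)) v₀ = Coprod.inr (of e)
    rw [he, t.holonomy_edgeLabel_close, holonomy_of, edgeLabel, dif_neg e.2]

theorem compose_edgeLabel (a : A) (v : V) :
    (t.compose (t.edgeLabel a v) : FreeGroup A) = t.close (of a) v := by
  unfold edgeLabel
  split_ifs <;> simp [compose, newLoop]

theorem compose_holonomy_edgeLabel (g : FreeGroup A) (v : V) :
    (t.compose (holonomy t.edgeLabel g v) : FreeGroup A) = t.close g v :=
  ((isActionCocycle_holonomy t.edgeLabel).monoidHom_comp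
    ((Subgroup.subtype _).comp t.compose)).eq_of_eq_on_generators t.isActionCocycle_close
    (fun a v => by simpa [holonomy_of] using t.compose_edgeLabel a v) g v

theorem compose_bijective : Function.Bijective t.compose := by
  refine Function.bijective_iff_has_inverse.2
    ⟨t.decompose, DFunLike.congr_fun t.decompose_comp_compose, fun k => Subtype.ext ?_⟩
  exact (t.compose_holonomy_edgeLabel k v₀).trans (t.close_base k.2)

end PathSystem

theorem isFreeFactor_loopSubgroup_stabilizer {D : Set (A × V)} {v₀ : V}
    (hD : ∀ v, ∃ g, Traces D v₀ g ∧ g • v₀ = v) :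
    IsFreeFactor (loopSubgroup D v₀) (MulAction.stabilizer (FreeGroup A) v₀) :=
  let ⟨t⟩ := nonempty_pathSystem hD
  .of_bijective_lift (loopSubgroup_le_stabilizer D v₀) t.newLoop t.compose_bijective

end Subgraph

section EquivariantEdges

variable {A V Ω : Type*} [MulAction (FreeGroup A) V] [MulAction (FreeGroup A) Ω]

/-- The edges of the Schreier graph of `V` that `p` maps to edges of the Schreier graph of `Ω`. -/
def equivariantEdges (p : V → Ω) : Set (A × V) :=
  {e | p (of e.1 • e.2) = of e.1 • p e.2}

theorem Traces.map_smul {p : V → Ω} {v : V} {g : FreeGroup A}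
    (hg : Traces (equivariantEdges p) v g) : p (g • v) = g • p v := by
  induction hg with
  | one => simp only [one_smul]
  | of_mul _ ha ih => rw [mul_smul, ha, ih, mul_smul]
  | @inv_of_mul a g _ ha ih =>
    rw [mul_smul (of a)⁻¹ g (p v), eq_inv_smul_iff, ← ih, ← ha, ← mul_smul, mul_inv_cancel_left]

theorem Traces.smul_eq_self_iff {p : V → Ω} (hp : Function.Injective p) {v : V} {g : FreeGroup A}
    (hg : Traces (equivariantEdges p) v g) : g • v = v ↔ g • p v = p v := by
  rw [← hp.eq_iff, hg.map_smul]

end EquivariantEdges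

section Completion

variable {A Ω : Type*} [MulAction (FreeGroup A) Ω]

theorem exists_mulAction_extending (W : Finset Ω) :
    ∃ _ : MulAction (FreeGroup A) W, ∀ (a : A) (w : W),
      of a • (w : Ω) ∈ W → (a, w) ∈ equivariantEdges ((↑) : W → Ω) := by
  have hperm (a : A) : ∃ s : Equiv.Perm W, ∀ w ∈ {w : W | of a • (w : Ω) ∈ W},
      (s w : Ω) = of a • (w : Ω) :=
    Set.MapsTo.exists_equiv_extend_of_card_eq (Fintype.card_coe W) (fun _ hw => hw)
      ((MulAction.injective (of a)).comp Subtype.val_injective).injOn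
  choose s hs using hperm
  let := MulAction.compHom W (FreeGroup.lift s)
  refine ⟨this, fun a w hw => ?_⟩
  have hsmul : of a • w = s a w := DFunLike.congr_fun (FreeGroup.lift_apply_of (f := s)) w
  exact (congrArg Subtype.val hsmul).trans (hs a w hw)

theorem traces_mk_of_forall_suffix_smul_mem {W : Finset Ω} [MulAction (FreeGroup A) W]
    (hW : ∀ (a : A) (w : W), of a • (w : Ω) ∈ W → (a, w) ∈ equivariantEdges ((↑) : W → Ω))
    (w₀ : W) {l : List (A × Bool)}
    (hl : ∀ l', l' <:+ l → FreeGroup.mk l' • (w₀ : Ω) ∈ W) :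
    Traces (equivariantEdges ((↑) : W → Ω)) w₀ (FreeGroup.mk l) := by
  induction l with
  | nil => exact .one
  | cons x l ih =>
    have htail := ih fun l' hl' => hl l' (hl'.trans (List.suffix_cons x l))
    have hhead := hl (x :: l) List.suffix_rfl
    obtain ⟨a, _ | _⟩ := x
    · have hcons : FreeGroup.mk ((a, false) :: l) = (of a)⁻¹ * FreeGroup.mk l := rfl
      rw [hcons] at hhead ⊢
      let w : W := ⟨_, hhead⟩
      have hw : of a • (w : Ω) = (FreeGroup.mk l • w₀ : W) := by
        rw [htail.map_smul, ← mul_smul, mul_inv_cancel_left]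
      have hedge : (a, w) ∈ equivariantEdges ((↑) : W → Ω) :=
        hW a w (hw ▸ (FreeGroup.mk l • w₀).2)
      have hend : ((of a)⁻¹ * FreeGroup.mk l) • w₀ = w := by
        rw [mul_smul, inv_smul_eq_iff]
        exact Subtype.ext (hedge.trans hw).symm
      exact htail.inv_of_mul (by rwa [hend])
    · have hcons : FreeGroup.mk ((a, true) :: l) = of a * FreeGroup.mk l := rfl
      rw [hcons] at hhead ⊢
      exact htail.of_mul (hW a _ (by rwa [htail.map_smul, ← mul_smul]))

theorem exists_finset_suffix_smul_mem (x : Ω) (L : Finset (List (A × Bool))) :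
    ∃ W : Finset Ω, x ∈ W ∧ (∀ l ∈ L, ∀ l', l' <:+ l → FreeGroup.mk l' • x ∈ W) ∧
      ∀ w ∈ W, ∃ l : List (A × Bool),
        FreeGroup.mk l • x = w ∧ ∀ l', l' <:+ l → FreeGroup.mk l' • x ∈ W := by
  classical
  let suffixes := insert [] (L.biUnion fun l => l.tails.toFinset)
  have hsuffixes {l l' : List (A × Bool)} (hl : l ∈ suffixes) (h : l' <:+ l) :
      l' ∈ suffixes := by
    simp only [suffixes, Finset.mem_insert, Finset.mem_biUnion, List.mem_toFinset,
      List.mem_tails] at hl ⊢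
    obtain rfl | ⟨m, hm, hlm⟩ := hl
    · exact .inl (List.suffix_nil.1 h)
    · exact .inr ⟨m, hm, h.trans hlm⟩
  have hL {l : List (A × Bool)} (hl : l ∈ L) : l ∈ suffixes :=
    Finset.mem_insert_of_mem (Finset.mem_biUnion.2 ⟨l, hl, by simp⟩)
  have hmem {l : List (A × Bool)} (hl : l ∈ suffixes) :
      FreeGroup.mk l • x ∈ suffixes.image (FreeGroup.mk · • x) :=
    Finset.mem_image_of_mem _ hl
  refine ⟨suffixes.image (FreeGroup.mk · • x), ?_, fun l hl l' h => hmem (hsuffixes (hL hl) h), ?_⟩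
  · exact Finset.mem_image.2 ⟨[], Finset.mem_insert_self _ _, one_smul _ x⟩
  · intro w hw
    obtain ⟨l, hl, rfl⟩ := Finset.mem_image.1 hw
    exact ⟨l, rfl, fun l' h => hmem (hsuffixes hl h)⟩

theorem exists_finset_mulAction_traces (x : Ω) (B : Finset (FreeGroup A)) :
    ∃ (W : Finset Ω) (_ : MulAction (FreeGroup A) W) (w₀ : W), (w₀ : Ω) = x ∧
      (∀ w, ∃ g : FreeGroup A, Traces (equivariantEdges ((↑) : W → Ω)) w₀ g ∧ g • w₀ = w) ∧
      ∀ b ∈ B, Traces (equivariantEdges ((↑) : W → Ω)) w₀ b := by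
  classical
  obtain ⟨W, hxW, hWB, hconn⟩ := exists_finset_suffix_smul_mem x (B.image FreeGroup.toWord)
  obtain ⟨_, hW⟩ := exists_mulAction_extending (A := A) W
  refine ⟨W, ‹_›, ⟨x, hxW⟩, rfl, fun w => ?_, fun b hb => ?_⟩
  · obtain ⟨l, hlw, hl⟩ := hconn w w.2
    have htr := traces_mk_of_forall_suffix_smul_mem hW ⟨x, hxW⟩ hl
    exact ⟨_, htr, Subtype.ext (htr.map_smul.trans hlw)⟩
  · rw [← FreeGroup.mk_toWord (x := b)]
    exact traces_mk_of_forall_suffix_smul_mem hW _ (hWB _ (Finset.mem_image_of_mem _ hb))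

end Completion

theorem index_stabilizer_ne_zero {G X : Type*} [Group G] [MulAction G X] [Finite X] (x : X) :
    (MulAction.stabilizer G x).index ≠ 0 := by
  rw [MulAction.index_stabilizer]
  exact Set.ncard_ne_zero_of_mem (MulAction.mem_orbit_self x)

theorem freeGroup_fully_lerf_general {A : Type*}
    (H : Subgroup (FreeGroup A)) (hH : H.FG)
    (S : Finset (FreeGroup A)) (hS : ∀ s ∈ S, s ∉ H) :
    ∃ K : Subgroup (FreeGroup A),
      K.index ≠ 0 ∧ IsFreeFactor H K ∧ ∀ s ∈ S, s ∉ K := by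
  classical
  obtain ⟨T, hT⟩ := hH
  obtain ⟨W, _, w₀, hw₀, hconn, htraces⟩ :=
    exists_finset_mulAction_traces ((1 : FreeGroup A) : FreeGroup A ⧸ H) (T ∪ S)
  let D : Set (A × W) := equivariantEdges ((↑) : W → FreeGroup A ⧸ H)
  have hfix {g : FreeGroup A} (hg : Traces D w₀ g) : g • w₀ = w₀ ↔ g ∈ H := by
    rw [hg.smul_eq_self_iff Subtype.val_injective, hw₀, ← MulAction.mem_stabilizer_iff,
      MulAction.stabilizer_quotient]
  have hloop : loopSubgroup D w₀ = H := by
    refine le_antisymm (fun g hg => (hfix hg.1).1 hg.2) ?_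
    refine hT.ge.trans ((Subgroup.closure_le _).2 fun g hg => ?_)
    have hgD : Traces D w₀ g := htraces g (Finset.mem_union_left S hg)
    exact ⟨hgD, (hfix hgD).2 (hT.le (Subgroup.subset_closure hg))⟩
  refine ⟨MulAction.stabilizer (FreeGroup A) w₀, index_stabilizer_ne_zero w₀, ?_, ?_⟩
  · have hfactor := isFreeFactor_loopSubgroup_stabilizer hconn
    rwa [hloop] at hfactor
  · intro s hs hsK
    exact hS s hs ((hfix (htraces s (Finset.mem_union_right T hs))).1 hsK)

/-- Finitely generated free groups are fully LERF: given a finitely generated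
subgroup `H` and a finite set `S` disjoint from `H`, there is a finite-index
subgroup `K` containing `H` as a free factor and avoiding `S`. -/
theorem freeGroup_fully_lerf {A : Type*} [Finite A]
    (H : Subgroup (FreeGroup A)) (hH : H.FG)
    (S : Finset (FreeGroup A)) (hS : ∀ s ∈ S, s ∉ H) :
    ∃ K : Subgroup (FreeGroup A),
      K.index ≠ 0 ∧ IsFreeFactor H K ∧ ∀ s ∈ S, s ∉ K := by
  exact freeGroup_fully_lerf_general H hH S hS
end

section
/- If H and K are finitely generated subgroups of a free group FreeGroup A, then the intersection H ⊓ K is finitely generated; i.e., free groups satisfy the Howson property. -/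
/-!
A subgroup `H` of a free group is the group of closed paths at the base vertex of its Schreier
graph. `H` is finitely generated exactly when the reduced closed paths at the base vertex traverse
only finitely many edges. If `H` is generated by finitely many words, then every element of `H`
labels a path along the loops of these words, and cancelling a pair of inverse letters only removes
edges from a path. Conversely, every edge of the Schreier graph carries a Schreier generator, and
the generators along a closed path multiply to its label, up to conjugation by an element of `H`.
A vertex of the Schreier graph of `H ⊓ K` is determined by its images in the Schreier graphs of `H`
and `K`, so finitely many edges for each of `H` and `K` leave only finitely many for `H ⊓ K`.
-/

theorem quotientMapOfLE_inf_injective {G : Type*} [Group G] (H K : Subgroup G) :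
    Function.Injective fun v : G ⧸ H ⊓ K ↦
      (Subgroup.quotientMapOfLE inf_le_left v, Subgroup.quotientMapOfLE inf_le_right v) := by
  rintro ⟨g⟩ ⟨g'⟩ h
  obtain ⟨hH, hK⟩ := Prod.mk.inj h
  exact QuotientGroup.eq.2 ⟨QuotientGroup.eq.1 hH, QuotientGroup.eq.1 hK⟩

section CoreEdges

variable {A : Type*} {H K : Subgroup (FreeGroup A)} {L L' M : List (A × Bool)}

/-- The list of edges traversed by the path labelled by a word in the Schreier graph of `H`,
starting at the base vertex `H`. The vertices of that graph are the left cosets of `H`; the edge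
`(x, v)` is labelled by the letter `x` and leads from `v` to `FreeGroup.mk [x] • v`. Since the group
acts from the left, a word is read from its last letter to its first. -/
def schreierPath (H : Subgroup (FreeGroup A)) :
    List (A × Bool) → List ((A × Bool) × FreeGroup A ⧸ H)
  | [] => []
  | x :: L => (x, (FreeGroup.mk L : FreeGroup A ⧸ H)) :: schreierPath H L

/-- The edges of the Stallings core graph of `H`: those edges of the Schreier graph that lie on the
path of some reduced word representing an element of `H`. -/
def coreEdges (H : Subgroup (FreeGroup A)) : Set ((A × Bool) × FreeGroup A ⧸ H) :=
  {e | ∃ L, FreeGroup.IsReduced L ∧ FreeGroup.mk L ∈ H ∧ e ∈ schreierPath H L}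

theorem schreierPath_append (hM : FreeGroup.mk M ∈ H) :
    schreierPath H (L ++ M) = schreierPath H L ++ schreierPath H M := by
  induction L with
  | nil => rfl
  | cons x L ih =>
    have same_coset : (FreeGroup.mk (L ++ M) : FreeGroup A ⧸ H) = FreeGroup.mk L := by
      rw [← FreeGroup.mul_mk, QuotientGroup.mk_mul_of_mem _ hM]
    rw [List.cons_append, schreierPath, schreierPath, same_coset, ih, List.cons_append]

theorem schreierPath_sublist_of_step (h : FreeGroup.Red.Step L L') :
    (schreierPath H L').Sublist (schreierPath H L) := by
  obtain @⟨L₁, L₂, a, b⟩ := h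
  induction L₁ with
  | nil => exact ((List.Sublist.refl _).cons _).cons _
  | cons x L₁ ih =>
    have same_vertex :
        FreeGroup.mk (L₁ ++ (a, b) :: (a, !b) :: L₂) = FreeGroup.mk (L₁ ++ L₂) :=
      Quot.sound .not
    rw [List.cons_append, List.cons_append, schreierPath, schreierPath, same_vertex]
    exact ih.cons_cons _

theorem schreierPath_sublist_of_red (h : FreeGroup.Red L L') :
    (schreierPath H L').Sublist (schreierPath H L) := by
  induction h with
  | refl => exact List.Sublist.refl _
  | tail _ step ih => exact (schreierPath_sublist_of_step step).trans ih

theorem red_of_mk_eq_of_isReduced (h : FreeGroup.mk L = FreeGroup.mk L')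
    (hL' : FreeGroup.IsReduced L') : FreeGroup.Red L L' := by
  obtain ⟨N, hLN, hL'N⟩ := FreeGroup.Red.exact.1 h
  rwa [hL'.red_iff_eq.1 hL'N] at hLN

theorem exists_word_schreierPath_of_mem_closure [DecidableEq A] {X : Set (FreeGroup A)}
    (hX : X ⊆ H) {g : FreeGroup A} (hg : g ∈ Submonoid.closure X) :
    ∃ L, FreeGroup.mk L = g ∧ ∀ e ∈ schreierPath H L, ∃ x ∈ X, e ∈ schreierPath H x.toWord := by
  induction hg using Submonoid.closure_induction_left with
  | one => exact ⟨[], rfl, by simp [schreierPath]⟩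
  | mul_left x hx y hy ih =>
    obtain ⟨M, rfl, hM⟩ := ih
    have mk_mem : FreeGroup.mk M ∈ H := (Submonoid.closure_le (S := H.toSubmonoid)).2 hX hy
    refine ⟨x.toWord ++ M, by rw [← FreeGroup.mul_mk, FreeGroup.mk_toWord], fun e he ↦ ?_⟩
    rw [schreierPath_append mk_mem, List.mem_append] at he
    exact he.elim (fun he ↦ ⟨x, hx, he⟩) (hM e)

theorem finite_coreEdges (hH : H.FG) : (coreEdges H).Finite := by
  classical
  obtain ⟨X, hX⟩ := (Subgroup.fg_iff_submonoid_fg H).1 hH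
  have X_subset : (X : Set (FreeGroup A)) ⊆ H :=
    Submonoid.subset_closure.trans (SetLike.coe_subset_coe.2 hX.le)
  refine (X.finite_toSet.biUnion fun x _ ↦
    (schreierPath H x.toWord).finite_toSet).subset ?_
  rintro e ⟨L, L_reduced, hL, he⟩
  have mk_mem_closure : FreeGroup.mk L ∈ Submonoid.closure (X : Set (FreeGroup A)) := hX.ge hL
  obtain ⟨M, hML, hM⟩ := exists_word_schreierPath_of_mem_closure X_subset mk_mem_closure
  have he' : e ∈ schreierPath H M :=
    (schreierPath_sublist_of_red (red_of_mk_eq_of_isReduced hML L_reduced)).subset he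
  simpa only [Set.mem_iUnion₂, exists_prop, Set.mem_ofPred_eq] using hM e he'

/-- The Schreier generator of `H` carried by an edge of its Schreier graph, for the transversal
`Quotient.out`. The base vertex need not be represented by `1`. -/
noncomputable def schreierGenerator (e : (A × Bool) × FreeGroup A ⧸ H) : FreeGroup A :=
  (FreeGroup.mk [e.1] • e.2).out⁻¹ * FreeGroup.mk [e.1] * e.2.out

theorem schreierGenerator_mem (e : (A × Bool) × FreeGroup A ⧸ H) : schreierGenerator e ∈ H := by
  rw [schreierGenerator, mul_assoc, ← QuotientGroup.eq, QuotientGroup.out_eq',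
    ← smul_eq_mul, MulAction.Quotient.coe_smul_out]

theorem prod_schreierGenerator_schreierPath (L : List (A × Bool)) :
    ((schreierPath H L).map schreierGenerator).prod =
      (FreeGroup.mk L : FreeGroup A ⧸ H).out⁻¹ * FreeGroup.mk L *
        ((1 : FreeGroup A) : FreeGroup A ⧸ H).out := by
  induction L with
  | nil => simp [schreierPath, ← FreeGroup.one_eq_mk]
  | cons x L ih =>
    have mk_cons : FreeGroup.mk (x :: L) = FreeGroup.mk [x] * FreeGroup.mk L := by
      rw [FreeGroup.mul_mk, List.singleton_append]
    rw [schreierPath, List.map_cons, List.prod_cons, ih, schreierGenerator, mk_cons,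
      MulAction.Quotient.smul_coe, smul_eq_mul]
    group

theorem closure_insert_image_schreierGenerator (H : Subgroup (FreeGroup A)) :
    Subgroup.closure (insert ((1 : FreeGroup A) : FreeGroup A ⧸ H).out
      (schreierGenerator '' coreEdges H)) = H := by
  classical
  set b : FreeGroup A := ((1 : FreeGroup A) : FreeGroup A ⧸ H).out
  have b_mem : b ∈ H := by
    have b_coset : ((1 : FreeGroup A) : FreeGroup A ⧸ H) = b := (QuotientGroup.out_eq' _).symm
    simpa using QuotientGroup.eq.1 b_coset
  refine le_antisymm ?_ fun g hg ↦ ?_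
  · rw [Subgroup.closure_le, Set.insert_subset_iff, Set.image_subset_iff]
    exact ⟨b_mem, fun e _ ↦ schreierGenerator_mem e⟩
  set C := Subgroup.closure (insert b (schreierGenerator '' coreEdges H))
  have b_mem_closure : b ∈ C := Subgroup.subset_closure (Set.mem_insert _ _)
  have prod_mem : ((schreierPath H g.toWord).map schreierGenerator).prod ∈ C := by
    refine Subgroup.list_prod_mem _ (List.forall_mem_map.2 fun e he ↦ ?_)
    exact Subgroup.subset_closure <| Set.mem_insert_of_mem _ <| Set.mem_image_of_mem _
      ⟨g.toWord, FreeGroup.isReduced_toWord, by rwa [FreeGroup.mk_toWord], he⟩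
  have closed : (g : FreeGroup A ⧸ H) = (1 : FreeGroup A) :=
    QuotientGroup.eq.2 (by simpa using hg)
  rw [prod_schreierGenerator_schreierPath, FreeGroup.mk_toWord, closed] at prod_mem
  rwa [C.mul_mem_cancel_right b_mem_closure,
    C.mul_mem_cancel_left (C.inv_mem b_mem_closure)] at prod_mem

theorem fg_iff_finite_coreEdges : H.FG ↔ (coreEdges H).Finite := by
  refine ⟨finite_coreEdges, fun hfin ↦ ?_⟩
  exact (Subgroup.fg_iff H).2
    ⟨_, closure_insert_image_schreierGenerator H, (hfin.image _).insert _⟩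

/-- The action on edges of the label-preserving map from the Schreier graph of `H` to that of a
larger subgroup `K`. -/
def schreierEdgeMap (h : H ≤ K) (e : (A × Bool) × FreeGroup A ⧸ H) :
    (A × Bool) × FreeGroup A ⧸ K :=
  (e.1, Subgroup.quotientMapOfLE h e.2)

theorem map_schreierEdgeMap_schreierPath (h : H ≤ K) (L : List (A × Bool)) :
    (schreierPath H L).map (schreierEdgeMap h) = schreierPath K L := by
  induction L with
  | nil => rfl
  | cons x L ih => rw [schreierPath, schreierPath, List.map_cons, ih]; rfl

theorem mapsTo_schreierEdgeMap_coreEdges (h : H ≤ K) :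
    Set.MapsTo (schreierEdgeMap h) (coreEdges H) (coreEdges K) := by
  rintro e ⟨L, L_reduced, hL, he⟩
  refine ⟨L, L_reduced, h hL, ?_⟩
  rw [← map_schreierEdgeMap_schreierPath h]
  exact List.mem_map_of_mem he

theorem schreierEdgeMap_inf_injective (H K : Subgroup (FreeGroup A)) :
    Function.Injective fun e : (A × Bool) × FreeGroup A ⧸ H ⊓ K ↦
      (schreierEdgeMap inf_le_left e, schreierEdgeMap inf_le_right e) := by
  rintro ⟨x, v⟩ ⟨y, w⟩ h
  obtain ⟨hH, hK⟩ := Prod.mk.inj h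
  obtain ⟨same_label, same_vertex_H⟩ := Prod.mk.inj hH
  have same_vertex_K := (Prod.mk.inj hK).2
  exact Prod.ext same_label <|
    quotientMapOfLE_inf_injective H K (Prod.ext same_vertex_H same_vertex_K)

end CoreEdges

/-- **Howson's theorem**: the intersection of two finitely generated subgroups of a
free group is finitely generated. -/
theorem freeGroup_howson {A : Type*} (H K : Subgroup (FreeGroup A))
    (hH : H.FG) (hK : K.FG) :
    (H ⊓ K).FG := by
  rw [fg_iff_finite_coreEdges] at hH hK ⊢
  have mapsTo : Set.MapsTo (fun e ↦ (schreierEdgeMap inf_le_left e, schreierEdgeMap inf_le_right e))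
      (coreEdges (H ⊓ K)) (coreEdges H ×ˢ coreEdges K) := fun _ he ↦
    ⟨mapsTo_schreierEdgeMap_coreEdges inf_le_left he,
      mapsTo_schreierEdgeMap_coreEdges inf_le_right he⟩
  exact .of_injOn mapsTo (schreierEdgeMap_inf_injective H K).injOn (hH.prod hK)
end

section
/- Let H and K be finitely generated subgroups of a free group FreeGroup A. Then rr(H ⊓ K) ≤ 2 · rr(H) · rr(K), i.e., rank(H ⊓ K) − 1 ≤ 2 · (rank(H) − 1) · (rank(K) − 1) in truncated natural-number subtraction (the Hanna Neumann inequality). -/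
/-!
Let `F` be the free group on `A`. An `F`-set `X` carries a Schreier graph, with an edge from `x` to
`a • x` for every `x : X` and `a : A`. If `X` is transitive, its rational cycles are spanned by the
loops of any generating set of the stabilizer of a point, and the loops of a free basis of the
stabilizer are linearly independent. Hence every finite subgraph satisfies `-χ ≤ r - 1` when the
stabilizer is generated by `r ≥ 1` elements, and the finite connected subgraph traced out by `n`
elements of a free basis satisfies `-χ ≥ n - 1`.

Apply the second bound to `F ⧸ (H ⊓ K)`, and delete edges at leaves, which does not decrease `-χ`,
until every degree is at least two. The projections to `F ⧸ H` and `F ⧸ K` preserve edge labels, so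
they are injective on the edges at a vertex and do not decrease degrees; jointly they are injective
on vertices. Summing `d - 2 ≤ (d₁ - 2) * (d₂ - 2)`, valid for `2 ≤ d ≤ d₁, d₂`, over the vertices
and using `∑ (d - 2) = -2χ` bounds `-2χ` by the product of the values of `-2χ` of the two images, to
which the first bound applies.
-/

namespace HannaNeumann

open Finset Module

section Rank

variable {G : Type*} [Group G] {H : Subgroup G}

lemma exists_finset_card_eq_rkSubgroup (hH : H.FG) :
    ∃ S : Finset G, #S = rkSubgroup H ∧ Subgroup.closure (S : Set G) = H := by
  obtain ⟨S, hS⟩ := hH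
  exact Nat.sInf_mem (s := {n | ∃ S : Finset G, #S = n ∧ Subgroup.closure (S : Set G) = H})
    ⟨#S, S, rfl, hS⟩

lemma closure_range_freeGroupBasis {ι : Type*} (b : FreeGroupBasis ι G) :
    Subgroup.closure (Set.range b) = ⊤ := by
  have range_eq : Set.range b = b.repr.symm.toMonoidHom '' Set.range FreeGroup.of := by
    rw [← Set.range_comp]
    rfl
  rw [range_eq, ← MonoidHom.map_closure, FreeGroup.closure_range_of]
  exact Subgroup.map_top_of_surjective _ b.repr.symm.surjective

lemma rkSubgroup_le_card_of_freeGroupBasis {ι : Type*} [Fintype ι] (b : FreeGroupBasis ι H) :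
    rkSubgroup H ≤ Fintype.card ι := by
  classical
  let S : Finset G := univ.image fun i ↦ (b i : G)
  have closure_S : Subgroup.closure (S : Set G) = H := by
    have coe_S : (S : Set G) = H.subtype '' Set.range b := by
      ext
      simp [S]
    rw [coe_S, ← MonoidHom.map_closure, closure_range_freeGroupBasis, ← MonoidHom.range_eq_map,
      Subgroup.range_subtype]
  calc rkSubgroup H ≤ #S := Nat.sInf_le ⟨S, rfl, closure_S⟩
    _ ≤ Fintype.card ι := card_image_le

end Rank

section Cocycle

variable {G X M : Type*} [Group G] [MulAction G X] [AddGroup M]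

/-- The 1-cocycles of the action groupoid of `G` on `X`: `c g x` is the value on the arrow
`x ⟶ g • x`, and values add up along composition. -/
def IsCocycle (c : G → X → M) : Prop :=
  ∀ g h x, c (g * h) x = c h x + c g (h • x)

namespace IsCocycle

variable {c : G → X → M}

lemma map_one (hc : IsCocycle c) (x : X) : c 1 x = 0 := by
  simpa using hc 1 1 x

lemma map_inv (hc : IsCocycle c) (g : G) (x : X) : c g⁻¹ x = -c g (g⁻¹ • x) := by
  rw [eq_neg_iff_add_eq_zero, ← hc, mul_inv_cancel, hc.map_one]

lemma comp {N : Type*} [AddGroup N] (hc : IsCocycle c) (f : M →+ N) :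
    IsCocycle fun g x ↦ f (c g x) :=
  fun g h x ↦ (congrArg f (hc g h x)).trans (map_add f _ _)

lemma ext_freeGroup {A : Type*} [MulAction (FreeGroup A) X] {c d : FreeGroup A → X → M}
    (hc : IsCocycle c) (hd : IsCocycle d)
    (h : ∀ a x, c (FreeGroup.of a) x = d (FreeGroup.of a) x) : c = d := by
  ext g x
  induction g using FreeGroup.induction_on generalizing x with
  | C1 => rw [hc.map_one, hd.map_one]
  | of a => exact h a x
  | inv_of a ih => rw [hc.map_inv, hd.map_inv, ih]
  | mul g g' ih ih' => rw [hc, hd, ih, ih']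

end IsCocycle

lemma isCocycle_smul_sub {M : Type*} [AddCommGroup M] (u : X → M) :
    IsCocycle fun (g : G) x ↦ u (g • x) - u x :=
  fun g h x ↦ by simp only [mul_smul]; abel

end Cocycle

section SchreierElement

variable {G X : Type*} [Group G] [MulAction G X] {x₀ : X}

/-- The Schreier element of the arrow `x ⟶ g • x` for a transversal `t` of the stabilizer of `x₀`:
the loop at `x₀` that travels to `x` along `t`, applies `g`, and returns along `t`. -/
def schreierElement (t : X → G) (ht : ∀ x, t x • x₀ = x) (g : G) (x : X) :
    MulAction.stabilizer G x₀ :=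
  ⟨(t (g • x))⁻¹ * g * t x, by
    rw [MulAction.mem_stabilizer_iff, mul_smul, mul_smul, ht, inv_smul_eq_iff, ht]⟩

variable (t : X → G) (ht : ∀ x, t x • x₀ = x)

lemma coe_schreierElement (g : G) (x : X) :
    (schreierElement t ht g x : G) = (t (g • x))⁻¹ * g * t x :=
  rfl

lemma schreierElement_mul (g h : G) (x : X) :
    schreierElement t ht (g * h) x =
      schreierElement t ht g (h • x) * schreierElement t ht h x := by
  ext
  simp only [coe_schreierElement, Subgroup.coe_mul, mul_smul]
  group

lemma schreierElement_of_mem_stabilizer (h : MulAction.stabilizer G x₀) :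
    schreierElement t ht h x₀ =
      (⟨t x₀, ht x₀⟩ : MulAction.stabilizer G x₀)⁻¹ * h * ⟨t x₀, ht x₀⟩ := by
  ext
  simp [coe_schreierElement, MulAction.mem_stabilizer_iff.1 h.2]

lemma isCocycle_toAdd_schreierElement {M : Type*} [AddCommGroup M]
    (φ : MulAction.stabilizer G x₀ →* Multiplicative M) :
    IsCocycle fun g x ↦ (φ (schreierElement t ht g x)).toAdd :=
  fun g h x ↦ by
    simp only [schreierElement_mul, map_mul, toAdd_mul]
    exact add_comm _ _

end SchreierElement

variable {A X : Type*} [MulAction (FreeGroup A) X]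

section Chain

/-- The permutation by which the letter `a` acts on the skew product `X × M`: it moves the point
along the edge `(x, a)` and adds the weight `f (x, a)` of that edge. -/
def skewPerm {M : Type*} [AddGroup M] (f : X × A → M) (a : A) : Equiv.Perm (X × M) where
  toFun p := (FreeGroup.of a • p.1, p.2 + f (p.1, a))
  invFun p := ((FreeGroup.of a)⁻¹ • p.1, p.2 - f ((FreeGroup.of a)⁻¹ • p.1, a))
  left_inv p := by simp
  right_inv p := by simp

/-- The sum of the edge weights `f` along the path that starts at `x` and is spelled by `g`, an
edge traversed backwards counting negatively. -/
def pathSum {M : Type*} [AddGroup M] (f : X × A → M) (g : FreeGroup A) (x : X) : M :=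
  (FreeGroup.lift (skewPerm f) g (x, 0)).2

lemma lift_skewPerm_apply {M : Type*} [AddGroup M] (f : X × A → M) (g : FreeGroup A) (x : X)
    (m : M) : FreeGroup.lift (skewPerm f) g (x, m) = (g • x, m + pathSum f g x) := by
  induction g using FreeGroup.induction_on generalizing x m with
  | C1 => simp [pathSum]
  | of a => simp [pathSum, skewPerm]
  | inv_of a _ =>
    simp [pathSum, skewPerm, Equiv.Perm.inv_def, sub_eq_add_neg]
  | mul g h ihg ihh =>
    simp only [pathSum, map_mul, Equiv.Perm.mul_apply]
    rw [ihh, ihg, ihh x 0, ihg]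
    simp only [mul_smul, zero_add, add_assoc]

lemma pathSum_of {M : Type*} [AddGroup M] (f : X × A → M) (a : A) (x : X) :
    pathSum f (FreeGroup.of a) x = f (x, a) := by
  simp [pathSum, skewPerm]

lemma isCocycle_pathSum {M : Type*} [AddGroup M] (f : X × A → M) : IsCocycle (pathSum f) := by
  intro g h x
  have action_mul := lift_skewPerm_apply f (g * h) x 0
  rw [map_mul, Equiv.Perm.mul_apply, lift_skewPerm_apply, lift_skewPerm_apply] at action_mul
  simpa using (congrArg Prod.snd action_mul).symm

/-- The rational 1-chain of the path that starts at `x` and is spelled by `g`, in the Schreier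
graph of the action: the pair `(x, a)` stands for the edge from `x` to `a • x` labelled `a`. -/
noncomputable def chain : FreeGroup A → X → (X × A →₀ ℚ) :=
  pathSum fun e ↦ Finsupp.single e 1

lemma chain_of (a : A) (x : X) : chain (FreeGroup.of a) x = Finsupp.single (x, a) 1 :=
  pathSum_of _ a x

lemma isCocycle_chain : IsCocycle (chain : FreeGroup A → X → (X × A →₀ ℚ)) :=
  isCocycle_pathSum _

lemma linearMap_chain_eq_of_isCocycle {M : Type*} [AddCommGroup M] [Module ℚ M]
    (L : (X × A →₀ ℚ) →ₗ[ℚ] M) {c : FreeGroup A → X → M} (hc : IsCocycle c)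
    (hL : ∀ a x, L (Finsupp.single (x, a) 1) = c (FreeGroup.of a) x) (g : FreeGroup A) (x : X) :
    L (chain g x) = c g x := by
  have cocycles_eq := (isCocycle_chain.comp L.toAddMonoidHom).ext_freeGroup hc fun a x ↦ by
    simpa [chain_of] using hL a x
  exact congrFun₂ cocycles_eq g x

end Chain

section Homology

/-- The endpoint of an edge of the Schreier graph. -/
def target (e : X × A) : X :=
  FreeGroup.of e.2 • e.1

/-- The simplicial boundary map of the Schreier graph. -/
noncomputable def boundary : (X × A →₀ ℚ) →ₗ[ℚ] (X →₀ ℚ) :=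
  Finsupp.linearCombination ℚ fun e ↦ Finsupp.single (target e) 1 - Finsupp.single e.1 1

lemma boundary_single (e : X × A) :
    boundary (Finsupp.single e 1) = Finsupp.single (target e) 1 - Finsupp.single e.1 1 := by
  simp [boundary]

lemma boundary_chain (g : FreeGroup A) (x : X) :
    boundary (chain g x) = Finsupp.single (g • x) 1 - Finsupp.single x 1 :=
  linearMap_chain_eq_of_isCocycle boundary (isCocycle_smul_sub fun x ↦ Finsupp.single x 1)
    (fun a x ↦ boundary_single (x, a)) g x

lemma linearCombination_one_boundary (c : X × A →₀ ℚ) :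
    Finsupp.linearCombination ℚ (fun _ ↦ (1 : ℚ)) (boundary c) = 0 := by
  induction c using Finsupp.induction_linear with
  | zero => simp
  | add c d ihc ihd => simp [ihc, ihd]
  | single e r => simp [boundary]

section StabilizerChains

variable {x₀ : X}

lemma chain_mul_of_smul_eq {h : FreeGroup A} (hh : h • x₀ = x₀) (g : FreeGroup A) :
    chain (g * h) x₀ = chain h x₀ + chain g x₀ := by
  rw [isCocycle_chain, hh]

lemma chain_mem_span_of_mem_closure {S : Set (FreeGroup A)} (hS : ∀ s ∈ S, s • x₀ = x₀)
    {h : FreeGroup A} (hh : h ∈ Subgroup.closure S) :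
    chain h x₀ ∈ Submodule.span ℚ ((chain · x₀) '' S) := by
  have closure_le : Subgroup.closure S ≤ MulAction.stabilizer (FreeGroup A) x₀ :=
    (Subgroup.closure_le _).2 hS
  induction hh using Subgroup.closure_induction with
  | mem s hs => exact Submodule.subset_span (Set.mem_image_of_mem _ hs)
  | one => rw [isCocycle_chain.map_one]; exact zero_mem _
  | mul g h _ hh ihg ihh =>
    rw [chain_mul_of_smul_eq (closure_le hh)]
    exact add_mem ihh ihg
  | inv g hg ih =>
    rw [isCocycle_chain.map_inv, MulAction.mem_stabilizer_iff.1 (closure_le (inv_mem hg))]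
    exact neg_mem ih

lemma chain_schreierElement (t : X → FreeGroup A) (ht : ∀ x, t x • x₀ = x) (e : X × A) :
    chain (schreierElement t ht (FreeGroup.of e.2) e.1 : FreeGroup A) x₀ =
      Finsupp.single e 1 - (chain (t (target e)) x₀ - chain (t e.1) x₀) := by
  set s := schreierElement t ht (FreeGroup.of e.2) e.1
  have two_paths : t (target e) * s = FreeGroup.of e.2 * t e.1 := by
    simp [s, coe_schreierElement, target, mul_assoc]
  have chains_eq := congrArg (chain · x₀) two_paths
  simp only [chain_mul_of_smul_eq s.2, isCocycle_chain _ (t e.1), ht, chain_of] at chains_eq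
  rw [eq_sub_of_add_eq chains_eq]
  abel

-- The chains of the transversal paths define a section of the boundary map up to loops: the
-- defect on each edge is the chain of its Schreier element.
lemma mem_span_chain_of_boundary_eq_zero [MulAction.IsPretransitive (FreeGroup A) X] (x₀ : X)
    {z : X × A →₀ ℚ} (hz : boundary z = 0) :
    z ∈ Submodule.span ℚ
      ((chain · x₀) '' (MulAction.stabilizer (FreeGroup A) x₀ : Set (FreeGroup A))) := by
  set W := Submodule.span ℚ
    ((chain · x₀) '' (MulAction.stabilizer (FreeGroup A) x₀ : Set (FreeGroup A)))
  choose t ht using fun x : X ↦ MulAction.exists_smul_eq (FreeGroup A) x₀ x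
  let θ : (X →₀ ℚ) →ₗ[ℚ] (X × A →₀ ℚ) := Finsupp.linearCombination ℚ fun x ↦ chain (t x) x₀
  have defect_edge (e : X × A) : Finsupp.single e 1 - θ (boundary (Finsupp.single e 1)) ∈ W := by
    have defect_eq : Finsupp.single e 1 - θ (boundary (Finsupp.single e 1)) =
        chain (schreierElement t ht (FreeGroup.of e.2) e.1 : FreeGroup A) x₀ := by
      simp [chain_schreierElement, boundary_single, θ]
    rw [defect_eq]
    exact Submodule.subset_span (Set.mem_image_of_mem _ (SetLike.coe_mem _))
  have defect (c : X × A →₀ ℚ) : c - θ (boundary c) ∈ W := by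
    induction c using Finsupp.induction_linear with
    | zero => simp
    | add c d ihc ihd => simpa [add_sub_add_comm] using add_mem ihc ihd
    | single e r =>
      rw [← mul_one r, ← smul_eq_mul, ← Finsupp.smul_single, map_smul, map_smul, ← smul_sub]
      exact W.smul_mem r (defect_edge e)
  simpa [hz] using defect z

lemma exists_linearMap_chain_eq [MulAction.IsPretransitive (FreeGroup A) X]
    {M : Type*} [AddCommGroup M] [Module ℚ M]
    (φ : MulAction.stabilizer (FreeGroup A) x₀ →* Multiplicative M) :
    ∃ L : (X × A →₀ ℚ) →ₗ[ℚ] M,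
      ∀ h : MulAction.stabilizer (FreeGroup A) x₀, L (chain (h : FreeGroup A) x₀) =
        (φ h).toAdd := by
  choose t ht using fun x : X ↦ MulAction.exists_smul_eq (FreeGroup A) x₀ x
  let c (g : FreeGroup A) (x : X) : M := (φ (schreierElement t ht g x)).toAdd
  let L : (X × A →₀ ℚ) →ₗ[ℚ] M :=
    Finsupp.linearCombination ℚ fun e ↦ c (FreeGroup.of e.2) e.1
  have L_chain (g : FreeGroup A) (x : X) : L (chain g x) = c g x :=
    linearMap_chain_eq_of_isCocycle L (isCocycle_toAdd_schreierElement t ht φ)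
      (fun a x ↦ by simp [L, c]) g x
  refine ⟨L, fun h ↦ ?_⟩
  rw [L_chain]
  simp only [c, schreierElement_of_mem_stabilizer, map_mul, map_inv]
  rw [mul_right_comm, inv_mul_cancel, one_mul]

theorem linearIndependent_chain_freeGroupBasis [MulAction.IsPretransitive (FreeGroup A) X]
    {ι : Type*} (b : FreeGroupBasis ι (MulAction.stabilizer (FreeGroup A) x₀)) :
    LinearIndependent ℚ fun i ↦ chain (b i : FreeGroup A) x₀ := by
  obtain ⟨L, hL⟩ := exists_linearMap_chain_eq
    (b.lift fun i ↦ Multiplicative.ofAdd (Finsupp.single i (1 : ℚ)))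
  refine LinearIndependent.of_comp L ?_
  have L_comp : (L ∘ fun i ↦ chain (b i : FreeGroup A) x₀) = fun i ↦ Finsupp.single i (1 : ℚ) := by
    ext1 i
    simp [hL, FreeGroupBasis.lift_apply_apply]
  rw [L_comp]
  exact Finsupp.linearIndependent_single_one ℚ ι

end StabilizerChains

end Homology

section LinearAlgebra

variable {k V W : Type*} [Field k] [AddCommGroup V] [Module k V] [AddCommGroup W] [Module k W]

lemma finrank_map_add_finrank_inf_ker (p : Submodule k V) [FiniteDimensional k p]
    (f : V →ₗ[k] W) :
    finrank k (p.map f) + finrank k (p ⊓ LinearMap.ker f : Submodule k V) = finrank k p := by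
  rw [← LinearMap.range_domRestrict, ← Submodule.map_comap_subtype,
    Submodule.finrank_map_subtype_eq]
  exact LinearMap.finrank_range_add_finrank_ker (f.domRestrict p)

instance finiteDimensional_supported {ι : Type*} (s : Finset ι) :
    FiniteDimensional k (Finsupp.supported k k (s : Set ι)) :=
  (Finsupp.supportedEquivFinsupp (s : Set ι)).symm.finiteDimensional

lemma finrank_supported {ι : Type*} (s : Finset ι) :
    finrank k (Finsupp.supported k k (s : Set ι)) = #s := by
  simp [(Finsupp.supportedEquivFinsupp (s : Set ι)).finrank_eq]

end LinearAlgebra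

section FiniteSubgraph

/-- The space of rational 1-chains of the finite subgraph with edge set `E`. -/
abbrev chains {X A : Type*} (E : Finset (X × A)) : Submodule ℚ (X × A →₀ ℚ) :=
  Finsupp.supported ℚ ℚ (E : Set (X × A))

/-- The space of rational 1-cycles of the finite subgraph with edge set `E`. -/
noncomputable abbrev cycles (E : Finset (X × A)) : Submodule ℚ (X × A →₀ ℚ) :=
  chains E ⊓ LinearMap.ker boundary

/-- The space of rational 0-boundaries of the finite subgraph with edge set `E`. -/
noncomputable abbrev boundaries (E : Finset (X × A)) : Submodule ℚ (X →₀ ℚ) :=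
  (chains E).map boundary

lemma finrank_boundaries_add_finrank_cycles (E : Finset (X × A)) :
    finrank ℚ (boundaries E) + finrank ℚ (cycles E) = #E := by
  rw [finrank_map_add_finrank_inf_ker, finrank_supported]

lemma chains_mono {X A : Type*} {E F : Finset (X × A)} (h : E ⊆ F) : chains E ≤ chains F :=
  Finsupp.supported_mono (coe_subset.2 h)

lemma boundaries_mono {E F : Finset (X × A)} (h : E ⊆ F) : boundaries E ≤ boundaries F :=
  Submodule.map_mono (chains_mono h)

lemma single_target_sub_single_mem_boundaries {E : Finset (X × A)} {e : X × A} (he : e ∈ E) :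
    Finsupp.single (target e) 1 - Finsupp.single e.1 1 ∈ boundaries E :=
  ⟨Finsupp.single e 1, Finsupp.single_mem_supported ℚ 1 he, boundary_single e⟩

lemma single_smul_sub_single_mem_boundaries {E : Finset (X × A)} {g : FreeGroup A} {x : X}
    (hg : chain g x ∈ chains E) :
    Finsupp.single (g • x) 1 - Finsupp.single x 1 ∈ boundaries E :=
  ⟨chain g x, hg, boundary_chain g x⟩

lemma finrank_cycles_le_card [MulAction.IsPretransitive (FreeGroup A) X] {x₀ : X}
    {S : Finset (FreeGroup A)}
    (hS : Subgroup.closure (S : Set (FreeGroup A)) = MulAction.stabilizer (FreeGroup A) x₀)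
    (E : Finset (X × A)) : finrank ℚ (cycles E) ≤ #S := by
  classical
  have smul_base (s) (hs : s ∈ (S : Set (FreeGroup A))) : s • x₀ = x₀ :=
    hS.le (Subgroup.subset_closure hs)
  have cycles_le : cycles E ≤ Submodule.span ℚ ((S.image (chain · x₀) : Finset (X × A →₀ ℚ)) :
      Set (X × A →₀ ℚ)) := by
    rintro z ⟨-, hz⟩
    rw [coe_image]
    refine Submodule.span_le.2 ?_ (mem_span_chain_of_boundary_eq_zero x₀ hz)
    rintro _ ⟨h, hh, rfl⟩
    exact chain_mem_span_of_mem_closure smul_base (hS.ge hh)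
  calc finrank ℚ (cycles E) ≤ _ := Submodule.finrank_mono cycles_le
    _ ≤ #(S.image (chain · x₀)) := finrank_span_finset_le_card _
    _ ≤ #S := card_image_le

lemma card_le_finrank_cycles [MulAction.IsPretransitive (FreeGroup A) X] {x₀ : X} {ι : Type*}
    (b : FreeGroupBasis ι (MulAction.stabilizer (FreeGroup A) x₀)) {T : Finset ι}
    {E : Finset (X × A)} (hE : ∀ i ∈ T, chain (b i : FreeGroup A) x₀ ∈ chains E) :
    #T ≤ finrank ℚ (cycles E) := by
  have mem_cycles (i : T) : chain (b i : FreeGroup A) x₀ ∈ cycles E := by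
    refine ⟨hE i i.2, ?_⟩
    rw [SetLike.mem_coe, LinearMap.mem_ker, boundary_chain,
      MulAction.mem_stabilizer_iff.1 (b i).2, sub_self]
  have independent : LinearIndependent ℚ fun i : T ↦ (⟨_, mem_cycles i⟩ : cycles E) :=
    .of_comp (cycles E).subtype <|
      (linearIndependent_chain_freeGroupBasis b).comp _ Subtype.val_injective
  simpa using independent.fintype_card_le_finrank

variable [DecidableEq X]

/-- The set of endpoints of the edges in `E`. -/
def vertices (E : Finset (X × A)) : Finset X :=
  E.image Prod.fst ∪ E.image target

lemma mem_vertices {E : Finset (X × A)} {v : X} :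
    v ∈ vertices E ↔ ∃ e ∈ E, e.1 = v ∨ target e = v := by
  simp only [vertices, mem_union, mem_image]
  grind

lemma fst_mem_vertices {E : Finset (X × A)} {e : X × A} (he : e ∈ E) : e.1 ∈ vertices E :=
  mem_vertices.2 ⟨e, he, .inl rfl⟩

lemma target_mem_vertices {E : Finset (X × A)} {e : X × A} (he : e ∈ E) :
    target e ∈ vertices E :=
  mem_vertices.2 ⟨e, he, .inr rfl⟩

lemma boundaries_le_supported_vertices (E : Finset (X × A)) :
    boundaries E ≤ Finsupp.supported ℚ ℚ (vertices E : Set X) := by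
  rw [boundaries, chains, Finsupp.supported_eq_span_single, Submodule.map_span_le]
  rintro _ ⟨e, he, rfl⟩
  rw [boundary_single]
  exact sub_mem (Finsupp.single_mem_supported ℚ 1 (target_mem_vertices he))
    (Finsupp.single_mem_supported ℚ 1 (fst_mem_vertices he))

-- Boundaries have coefficient sum zero, so they do not fill the space of 0-chains.
lemma finrank_boundaries_lt_card_vertices {E : Finset (X × A)} (hE : E.Nonempty) :
    finrank ℚ (boundaries E) < #(vertices E) := by
  obtain ⟨e, he⟩ := hE
  rw [← finrank_supported (k := ℚ) (vertices E)]
  refine Submodule.finrank_lt_finrank_of_lt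
    (SetLike.lt_iff_le_and_exists.2 ⟨boundaries_le_supported_vertices E, Finsupp.single e.1 1,
      Finsupp.single_mem_supported ℚ 1 (fst_mem_vertices he), ?_⟩)
  rintro ⟨c, -, hc⟩
  simpa [hc] using linearCombination_one_boundary c

/-- Connectedness of the subgraph with edge set `E` and base vertex `x`, in homological form: all
its vertices are homologous to `x` inside the subgraph. -/
def IsConnectedFrom (x : X) (E : Finset (X × A)) : Prop :=
  ∀ v ∈ vertices E, Finsupp.single v 1 - Finsupp.single x 1 ∈ boundaries E

namespace IsConnectedFrom

lemma change_base {x y : X} {E : Finset (X × A)} (hE : IsConnectedFrom x E)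
    (hxy : Finsupp.single x 1 - Finsupp.single y 1 ∈ boundaries E) : IsConnectedFrom y E :=
  fun v hv ↦ by simpa using add_mem (hE v hv) hxy

lemma union [DecidableEq A] {x y : X} {E F : Finset (X × A)} (hE : IsConnectedFrom x E)
    (hF : IsConnectedFrom y F) (hyx : Finsupp.single y 1 - Finsupp.single x 1 ∈ boundaries E) :
    IsConnectedFrom x (E ∪ F) := by
  intro v hv
  obtain ⟨e, he, hev⟩ := mem_vertices.1 hv
  rcases mem_union.1 he with he | he
  · exact boundaries_mono subset_union_left (hE v (mem_vertices.2 ⟨e, he, hev⟩))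
  · simpa using add_mem (boundaries_mono subset_union_right (hF v (mem_vertices.2 ⟨e, he, hev⟩)))
      (boundaries_mono subset_union_left hyx)

lemma biUnion [DecidableEq A] {ι : Type*} {x : X} {T : Finset ι} {E : ι → Finset (X × A)}
    (hE : ∀ i ∈ T, IsConnectedFrom x (E i)) : IsConnectedFrom x (T.biUnion E) := by
  intro v hv
  obtain ⟨e, he, hev⟩ := mem_vertices.1 hv
  obtain ⟨i, hi, hei⟩ := mem_biUnion.1 he
  exact boundaries_mono (subset_biUnion_of_mem E hi) (hE i hi v (mem_vertices.2 ⟨e, hei, hev⟩))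

lemma card_vertices_le {x : X} {E : Finset (X × A)} (hE : IsConnectedFrom x E) :
    #(vertices E) ≤ finrank ℚ (boundaries E) + 1 := by
  have vertices_le : Finsupp.supported ℚ ℚ (vertices E : Set X) ≤
      boundaries E ⊔ Submodule.span ℚ {Finsupp.single x 1} := by
    rw [Finsupp.supported_eq_span_single, Submodule.span_le]
    rintro _ ⟨v, hv, rfl⟩
    simpa using Submodule.add_mem_sup (hE v hv)
      (Submodule.mem_span_singleton_self (R := ℚ) (Finsupp.single x 1))
  calc #(vertices E) = finrank ℚ (Finsupp.supported ℚ ℚ (vertices E : Set X)) :=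
        (finrank_supported _).symm
    _ ≤ _ := Submodule.finrank_mono vertices_le
    _ ≤ _ := Submodule.finrank_add_le_finrank_add_finrank _ _
    _ ≤ finrank ℚ (boundaries E) + 1 := by
      gcongr
      simpa using finrank_span_le_card ({Finsupp.single x 1} : Set (X →₀ ℚ))

end IsConnectedFrom

lemma exists_isConnectedFrom_chain_mem_chains (g : FreeGroup A) (x : X) :
    ∃ E : Finset (X × A), IsConnectedFrom x E ∧ chain g x ∈ chains E := by
  classical
  induction g using FreeGroup.induction_on generalizing x with
  | C1 => exact ⟨∅, by simp [IsConnectedFrom, vertices], by simp [isCocycle_chain.map_one]⟩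
  | of a =>
    refine ⟨{(x, a)}, fun v hv ↦ ?_, ?_⟩
    · obtain ⟨e, he, rfl | rfl⟩ := mem_vertices.1 hv <;> obtain rfl := mem_singleton.1 he
      · simp
      · exact single_target_sub_single_mem_boundaries he
    · rw [chain_of]
      exact Finsupp.single_mem_supported ℚ 1 (by simp)
  | inv_of a ih =>
    obtain ⟨E, hE, ha⟩ := ih ((FreeGroup.of a)⁻¹ • x)
    refine ⟨E, hE.change_base ?_, by simpa [isCocycle_chain.map_inv] using ha⟩
    rw [← neg_sub]
    simpa using neg_mem (single_smul_sub_single_mem_boundaries ha)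
  | mul g h ihg ihh =>
    obtain ⟨E, hE, hh⟩ := ihh x
    obtain ⟨F, hF, hg⟩ := ihg (h • x)
    refine ⟨E ∪ F, hE.union hF (single_smul_sub_single_mem_boundaries hh), ?_⟩
    rw [isCocycle_chain]
    exact add_mem (chains_mono subset_union_left hh) (chains_mono subset_union_right hg)

end FiniteSubgraph

section EulerCharacteristic

variable [DecidableEq X]

/-- Minus the Euler characteristic of the subgraph with edge set `E`. For a connected graph this is
the rank of its fundamental group minus one. -/
def negEulerChar (E : Finset (X × A)) : ℤ :=
  #E - #(vertices E)

lemma negEulerChar_le_card_sub_one [MulAction.IsPretransitive (FreeGroup A) X] {x₀ : X}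
    {S : Finset (FreeGroup A)}
    (hS : Subgroup.closure (S : Set (FreeGroup A)) = MulAction.stabilizer (FreeGroup A) x₀)
    (E : Finset (X × A)) : negEulerChar E ≤ (#S - 1 : ℕ) := by
  rcases E.eq_empty_or_nonempty with rfl | hE
  · simp [negEulerChar, vertices]
  · have edges := finrank_boundaries_add_finrank_cycles E
    have vertices_bound := finrank_boundaries_lt_card_vertices hE
    have cycles_bound := finrank_cycles_le_card hS E
    unfold negEulerChar
    omega

theorem negEulerChar_le_rkSubgroup_sub_one [MulAction.IsPretransitive (FreeGroup A) X] {x₀ : X}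
    (hfg : (MulAction.stabilizer (FreeGroup A) x₀).FG) (E : Finset (X × A)) :
    negEulerChar E ≤ (rkSubgroup (MulAction.stabilizer (FreeGroup A) x₀) - 1 : ℕ) := by
  obtain ⟨S, card_S, closure_S⟩ := exists_finset_card_eq_rkSubgroup hfg
  exact card_S ▸ negEulerChar_le_card_sub_one closure_S E

theorem exists_card_sub_one_le_negEulerChar [MulAction.IsPretransitive (FreeGroup A) X] {x₀ : X}
    {ι : Type*} (b : FreeGroupBasis ι (MulAction.stabilizer (FreeGroup A) x₀)) (T : Finset ι) :
    ∃ E : Finset (X × A), #T - 1 ≤ negEulerChar E := by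
  classical
  choose E hE hb using fun i ↦ exists_isConnectedFrom_chain_mem_chains (b i : FreeGroup A) x₀
  refine ⟨T.biUnion E, ?_⟩
  have edges := finrank_boundaries_add_finrank_cycles (T.biUnion E)
  have vertices_bound := (IsConnectedFrom.biUnion fun i (_ : i ∈ T) ↦ hE i).card_vertices_le
  have cycles_bound : #T ≤ finrank ℚ (cycles (T.biUnion E)) :=
    card_le_finrank_cycles b fun i hi ↦ chains_mono (subset_biUnion_of_mem E hi) (hb i)
  unfold negEulerChar
  omega

end EulerCharacteristic

section Leafless

variable [DecidableEq X]

/-- The degree of `v` in the subgraph with edge set `E`; a loop at `v` counts twice. -/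
def degree (E : Finset (X × A)) (v : X) : ℕ :=
  #{e ∈ E | e.1 = v} + #{e ∈ E | target e = v}

/-- The subgraph with edge set `E` has no vertex of degree one. -/
def IsLeafless (E : Finset (X × A)) : Prop :=
  ∀ v ∈ vertices E, 2 ≤ degree E v

lemma sum_degree_sub_two (E : Finset (X × A)) :
    ∑ v ∈ vertices E, ((degree E v : ℤ) - 2) = 2 * negEulerChar E := by
  have card_by_fst := card_eq_sum_card_fiberwise (f := Prod.fst) (s := E) (t := vertices E)
    fun _ he ↦ fst_mem_vertices he
  have card_by_target := card_eq_sum_card_fiberwise (f := target) (s := E) (t := vertices E)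
    fun _ he ↦ target_mem_vertices he
  have sum_degree : ∑ v ∈ vertices E, degree E v = 2 * #E := by
    simp only [degree, sum_add_distrib]
    omega
  rw [sum_sub_distrib, ← Nat.cast_sum, sum_degree, negEulerChar, sum_const, nsmul_eq_mul]
  push_cast
  ring

lemma eq_of_degree_le_one {E : Finset (X × A)} {v : X} (hv : degree E v ≤ 1) {e e' : X × A}
    (he : e ∈ E) (he' : e' ∈ E) (hev : e.1 = v ∨ target e = v) (hev' : e'.1 = v ∨ target e' = v) :
    e = e' := by
  classical
  have card_incident : #({e ∈ E | e.1 = v} ∪ {e ∈ E | target e = v}) ≤ 1 :=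
    (card_union_le _ _).trans hv
  exact card_le_one.1 card_incident e (by simp [he, hev]) e' (by simp [he', hev'])

lemma negEulerChar_le_negEulerChar_erase [DecidableEq A] {E : Finset (X × A)} {v : X}
    (hv : degree E v ≤ 1) {e : X × A} (he : e ∈ E) (hev : e.1 = v ∨ target e = v) :
    negEulerChar E ≤ negEulerChar (E.erase e) := by
  have hvE : v ∈ vertices E := mem_vertices.2 ⟨e, he, hev⟩
  have vertices_subset : vertices (E.erase e) ⊆ (vertices E).erase v := by
    intro w hw
    obtain ⟨e', he', hew⟩ := mem_vertices.1 hw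
    obtain ⟨hne, he'E⟩ := mem_erase.1 he'
    refine mem_erase.2 ⟨?_, mem_vertices.2 ⟨e', he'E, hew⟩⟩
    rintro rfl
    exact hne (eq_of_degree_le_one hv he'E he hew hev)
  have card_edges := card_erase_add_one he
  have card_vertices := card_le_card vertices_subset
  have card_vertices_erase := card_erase_add_one hvE
  unfold negEulerChar
  omega

theorem exists_isLeafless_negEulerChar_le (E : Finset (X × A)) :
    ∃ F : Finset (X × A), IsLeafless F ∧ negEulerChar E ≤ negEulerChar F := by
  classical
  induction E using Finset.strongInduction with
  | H E ih =>
    by_cases hE : IsLeafless E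
    · exact ⟨E, hE, le_rfl⟩
    · obtain ⟨v, hv, hdeg⟩ : ∃ v ∈ vertices E, degree E v < 2 := by
        simpa [IsLeafless] using hE
      obtain ⟨e, he, hev⟩ := mem_vertices.1 hv
      obtain ⟨F, hF, hle⟩ := ih (E.erase e) (erase_ssubset he)
      exact ⟨F, hF, (negEulerChar_le_negEulerChar_erase (by omega) he hev).trans hle⟩

lemma IsLeafless.negEulerChar_nonneg {E : Finset (X × A)} (hE : IsLeafless E) :
    0 ≤ negEulerChar E := by
  have sum_nonneg : 0 ≤ ∑ v ∈ vertices E, ((degree E v : ℤ) - 2) :=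
    Finset.sum_nonneg fun v hv ↦ by have := hE v hv; omega
  rw [sum_degree_sub_two] at sum_nonneg
  omega

end Leafless

section EquivariantImage

variable {Y Z : Type*} [MulAction (FreeGroup A) Y] [MulAction (FreeGroup A) Z]

lemma target_map (p : X →[FreeGroup A] Y) (e : X × A) : target (p e.1, e.2) = p (target e) :=
  (map_smul p _ _).symm

variable [DecidableEq A] [DecidableEq X] [DecidableEq Y] [DecidableEq Z]

/-- The image of a set of edges under the label-preserving graph morphism induced by an equivariant
map. -/
def mapEdges (p : X →[FreeGroup A] Y) (E : Finset (X × A)) : Finset (Y × A) :=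
  E.image fun e ↦ (p e.1, e.2)

lemma vertices_mapEdges (p : X →[FreeGroup A] Y) (E : Finset (X × A)) :
    vertices (mapEdges p E) = (vertices E).image p := by
  simp only [vertices, mapEdges, image_union, image_image, Function.comp_def, target_map]

-- The graph morphism induced by an equivariant map is an immersion: an edge is determined by its
-- label and either of its endpoints.
lemma degree_le_degree_mapEdges (p : X →[FreeGroup A] Y) (E : Finset (X × A)) (v : X) :
    degree E v ≤ degree (mapEdges p E) (p v) := by
  refine Nat.add_le_add (card_le_card_of_injOn (fun e ↦ (p e.1, e.2)) ?_ ?_)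
    (card_le_card_of_injOn (fun e ↦ (p e.1, e.2)) ?_ ?_)
  · intro e he
    simp only [mem_coe, mem_filter, mapEdges] at he ⊢
    exact ⟨mem_image_of_mem _ he.1, congrArg p he.2⟩
  · intro e he e' he' heq
    simp only [mem_coe, mem_filter, Prod.mk.injEq] at he he' heq
    exact Prod.ext (he.2.trans he'.2.symm) heq.2
  · intro e he
    simp only [mem_coe, mem_filter, mapEdges, target_map] at he ⊢
    exact ⟨mem_image_of_mem _ he.1, congrArg p he.2⟩
  · intro e he e' he' heq
    simp only [mem_coe, mem_filter, Prod.mk.injEq] at he he' heq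
    have targets_eq : target e = target e' := he.2.trans he'.2.symm
    rw [target, target, heq.2] at targets_eq
    exact Prod.ext (smul_left_cancel _ targets_eq) heq.2

lemma IsLeafless.map {E : Finset (X × A)} (hE : IsLeafless E) (p : X →[FreeGroup A] Y) :
    IsLeafless (mapEdges p E) := by
  intro w hw
  rw [vertices_mapEdges] at hw
  obtain ⟨v, hv, rfl⟩ := mem_image.1 hw
  exact (hE v hv).trans (degree_le_degree_mapEdges p E v)

lemma sub_two_le_mul_sub_two {d m n : ℕ} (hd : 2 ≤ d) (hm : d ≤ m) (hn : d ≤ n) :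
    (d : ℤ) - 2 ≤ (m - 2) * (n - 2) := by
  obtain ⟨d, rfl⟩ := Nat.exists_eq_add_of_le hd
  obtain ⟨m, rfl⟩ := Nat.exists_eq_add_of_le hm
  obtain ⟨n, rfl⟩ := Nat.exists_eq_add_of_le hn
  push_cast
  have self_le_sq : (d : ℤ) ≤ d * d := mod_cast Nat.le_mul_self d
  have cross_nonneg : (0 : ℤ) ≤ d * n + m * d + m * n := by positivity
  linarith

theorem IsLeafless.negEulerChar_le_two_mul {E : Finset (X × A)} (hE : IsLeafless E)
    {p : X →[FreeGroup A] Y} {q : X →[FreeGroup A] Z}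
    (hpq : Function.Injective fun x ↦ (p x, q x)) :
    negEulerChar E ≤ 2 * (negEulerChar (mapEdges p E) * negEulerChar (mapEdges q E)) := by
  let d (v : X) : ℤ := degree E v - 2
  let dp (y : Y) : ℤ := degree (mapEdges p E) y - 2
  let dq (z : Z) : ℤ := degree (mapEdges q E) z - 2
  have dp_nonneg {y} (hy : y ∈ vertices (mapEdges p E)) : 0 ≤ dp y := by
    have := hE.map p y hy
    simp only [dp]
    omega
  have dq_nonneg {z} (hz : z ∈ vertices (mapEdges q E)) : 0 ≤ dq z := by
    have := hE.map q z hz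
    simp only [dq]
    omega
  have image_subset : (vertices E).image (fun v ↦ (p v, q v)) ⊆
      vertices (mapEdges p E) ×ˢ vertices (mapEdges q E) := by
    intro w hw
    obtain ⟨v, hv, rfl⟩ := mem_image.1 hw
    simp only [vertices_mapEdges, mem_product]
    exact ⟨mem_image_of_mem _ hv, mem_image_of_mem _ hv⟩
  have sum_le : ∑ v ∈ vertices E, d v ≤
      (∑ y ∈ vertices (mapEdges p E), dp y) * ∑ z ∈ vertices (mapEdges q E), dq z :=
    calc ∑ v ∈ vertices E, d v ≤ ∑ v ∈ vertices E, dp (p v) * dq (q v) :=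
          sum_le_sum fun v hv ↦ sub_two_le_mul_sub_two (hE v hv)
            (degree_le_degree_mapEdges p E v) (degree_le_degree_mapEdges q E v)
      _ = ∑ w ∈ (vertices E).image (fun v ↦ (p v, q v)), dp w.1 * dq w.2 :=
          by rw [sum_image hpq.injOn]
      _ ≤ ∑ w ∈ vertices (mapEdges p E) ×ˢ vertices (mapEdges q E), dp w.1 * dq w.2 :=
          sum_le_sum_of_subset_of_nonneg image_subset fun w hw _ ↦
            mul_nonneg (dp_nonneg (mem_product.1 hw).1) (dq_nonneg (mem_product.1 hw).2)
      _ = _ := by rw [sum_mul_sum, sum_product]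
  simp only [d, dp, dq, sum_degree_sub_two] at sum_le
  linarith

end EquivariantImage

section Intersection

theorem card_sub_one_le_of_injective_prod {Y Z ι : Type*} [MulAction (FreeGroup A) Y]
    [MulAction (FreeGroup A) Z] [MulAction.IsPretransitive (FreeGroup A) X]
    [MulAction.IsPretransitive (FreeGroup A) Y] [MulAction.IsPretransitive (FreeGroup A) Z]
    {x₀ : X} {y₀ : Y} {z₀ : Z} (hy : (MulAction.stabilizer (FreeGroup A) y₀).FG)
    (hz : (MulAction.stabilizer (FreeGroup A) z₀).FG) {p : X →[FreeGroup A] Y}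
    {q : X →[FreeGroup A] Z} (hpq : Function.Injective fun x ↦ (p x, q x))
    (b : FreeGroupBasis ι (MulAction.stabilizer (FreeGroup A) x₀)) (T : Finset ι) :
    #T - 1 ≤ 2 * ((rkSubgroup (MulAction.stabilizer (FreeGroup A) y₀) - 1) *
      (rkSubgroup (MulAction.stabilizer (FreeGroup A) z₀) - 1)) := by
  classical
  obtain ⟨E, card_le⟩ := exists_card_sub_one_le_negEulerChar b T
  obtain ⟨F, leafless, le_F⟩ := exists_isLeafless_negEulerChar_le E
  have F_le := leafless.negEulerChar_le_two_mul hpq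
  have product_le := mul_le_mul (negEulerChar_le_rkSubgroup_sub_one hy (mapEdges p F))
    (negEulerChar_le_rkSubgroup_sub_one hz (mapEdges q F))
    (leafless.map q).negEulerChar_nonneg (Nat.cast_nonneg _)
  rw [← Nat.cast_mul] at product_le
  omega

variable {G : Type*} [Group G]

/-- The projection of coset spaces `G ⧸ H → G ⧸ K` for `H ≤ K`, as an equivariant map. -/
def cosetProjection {H K : Subgroup G} (h : H ≤ K) : G ⧸ H →[G] G ⧸ K where
  toFun := Subgroup.quotientMapOfLE h
  map_smul' g x := by
    induction x using QuotientGroup.induction_on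
    rfl

lemma injective_cosetProjection_inf (H K : Subgroup G) :
    Function.Injective fun x : G ⧸ (H ⊓ K) ↦
      (cosetProjection inf_le_left x, cosetProjection inf_le_right x) := by
  intro x y hxy
  induction x using QuotientGroup.induction_on
  induction y using QuotientGroup.induction_on
  obtain ⟨hH, hK⟩ := Prod.ext_iff.1 hxy
  exact QuotientGroup.eq.2 ⟨QuotientGroup.eq.1 hH, QuotientGroup.eq.1 hK⟩

variable {ι : Type*} {H K : Subgroup (FreeGroup A)}

theorem card_sub_one_le_of_freeGroupBasis_inf (hH : H.FG) (hK : K.FG)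
    (b : FreeGroupBasis ι (H ⊓ K : Subgroup (FreeGroup A))) (T : Finset ι) :
    #T - 1 ≤ 2 * ((rkSubgroup H - 1) * (rkSubgroup K - 1)) := by
  have stabilizer_eq (L : Subgroup (FreeGroup A)) :
      MulAction.stabilizer (FreeGroup A) ((1 : FreeGroup A) : FreeGroup A ⧸ L) = L :=
    MulAction.stabilizer_quotient L
  have bound := card_sub_one_le_of_injective_prod ((stabilizer_eq H).symm ▸ hH)
    ((stabilizer_eq K).symm ▸ hK) (injective_cosetProjection_inf H K)
    (b.map (MulEquiv.subgroupCongr (stabilizer_eq (H ⊓ K)).symm)) T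
  rwa [stabilizer_eq, stabilizer_eq] at bound

/-- Howson's theorem. -/
theorem finite_of_freeGroupBasis_inf (hH : H.FG) (hK : K.FG)
    (b : FreeGroupBasis ι (H ⊓ K : Subgroup (FreeGroup A))) : Finite ι := by
  by_contra hι
  rw [not_finite_iff_infinite] at hι
  obtain ⟨T, hT⟩ := Infinite.exists_subset_card_eq ι
    (2 * ((rkSubgroup H - 1) * (rkSubgroup K - 1)) + 2)
  have bound := card_sub_one_le_of_freeGroupBasis_inf hH hK b T
  omega

end Intersection

end HannaNeumann

/-- **Hanna Neumann inequality**: for finitely generated subgroups `H, K` of a free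
group, `rank(H ⊓ K) − 1 ≤ 2·(rank(H) − 1)·(rank(K) − 1)` (truncated subtraction). -/
theorem hanna_neumann_inequality {A : Type*} (H K : Subgroup (FreeGroup A))
    (hH : H.FG) (hK : K.FG) :
    rkSubgroup (H ⊓ K) - 1 ≤ 2 * ((rkSubgroup H - 1) * (rkSubgroup K - 1)) := by
  let b := IsFreeGroup.basis (H ⊓ K : Subgroup (FreeGroup A))
  have := HannaNeumann.finite_of_freeGroupBasis_inf hH hK b
  have := Fintype.ofFinite (IsFreeGroup.Generators (H ⊓ K : Subgroup (FreeGroup A)))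
  calc rkSubgroup (H ⊓ K) - 1
      ≤ Fintype.card (IsFreeGroup.Generators (H ⊓ K : Subgroup (FreeGroup A))) - 1 :=
        Nat.sub_le_sub_right (HannaNeumann.rkSubgroup_le_card_of_freeGroupBasis b) 1
    _ ≤ 2 * ((rkSubgroup H - 1) * (rkSubgroup K - 1)) :=
        HannaNeumann.card_sub_one_le_of_freeGroupBasis_inf hH hK b Finset.univ
end
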